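/- arXiv:1310.2496 — 2 statements merged into one kernel-verified Lean document; each statement's English description precedes it below -/
import Mathlib

section
/- Let K be a field and R a standard graded K-algebra. The following conditions are equivalent: (1) reg_R(M) is finite for every finitely generated graded R-module M; (2) reg_R(K) is finite; (3) R is Koszul (i.e. reg_R(K) = 0). -/
/-!
The link between the three conditions is the Priddy complex `C = R ⊗ D` of `R`, where `D` is the
graded dual of the quadratic dual algebra. Here `D` consists of the finitely supported functions on
words in a basis of `R₁` that are annihilated by the quadratic conditions attached to the products
`x_i x_j`. Since `R` is commutative, `D` is closed under the signed shuffle product, and `C` becomes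
a differential graded algebra. The weight of an element of `C` is the degree of its `R`-coefficient,
and the differential raises it by one. The cycles of weight `0` are the constants (`cycle_zero`) and
`C` is always exact in weight `1` (`cycle_one`); `C` is called acyclic if it is exact in every
weight at least `1`. All three conditions are shown to be equivalent to acyclicity.

*Acyclicity implies Koszulness and finite regularity.* If `C` is acyclic, dimension shifting along a
minimal resolution of `M` shows that `β n b` vanishes as soon as the Priddy complex with
coefficients in `M` is exact in degree `b - n` (`betti_zero`). For `M = K` the coefficients live in
degree `0` only, so `R` is Koszul (`isKoszul_of_acyclic`). For a finitely generated `M`, Noetherian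
induction on submodules gives exactness in all high degrees (`exists_bound`), hence finite
regularity (`finite_reg_of_acyclic`).

*Finite regularity of `K` implies acyclicity* (`acyclic_of_reg`). Suppose `β_{ij}(K) ≠ 0` implies
`j ≤ i + r`, and that `C` is not acyclic. By `exists_bound` applied to `R`, there is a top weight
`ρ ≥ 1` in which `C` has homology (`exists_top`). For `t = 0, 1, …` adjoin free generators of weight
`t + 1` to kill the homology of weight `t + 2`. The semifree `C`-modules obtained in this way
(`Stage`) are exact in the weights `1, …, t + 1`, but never in all positive weights: if the step
adjoins at least one generator, that generator carries a copy of the homology of `C` of weight `ρ`,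
and this copy survives because the previous module is exact in large weights; if the step adjoins
none, the module is unchanged. On the other hand, comparing such a module with a minimal resolution
of `K`, whose `i`-th free module has generators of degrees between `i` and `i + r`, shows that
exactness in the weights `1, …, r + 1` propagates to all positive weights (`zigzag`,
`wExact_of_reg`). This is a contradiction at `t = r`.

Koszulness and condition (2) are statements about every Betti table of `K`; the existence of a
minimal resolution of `K` (`exists_res`, by graded Nakayama) makes them non-vacuous. Over the zero
ring every table is a Betti table, so that all the conditions fail; this case is treated separately.
-/



open DirectSum

universe u v w

/-- A standard graded structure on a commutative `K`-algebra `R`: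
an internal direct sum decomposition `R = ⊕_{i∈ℤ} R_i` with `R_i = 0` for `i < 0`,
`R_0 = K·1`, `R_i · R_j = R_{i+j}` and `dim_K R_1 < ∞`. -/
structure StdGrading (K : Type u) [Field K] (R : Type v) [CommRing R] [Algebra K R] :
    Type v where
  gr : ℤ → Submodule K R
  internal : DirectSum.IsInternal gr
  negBot : ∀ i : ℤ, i < 0 → gr i = ⊥
  zeroEq : gr 0 = Submodule.span K {(1 : R)}
  mulEq : ∀ i j : ℤ, 0 ≤ i → 0 ≤ j → gr i * gr j = gr (i + j)
  finOne : Module.Finite K (gr 1)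

variable {K : Type u} [Field K] {R : Type v} [CommRing R] [Algebra K R]

/-- The irrelevant maximal homogeneous ideal `m_R = ⊕_{i>0} R_i`. -/
def StdGrading.maxIdeal (A : StdGrading K R) : Ideal R :=
  Ideal.span {x : R | ∃ i : ℤ, 0 < i ∧ x ∈ A.gr i}

/-- `g` is a grading making the `R`-module `M` into a graded module over the
standard graded algebra `(R, A)`. -/
def IsGradedModule (A : StdGrading K R) {M : Type w} [AddCommGroup M] [Module K M]
    [Module R M] [IsScalarTower K R M] (g : ℤ → Submodule K M) : Prop :=
  DirectSum.IsInternal g ∧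
    ∀ (i j : ℤ), ∀ r ∈ A.gr i, ∀ x ∈ g j, r • x ∈ g (i + j)

/-- The graded free `R`-module with `β i j` basis elements of (internal) degree `j`,
in homological position `i`. -/
abbrev FreeMod (R : Type v) [CommRing R] (β : ℕ → ℤ → ℕ) (i : ℕ) : Type v :=
  ((j : ℤ) × Fin (β i j)) →₀ R

/-- The degree-`d` graded piece of the graded free module `FreeMod R β i`. -/
def freeGr (A : StdGrading K R) (β : ℕ → ℤ → ℕ) (i : ℕ) (d : ℤ) :
    Submodule K (FreeMod R β i) where
  carrier := {f | ∀ p : (j : ℤ) × Fin (β i j), f p ∈ A.gr (d - p.1)}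
  add_mem' := fun hf hg p => by
    simpa using add_mem (hf p) (hg p)
  zero_mem' := fun p => by simp
  smul_mem' := fun c f hf p => by
    simpa using Submodule.smul_mem _ c (hf p)

/-- A minimal graded free resolution of the graded `R`-module `(M, g)` whose graded
Betti numbers are given by the table `β`: the maps are degree-zero maps of graded
modules, the complex is exact, and the differentials map into `m_R·F`. -/
structure MinFreeRes (A : StdGrading K R) {M : Type w} [AddCommGroup M] [Module K M]
    [Module R M] [IsScalarTower K R M] (g : ℤ → Submodule K M) (β : ℕ → ℤ → ℕ) :
    Type (max v w) where
  eps : FreeMod R β 0 →ₗ[R] M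
  d : (i : ℕ) → FreeMod R β (i + 1) →ₗ[R] FreeMod R β i
  eps_surjective : Function.Surjective eps
  exact_eps : Function.Exact ⇑(d 0) ⇑eps
  exact_d : ∀ i : ℕ, Function.Exact ⇑(d (i + 1)) ⇑(d i)
  graded_eps : ∀ dg : ℤ, ∀ f ∈ freeGr A β 0 dg, eps f ∈ g dg
  graded_d : ∀ (i : ℕ) (dg : ℤ), ∀ f ∈ freeGr A β (i + 1) dg, d i f ∈ freeGr A β i dg
  minimal : ∀ (i : ℕ) (f : FreeMod R β (i + 1)) (p : (j : ℤ) × Fin (β i j)),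
    d i f p ∈ A.maxIdeal

/-- `β` is the table of graded Betti numbers of the graded module `(M, g)`,
i.e. there is a minimal graded free resolution realizing it. -/
def HasBettiTable (A : StdGrading K R) {M : Type w} [AddCommGroup M] [Module K M]
    [Module R M] [IsScalarTower K R M] (g : ℤ → Submodule K M) (β : ℕ → ℤ → ℕ) : Prop :=
  Nonempty (MinFreeRes A g β)

/-- The grading on the residue field `K = R/m_R` of a standard graded algebra. -/
def resGr (A : StdGrading K R) : ℤ → Submodule K (R ⧸ A.maxIdeal) := fun d =>
  (A.gr d).map ((A.maxIdeal.mkQ).restrictScalars K)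

/-- `R` is a Koszul algebra: the minimal graded free resolution of the residue field
`K = R/m_R` is linear, i.e. `β_{ij}(K) = 0` for `j ≠ i`. -/
def IsKoszul (A : StdGrading K R) : Prop :=
  ∀ β : ℕ → ℤ → ℕ, HasBettiTable A (resGr A) β →
    ∀ (i : ℕ) (j : ℤ), j ≠ (i : ℤ) → β i j = 0

section Proof

open TensorProduct

/-! ### Projections onto graded pieces -/

/-- A family of submodules `g` together with projections onto its members, such that the family
spans. -/
structure GrProj {K : Type*} [Field K] {ι : Type*} {M : Type*} [AddCommGroup M] [Module K M]
    (g : ι → Submodule K M) where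
  P : ι → M →ₗ[K] M
  mem : ∀ c m, P c m ∈ g c
  self : ∀ c, ∀ m ∈ g c, P c m = m
  ne : ∀ c c', c ≠ c' → ∀ m ∈ g c', P c m = 0
  top : ∀ m, m ∈ ⨆ c, g c

/-- The projections of an internal direct sum. -/
noncomputable def GrProj.ofInternal {K : Type*} [Field K] {ι : Type*} [DecidableEq ι] {M : Type*}
    [AddCommGroup M] [Module K M] {g : ι → Submodule K M} (h : DirectSum.IsInternal g) :
    GrProj g :=
  letI := h.chooseDecomposition
  { P := fun c => (g c).subtype ∘ₗ DirectSum.component K ι (fun i => g i) c ∘ₗ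
      (DirectSum.decomposeLinearEquiv g).toLinearMap
    mem := fun c m => by simp
    self := fun c m hm => by
      simp only [LinearMap.comp_apply, LinearEquiv.coe_coe, DirectSum.decomposeLinearEquiv_apply]
      rw [DirectSum.decompose_of_mem g hm]
      exact congrArg Subtype.val (DirectSum.of_eq_same (β := fun i => g i) c ⟨m, hm⟩)
    ne := fun c c' hc m hm => by
      simp only [LinearMap.comp_apply, LinearEquiv.coe_coe, DirectSum.decomposeLinearEquiv_apply]
      rw [DirectSum.decompose_of_mem g hm]
      exact congrArg Subtype.val (DirectSum.of_eq_of_ne (β := fun i => g i) _ _ ⟨m, hm⟩ hc)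
    top := fun m => by rw [h.submodule_iSup_eq_top]; trivial }

namespace GrProj
variable {K : Type*} [Field K] {ι : Type*} {M N : Type*} [AddCommGroup M] [Module K M]
    [AddCommGroup N] [Module K N] {g : ι → Submodule K M} {g' : ι → Submodule K N}

theorem exists_finset (p : GrProj g) (m : M) :
    ∃ s : Finset ι, m = ∑ c ∈ s, p.P c m := by
  classical
  have key : ∃ s : Finset ι, (∀ c ∉ s, p.P c m = 0) ∧ m = ∑ c ∈ s, p.P c m := by
    refine Submodule.iSup_induction g (motive := fun m => ∃ s : Finset ι,
      (∀ c ∉ s, p.P c m = 0) ∧ m = ∑ c ∈ s, p.P c m) (p.top m) ?_ ?_ ?_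
    · intro c m hm
      refine ⟨{c}, ?_, ?_⟩
      · intro c' hc'
        exact p.ne _ _ (by simpa using hc') m hm
      · simp [p.self c m hm]
    · exact ⟨∅, by simp, by simp⟩
    · rintro a b ⟨s, hs, ha⟩ ⟨t, ht, hb⟩
      refine ⟨s ∪ t, ?_, ?_⟩
      · intro c hc
        simp only [Finset.mem_union, not_or] at hc
        simp [hs c hc.1, ht c hc.2]
      · simp only [map_add, Finset.sum_add_distrib]
        congr 1
        · conv_lhs => rw [ha]
          exact Finset.sum_subset Finset.subset_union_left (fun c _ hc => hs c hc)
        · conv_lhs => rw [hb]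
          exact Finset.sum_subset Finset.subset_union_right (fun c _ hc => ht c hc)
  obtain ⟨s, _, h⟩ := key
  exact ⟨s, h⟩

theorem eq_zero (p : GrProj g) {m : M} (h : ∀ c, p.P c m = 0) : m = 0 := by
  obtain ⟨s, hs⟩ := p.exists_finset m
  rw [hs]; simp [h]

theorem map_P (p : GrProj g) (p' : GrProj g') (φ : M →+ N)
    (h : ∀ c, ∀ m ∈ g c, φ m ∈ g' c) (c : ι) (m : M) : p'.P c (φ m) = φ (p.P c m) := by
  classical
  refine Submodule.iSup_induction g (motive := fun m => p'.P c (φ m) = φ (p.P c m)) (p.top m) ?_ ?_ ?_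
  · intro c' m hm
    by_cases hc : c = c'
    · subst hc
      rw [p.self c m hm, p'.self c _ (h c m hm)]
    · rw [p.ne c c' hc m hm, p'.ne c c' hc _ (h c' m hm), map_zero]
  · simp
  · intro a b ha hb
    simp [ha, hb]

/-- A homogeneous element in the image of a graded map has a homogeneous preimage. -/
theorem exists_preimage (p : GrProj g) (p' : GrProj g') (φ : M →+ N)
    (h : ∀ c, ∀ m ∈ g c, φ m ∈ g' c) (c : ι) (m : M) (hm : φ m ∈ g' c) :
    ∃ m' ∈ g c, φ m' = φ m :=
  ⟨p.P c m, p.mem c m, by rw [← map_P p p' φ h, p'.self c _ hm]⟩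

theorem eq_zero_of_mem (p : GrProj g) {c c' : ι} (h : c ≠ c') {m : M} (h1 : m ∈ g c)
    (h2 : m ∈ g c') : m = 0 := by
  rw [← p.self c m h1, p.ne c c' h m h2]

theorem isInternal [DecidableEq ι] (p : GrProj g) : DirectSum.IsInternal g := by
  refine DirectSum.isInternal_submodule_of_iSupIndep_of_iSup_eq_top ?_ ?_
  · intro c
    rw [Submodule.disjoint_def]
    intro m hm hm'
    rw [← p.self c m hm]
    have : (⨆ j, ⨆ (_ : j ≠ c), g j) ≤ LinearMap.ker (p.P c) := by
      refine iSup_le fun j => iSup_le fun hj => ?_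
      intro x hx
      exact p.ne c j hj.symm x hx
    exact this hm'
  · exact eq_top_iff.2 fun m _ => p.top m

end GrProj

/-! ### Standard graded algebras -/

namespace StdGrading
variable (A : StdGrading K R)

/-- Projections onto the graded pieces of `R`. -/
noncomputable def pr : GrProj A.gr := GrProj.ofInternal A.internal

theorem eq_zero_of_neg {c : ℤ} (hc : c < 0) {a : R} (ha : a ∈ A.gr c) : a = 0 := by
  rw [A.negBot c hc] at ha; simpa using ha

theorem mul_mem {i j : ℤ} {a b : R} (ha : a ∈ A.gr i) (hb : b ∈ A.gr j) :
    a * b ∈ A.gr (i + j) := by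
  by_cases hi : i < 0
  · rw [A.eq_zero_of_neg hi ha, zero_mul]; exact zero_mem _
  by_cases hj : j < 0
  · rw [A.eq_zero_of_neg hj hb, mul_zero]; exact zero_mem _
  rw [← A.mulEq i j (by omega) (by omega)]
  exact Submodule.mul_mem_mul ha hb

theorem one_mem : (1 : R) ∈ A.gr 0 := by
  rw [A.zeroEq]; exact Submodule.mem_span_singleton_self _

theorem mem_zero {a : R} : a ∈ A.gr 0 ↔ ∃ k : K, a = algebraMap K R k := by
  rw [A.zeroEq, Submodule.mem_span_singleton]
  simp only [Algebra.algebraMap_eq_smul_one, eq_comm]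

theorem algebraMap_mem (k : K) : algebraMap K R k ∈ A.gr 0 := A.mem_zero.2 ⟨k, rfl⟩

theorem mem_maxIdeal_of_pos {i : ℤ} (hi : 0 < i) {a : R} (ha : a ∈ A.gr i) : a ∈ A.maxIdeal :=
  Ideal.subset_span ⟨i, hi, ha⟩

theorem proj_zero_of_mem {a : R} (ha : a ∈ A.maxIdeal) : A.pr.P 0 a = 0 := by
  refine Submodule.span_induction (p := fun a _ => A.pr.P 0 a = 0) ?_ (by simp) ?_ ?_ ha
  · rintro x ⟨i, hi, hx⟩
    exact A.pr.ne 0 i hi.ne x hx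
  · intro x y _ _ hx hy; simp [hx, hy]
  · intro r y hy0 hy
    -- only the products of pieces of degree zero reach degree zero
    rw [smul_eq_mul]
    have hr := A.pr.top r
    have hy' := A.pr.exists_finset y
    obtain ⟨s, hs⟩ := hy'
    refine Submodule.iSup_induction A.gr (motive := fun r => A.pr.P 0 (r * y) = 0) hr ?_ (by simp) ?_
    · intro i r hr
      rw [hs, Finset.mul_sum, map_sum]
      refine Finset.sum_eq_zero fun c _ => ?_
      by_cases hc : i + c = 0
      · by_cases hi : i < 0
        · rw [A.eq_zero_of_neg hi hr]; simp
        by_cases hc0 : c < 0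
        · rw [A.eq_zero_of_neg hc0 (A.pr.mem c y)]; simp
        have : c = 0 := by omega
        rw [this, hy]; simp
      · exact A.pr.ne 0 (i + c) (Ne.symm hc) _ (A.mul_mem hr (A.pr.mem c y))
    · intro a b ha hb
      rw [add_mul, map_add, ha, hb, add_zero]

theorem eq_zero_of_mem_maxIdeal {a : R} (ha : a ∈ A.maxIdeal) (h : a ∈ A.gr 0) : a = 0 := by
  rw [← A.pr.self 0 a h, A.proj_zero_of_mem ha]

theorem mem_maxIdeal_of_proj {a : R} (ha : A.pr.P 0 a = 0) : a ∈ A.maxIdeal := by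
  obtain ⟨s, hs⟩ := A.pr.exists_finset a
  rw [hs]
  refine sum_mem fun c _ => ?_
  rcases lt_trichotomy c 0 with h | h | h
  · rw [A.eq_zero_of_neg h (A.pr.mem c a)]; exact zero_mem _
  · rw [h, ha]; exact zero_mem _
  · exact A.mem_maxIdeal_of_pos h (A.pr.mem c a)

/-- Components of elements of `m_R` stay in `m_R`. -/
theorem proj_mem_maxIdeal {a : R} (ha : a ∈ A.maxIdeal) (c : ℤ) : A.pr.P c a ∈ A.maxIdeal := by
  apply A.mem_maxIdeal_of_proj
  by_cases hc : c = 0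
  · rw [hc, A.proj_zero_of_mem ha]; simp
  · exact A.pr.ne 0 c (Ne.symm hc) _ (A.pr.mem c a)

theorem one_notMem [Nontrivial R] : (1 : R) ∉ A.maxIdeal := fun h =>
  one_ne_zero (A.eq_zero_of_mem_maxIdeal h A.one_mem)

theorem mem_maxIdeal_of_ne {c : ℤ} (hc : c ≠ 0) {a : R} (ha : a ∈ A.gr c) : a ∈ A.maxIdeal := by
  apply A.mem_maxIdeal_of_proj
  exact A.pr.ne 0 c (Ne.symm hc) _ ha

/-- The number of variables, that is `dim_K R_1`. -/
noncomputable def nvar : ℕ := Module.finrank K (A.gr 1)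

/-- The variables: a `K`-basis of `R_1`. -/
noncomputable def x (i : Fin A.nvar) : R :=
  haveI := A.finOne
  (Module.finBasis K (A.gr 1) i : A.gr 1)

theorem x_mem (i : Fin A.nvar) : A.x i ∈ A.gr 1 := by
  unfold x; exact Subtype.mem _

theorem x_indep (a : Fin A.nvar → K) (h : ∑ i, a i • A.x i = 0) (i : Fin A.nvar) : a i = 0 := by
  have := A.finOne
  have := (Module.finBasis K (A.gr 1)).linearIndependent
  rw [Fintype.linearIndependent_iff] at this
  refine this a ?_ i
  apply Subtype.ext
  rw [AddSubmonoidClass.coe_finsetSum]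
  exact h

theorem exists_x {a : R} (ha : a ∈ A.gr 1) : ∃ c : Fin A.nvar → K, a = ∑ i, c i • A.x i := by
  have := A.finOne
  refine ⟨fun i => (Module.finBasis K (A.gr 1)).repr ⟨a, ha⟩ i, ?_⟩
  have := (Module.finBasis K (A.gr 1)).sum_repr ⟨a, ha⟩
  have h2 := congrArg Subtype.val this
  rw [AddSubmonoidClass.coe_finsetSum] at h2
  exact h2.symm

theorem fg_gr (c : ℕ) : (A.gr c).FG := by
  induction c with
  | zero =>
    rw [Nat.cast_zero, A.zeroEq]; exact Submodule.fg_span_singleton _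
  | succ c ih =>
    have := A.mulEq 1 c (by omega) (by omega)
    rw [Nat.cast_succ, add_comm, ← this]
    exact Submodule.FG.mul (Module.Finite.iff_fg.1 A.finOne) ih

theorem finite_gr (c : ℤ) : Module.Finite K (A.gr c) := by
  by_cases hc : c < 0
  · rw [A.negBot c hc]; infer_instance
  · obtain ⟨n, rfl⟩ := Int.eq_ofNat_of_zero_le (not_lt.1 hc)
    exact Module.Finite.iff_fg.2 (A.fg_gr n)

theorem gr_le_adjoin (c : ℕ) :
    A.gr c ≤ Subalgebra.toSubmodule (Algebra.adjoin K (Set.range A.x)) := by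
  induction c with
  | zero =>
    rw [Nat.cast_zero, A.zeroEq, Submodule.span_le]
    simp
  | succ c ih =>
    have := A.mulEq 1 c (by omega) (by omega)
    rw [Nat.cast_succ, add_comm, ← this, Submodule.mul_le]
    intro a ha b hb
    refine (Algebra.adjoin K (Set.range A.x)).mul_mem ?_ (ih hb)
    obtain ⟨k, rfl⟩ := A.exists_x ha
    refine sum_mem fun i _ => Subalgebra.smul_mem _ (Algebra.subset_adjoin (Set.mem_range_self i)) _

theorem adjoin_eq_top (A : StdGrading K R) : Algebra.adjoin K (Set.range A.x) = ⊤ := by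
  rw [eq_top_iff]
  intro a _
  have := A.pr.top a
  have hle : (⨆ c, A.gr c) ≤ Subalgebra.toSubmodule (Algebra.adjoin K (Set.range A.x)) := by
    refine iSup_le fun c => ?_
    by_cases hc : c < 0
    · rw [A.negBot c hc]; exact bot_le
    · obtain ⟨n, rfl⟩ := Int.eq_ofNat_of_zero_le (not_lt.1 hc)
      exact A.gr_le_adjoin n
  exact hle this

theorem isNoetherianRing {K : Type u} [Field K] [Algebra K R] (A : StdGrading K R) : IsNoetherianRing R := by
  classical
  have : Algebra.FiniteType K R := ⟨⟨Finset.univ.image A.x, by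
    rw [Finset.coe_image, Finset.coe_univ, Set.image_univ, A.adjoin_eq_top]⟩⟩
  exact Algebra.FiniteType.isNoetherianRing K R

end StdGrading

/-! ### The signed shuffle algebra on words -/

/-- All `K`-valued functions on words in the alphabet `ι`, to be multiplied by the signed
shuffle product. -/
def Sh (K : Type u) (ι : Type) : Type u := List ι → K

namespace Sh
variable {ι : Type}

instance : AddCommGroup (Sh K ι) := inferInstanceAs (AddCommGroup (List ι → K))
instance : Module K (Sh K ι) := inferInstanceAs (Module K (List ι → K))

/-- Deletion of the leading letter `i`. -/
def del (i : ι) : Sh K ι →ₗ[K] Sh K ι where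
  toFun f := fun w => f (i :: w)
  map_add' _ _ := rfl
  map_smul' _ _ := rfl

/-- The sign involution `(-1)^length`. -/
def tau : Sh K ι →ₗ[K] Sh K ι where
  toFun f := fun w => (-1) ^ w.length * f w
  map_add' f g := by funext w; exact mul_add _ _ _
  map_smul' c f := by funext w; exact mul_left_comm _ _ _

/-- The value of the shuffle product at a word, defined so that `del i` is a `tau`-derivation. -/
def mulAt : List ι → Sh K ι → Sh K ι → K
  | [], f, g => f [] * g []
  | i :: w, f, g => mulAt w (del i f) g + mulAt w (tau f) (del i g)

instance : Mul (Sh K ι) := ⟨fun f g w => mulAt w f g⟩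
instance : One (Sh K ι) := ⟨fun w => match w with | [] => 1 | _ :: _ => 0⟩

@[ext] theorem ext {f g : Sh K ι} (h : ∀ w, f w = g w) : f = g := funext h

@[simp] theorem add_apply (f g : Sh K ι) (w : List ι) : (f + g) w = f w + g w := rfl
@[simp] theorem neg_apply (f : Sh K ι) (w : List ι) : (-f) w = -(f w) := rfl
@[simp] theorem zero_apply (w : List ι) : (0 : Sh K ι) w = 0 := rfl
@[simp] theorem smul_apply (c : K) (f : Sh K ι) (w : List ι) : (c • f) w = c * f w := rfl
@[simp] theorem del_apply (i : ι) (f : Sh K ι) (w : List ι) : del i f w = f (i :: w) := rfl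
@[simp] theorem tau_apply (f : Sh K ι) (w : List ι) : tau f w = (-1) ^ w.length * f w := rfl
@[simp] theorem one_nil : (1 : Sh K ι) [] = 1 := rfl
@[simp] theorem one_cons (i : ι) (w : List ι) : (1 : Sh K ι) (i :: w) = 0 := rfl
theorem mul_apply (f g : Sh K ι) (w : List ι) : (f * g) w = mulAt w f g := rfl
@[simp] theorem mul_nil (f g : Sh K ι) : (f * g) [] = f [] * g [] := rfl
theorem mul_cons (f g : Sh K ι) (i : ι) (w : List ι) :
    (f * g) (i :: w) = (del i f * g) w + (tau f * del i g) w := rfl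

theorem del_tau (i : ι) (f : Sh K ι) : del i (tau f) = -tau (del i f) := by
  ext w; simp [pow_succ]

theorem tau_tau (f : Sh K ι) : tau (tau f) = f := by
  ext w
  simp only [tau_apply, ← mul_assoc, ← mul_pow]
  simp

theorem tau_one : tau (1 : Sh K ι) = 1 := by
  ext w; cases w <;> simp

theorem del_one (i : ι) : del i (1 : Sh K ι) = 0 := rfl

theorem mulAt_add_left (w : List ι) (f f' g : Sh K ι) :
    mulAt w (f + f') g = mulAt w f g + mulAt w f' g := by
  induction w generalizing f f' g with
  | nil => simp [mulAt, add_mul]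
  | cons i w ih => simp only [mulAt, map_add, ih]; ring

theorem mulAt_add_right (w : List ι) (f g g' : Sh K ι) :
    mulAt w f (g + g') = mulAt w f g + mulAt w f g' := by
  induction w generalizing f g g' with
  | nil => simp [mulAt, mul_add]
  | cons i w ih => simp only [mulAt, map_add, ih]; ring

theorem mulAt_smul_left (w : List ι) (c : K) (f g : Sh K ι) :
    mulAt w (c • f) g = c * mulAt w f g := by
  induction w generalizing f g with
  | nil => simp [mulAt, mul_assoc]
  | cons i w ih => simp only [mulAt, map_smul, ih]; ring

theorem mulAt_smul_right (w : List ι) (c : K) (f g : Sh K ι) :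
    mulAt w f (c • g) = c * mulAt w f g := by
  induction w generalizing f g with
  | nil => simp [mulAt, mul_left_comm]
  | cons i w ih => simp only [mulAt, map_smul, ih]; ring

theorem mulAt_zero_left (w : List ι) (g : Sh K ι) : mulAt w 0 g = 0 := by
  simpa using mulAt_smul_left w 0 0 g

theorem mulAt_zero_right (w : List ι) (f : Sh K ι) : mulAt w f 0 = 0 := by
  simpa using mulAt_smul_right w 0 f 0

theorem mulAt_neg_left (w : List ι) (f g : Sh K ι) : mulAt w (-f) g = -mulAt w f g := by
  simpa using mulAt_smul_left w (-1) f g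

theorem mulAt_neg_right (w : List ι) (f g : Sh K ι) : mulAt w f (-g) = -mulAt w f g := by
  simpa using mulAt_smul_right w (-1) f g

theorem tau_mul (f g : Sh K ι) : tau (f * g) = tau f * tau g := by
  ext w
  simp only [tau_apply, mul_apply]
  induction w generalizing f g with
  | nil => simp [mulAt]
  | cons i w ih =>
    simp only [mulAt, del_tau, mulAt_neg_left, mulAt_neg_right, ← ih, List.length_cons, pow_succ]
    ring

theorem one_mulAt (w : List ι) (f : Sh K ι) : mulAt w 1 f = f w := by
  induction w generalizing f with
  | nil => simp [mulAt]
  | cons i w ih => simp [mulAt, del_one, mulAt_zero_left, tau_one, ih]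

theorem mulAt_one (w : List ι) (f : Sh K ι) : mulAt w f 1 = f w := by
  induction w generalizing f with
  | nil => simp [mulAt]
  | cons i w ih => simp [mulAt, del_one, mulAt_zero_right, ih]

theorem del_mul (i : ι) (f g : Sh K ι) : del i (f * g) = del i f * g + tau f * del i g := rfl

theorem mulAt_assoc (w : List ι) (f g h : Sh K ι) :
    mulAt w (f * g) h = mulAt w f (g * h) := by
  induction w generalizing f g h with
  | nil => simp [mulAt, mul_assoc]
  | cons i w ih =>
    simp only [mulAt, del_mul, tau_mul, mulAt_add_left, mulAt_add_right, ih]; ring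

instance : Ring (Sh K ι) :=
  { (inferInstance : AddCommGroup (Sh K ι)) with
    mul := (· * ·)
    one := 1
    left_distrib := fun f g h => by ext w; exact mulAt_add_right w f g h
    right_distrib := fun f g h => by ext w; exact mulAt_add_left w f g h
    zero_mul := fun f => by ext w; exact mulAt_zero_left w f
    mul_zero := fun f => by ext w; exact mulAt_zero_right w f
    mul_assoc := fun f g h => by ext w; exact mulAt_assoc w f g h
    one_mul := fun f => by ext w; exact one_mulAt w f
    mul_one := fun f => by ext w; exact mulAt_one w f }

instance : Algebra K (Sh K ι) :=
  Algebra.ofModule (fun c f g => by ext w; exact mulAt_smul_left w c f g)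
    (fun c f g => by ext w; exact mulAt_smul_right w c f g)

/-- Vanishing on words of length more than `a`. -/
def Bdd (a : ℕ) (f : Sh K ι) : Prop := ∀ w : List ι, a < w.length → f w = 0

theorem Bdd.tau {a : ℕ} {f : Sh K ι} (h : Bdd a f) : Bdd a (tau f) := fun w hw => by
  simp [h w hw]

theorem Bdd.del {a : ℕ} {f : Sh K ι} (h : Bdd (a + 1) f) (i : ι) : Bdd a (del i f) :=
  fun w hw => by simp [h (i :: w) (by simpa using hw)]

theorem Bdd.mono {a b : ℕ} (hab : a ≤ b) {f : Sh K ι} (h : Bdd a f) : Bdd b f :=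
  fun w hw => h w (by omega)

theorem Bdd.mul {a b : ℕ} {f g : Sh K ι} (hf : Bdd a f) (hg : Bdd b g) : Bdd (a + b) (f * g) := by
  intro w
  rw [mul_apply]
  induction w generalizing f g a b with
  | nil => intro h; simp at h
  | cons i w ih =>
    intro hw
    simp only [List.length_cons] at hw
    simp only [mulAt]
    have h1 : mulAt w (Sh.del i f) g = 0 := by
      cases a with
      | zero =>
        have : Sh.del i f = 0 := by ext w; exact hf (i :: w) (by simp)
        rw [this, mulAt_zero_left]
      | succ a => exact ih (hf.del i) hg (by omega)
    have h2 : mulAt w (Sh.tau f) (Sh.del i g) = 0 := by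
      cases b with
      | zero =>
        have : Sh.del i g = 0 := by ext w; exact hg (i :: w) (by simp)
        rw [this, mulAt_zero_right]
      | succ b => exact ih hf.tau (hg.del i) (by omega)
    rw [h1, h2, add_zero]

variable [Fintype ι]

/-- The quadratic condition: `f` is annihilated by `∑ μ i j • (i j)` inserted anywhere. -/
def Quad (μ : ι → ι → K) (f : Sh K ι) : Prop :=
  ∀ w w' : List ι, ∑ i, ∑ j, μ i j * f (w ++ i :: j :: w') = 0

theorem Quad.del {μ : ι → ι → K} {f : Sh K ι} (h : Quad μ f) (i : ι) : Quad μ (del i f) :=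
  fun w w' => h (i :: w) w'

theorem Quad.tau {μ : ι → ι → K} {f : Sh K ι} (h : Quad μ f) : Quad μ (tau f) := by
  intro w w'
  have := congrArg (fun t => (-1) ^ (w ++ w').length * t) (h w w')
  simp only [mul_zero, Finset.mul_sum] at this
  rw [← this]
  refine Finset.sum_congr rfl fun i _ => Finset.sum_congr rfl fun j _ => ?_
  simp only [tau_apply, List.length_append, List.length_cons]
  rw [pow_add, pow_add, pow_add]; ring

theorem Quad.add {μ : ι → ι → K} {f g : Sh K ι} (hf : Quad μ f) (hg : Quad μ g) :
    Quad μ (f + g) := by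
  intro w w'
  simp only [add_apply, mul_add, Finset.sum_add_distrib, hf w w', hg w w', add_zero]

theorem sum_apply {α : Type*} (s : Finset α) (f : α → Sh K ι) (w : List ι) :
    (∑ a ∈ s, f a) w = ∑ a ∈ s, f a w := Finset.sum_apply w s f

theorem sum_mulAt {α : Type*} (s : Finset α) (w : List ι) (f : α → Sh K ι) (g : Sh K ι) :
    ∑ a ∈ s, mulAt w (f a) g = mulAt w (∑ a ∈ s, f a) g := by
  classical
  induction s using Finset.induction_on with
  | empty => simp [mulAt_zero_left]
  | insert a s ha ih => rw [Finset.sum_insert ha, Finset.sum_insert ha, mulAt_add_left, ih]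

theorem mulAt_sum {α : Type*} (s : Finset α) (w : List ι) (f : Sh K ι) (g : α → Sh K ι) :
    ∑ a ∈ s, mulAt w f (g a) = mulAt w f (∑ a ∈ s, g a) := by
  classical
  induction s using Finset.induction_on with
  | empty => simp [mulAt_zero_right]
  | insert a s ha ih => rw [Finset.sum_insert ha, Finset.sum_insert ha, mulAt_add_right, ih]

theorem Quad.sum_del {μ : ι → ι → K} {f : Sh K ι} (h : Quad μ f) :
    ∑ i, ∑ j, μ i j • Sh.del j (Sh.del i f) = 0 := by
  ext w'
  simpa only [sum_apply, smul_apply, del_apply, zero_apply, List.nil_append] using h [] w'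

/-- The mixed terms of a second derivative of a product cancel because `μ` is symmetric. -/
theorem Quad.mul {μ : ι → ι → K} (hμ : ∀ i j, μ i j = μ j i) {f g : Sh K ι} (hf : Quad μ f)
    (hg : Quad μ g) : Quad μ (f * g) := by
  intro w w'
  induction w generalizing f g with
  | nil =>
    simp only [List.nil_append, mul_apply, mulAt, del_tau, mulAt_neg_left, tau_tau]
    have h1 : ∑ i, ∑ j, μ i j * mulAt w' (Sh.del j (Sh.del i f)) g = 0 := by
      simp only [← mulAt_smul_left, sum_mulAt, hf.sum_del, mulAt_zero_left]
    have h2 : ∑ i, ∑ j, μ i j * mulAt w' f (Sh.del j (Sh.del i g)) = 0 := by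
      simp only [← mulAt_smul_right, mulAt_sum, hg.sum_del, mulAt_zero_right]
    have h3 : ∑ i, ∑ j, μ i j * mulAt w' (Sh.tau (Sh.del i f)) (Sh.del j g) =
        ∑ i, ∑ j, μ i j * mulAt w' (Sh.tau (Sh.del j f)) (Sh.del i g) := by
      rw [Finset.sum_comm]
      refine Finset.sum_congr rfl fun i _ => Finset.sum_congr rfl fun j _ => ?_
      rw [hμ]
    simp only [mul_add, Finset.sum_add_distrib, h1, h2, h3, mul_neg, Finset.sum_neg_distrib]
    ring
  | cons k w ih =>
    have h1 := ih (hf.del k) hg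
    have h2 := ih hf.tau (hg.del k)
    simp only [List.cons_append, mul_cons, mul_add, Finset.sum_add_distrib, h1, h2, add_zero]

end Sh

/-! ### The quadratic dual coalgebra as a shuffle algebra, and the Priddy complex -/

namespace StdGrading
variable (A : StdGrading K R)

/-- The (finitely supported) functions on words annihilated by the quadratic part of the relations
dual to those of `R`: the graded dual of the quadratic dual algebra. -/
noncomputable def D : Subalgebra K (Sh K (Fin A.nvar)) where
  carrier := {f | (∃ a, Sh.Bdd a f) ∧
    ∀ l : Module.Dual K R, Sh.Quad (fun i j => l (A.x i * A.x j)) f}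
  mul_mem' := by
    rintro f g ⟨⟨a, ha⟩, hf⟩ ⟨⟨b, hb⟩, hg⟩
    exact ⟨⟨a + b, ha.mul hb⟩, fun l => (hf l).mul (fun i j => by rw [mul_comm]) (hg l)⟩
  add_mem' := by
    rintro f g ⟨⟨a, ha⟩, hf⟩ ⟨⟨b, hb⟩, hg⟩
    refine ⟨⟨a + b, fun w hw => ?_⟩, fun l => (hf l).add (hg l)⟩
    rw [Sh.add_apply, ha w (by omega), hb w (by omega), add_zero]
  algebraMap_mem' := by
    intro k
    have h : ∀ w : List (Fin A.nvar), 0 < w.length → (algebraMap K (Sh K (Fin A.nvar)) k) w = 0 := by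
      intro w hw
      rw [Algebra.algebraMap_eq_smul_one]
      cases w with
      | nil => simp at hw
      | cons i w => simp
    refine ⟨⟨0, h⟩, fun l w w' => ?_⟩
    refine Finset.sum_eq_zero fun i _ => Finset.sum_eq_zero fun j _ => ?_
    rw [h _ (by simp), mul_zero]

theorem del_mem (i : Fin A.nvar) (f : Sh K (Fin A.nvar)) (hf : f ∈ A.D) : Sh.del i f ∈ A.D :=
  ⟨hf.1.imp fun _ ha => (ha.mono (Nat.le_succ _)).del i, fun l => (hf.2 l).del i⟩

theorem tau_mem (f : Sh K (Fin A.nvar)) (hf : f ∈ A.D) : Sh.tau f ∈ A.D :=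
  ⟨hf.1.imp fun _ ha => ha.tau, fun l => (hf.2 l).tau⟩

/-- Deletion of a leading letter on `A.D`. -/
noncomputable def delD (i : Fin A.nvar) : A.D →ₗ[K] A.D :=
  (Sh.del i).restrict (p := Subalgebra.toSubmodule A.D) (q := Subalgebra.toSubmodule A.D)
    (A.del_mem i)

/-- The sign involution on `A.D`. -/
noncomputable def tauD : A.D →ₗ[K] A.D :=
  Sh.tau.restrict (p := Subalgebra.toSubmodule A.D) (q := Subalgebra.toSubmodule A.D) A.tau_mem

theorem coe_delD (i : Fin A.nvar) (f : A.D) : (A.delD i f : Sh K (Fin A.nvar)) = Sh.del i f := rfl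
theorem coe_tauD (f : A.D) : (A.tauD f : Sh K (Fin A.nvar)) = Sh.tau f := rfl

theorem delD_mul (i : Fin A.nvar) (f g : A.D) :
    A.delD i (f * g) = A.delD i f * g + A.tauD f * A.delD i g := Subtype.ext rfl

theorem tauD_mul (f g : A.D) : A.tauD (f * g) = A.tauD f * A.tauD g :=
  Subtype.ext (Sh.tau_mul _ _)

theorem tauD_tauD (f : A.D) : A.tauD (A.tauD f) = f := Subtype.ext (Sh.tau_tau _)

theorem tauD_one : A.tauD 1 = 1 := Subtype.ext Sh.tau_one

theorem delD_one (i : Fin A.nvar) : A.delD i 1 = 0 := Subtype.ext (Sh.del_one i)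

theorem delD_tauD (i : Fin A.nvar) (f : A.D) : A.delD i (A.tauD f) = -A.tauD (A.delD i f) :=
  Subtype.ext (Sh.del_tau _ _)

theorem sum_delD (l : Module.Dual K R) (f : A.D) :
    ∑ i, ∑ j, l (A.x i * A.x j) • A.delD j (A.delD i f) = 0 := by
  apply Subtype.ext
  have := (f.2.2 l).sum_del
  rw [AddSubmonoidClass.coe_finsetSum]
  simp only [AddSubmonoidClass.coe_finsetSum]
  exact this

/-- Functions supported on words of length `n`. -/
noncomputable def len (n : ℕ) : Submodule K A.D where
  carrier := {f | ∀ w, w.length ≠ n → (f : Sh K (Fin A.nvar)) w = 0}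
  add_mem' := fun {f g} hf hg w hw => by
    change (f : Sh K (Fin A.nvar)) w + (g : Sh K (Fin A.nvar)) w = 0
    rw [hf w hw, hg w hw, add_zero]
  zero_mem' := fun w _ => rfl
  smul_mem' := fun c f hf w hw => by
    change c * (f : Sh K (Fin A.nvar)) w = 0
    rw [hf w hw, mul_zero]

/-- Restriction to words of length `n`. -/
noncomputable def lenP (n : ℕ) : A.D →ₗ[K] A.D where
  toFun f := ⟨fun w => if w.length = n then (f : Sh K (Fin A.nvar)) w else 0, by
    refine ⟨f.2.1.imp fun a ha w hw => ?_, fun l w w' => ?_⟩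
    · simp only [ha w hw, ite_self]
    · by_cases h : w.length + w'.length + 2 = n
      · rw [← f.2.2 l w w']
        refine Finset.sum_congr rfl fun i _ => Finset.sum_congr rfl fun j _ => ?_
        simp only [List.length_append, List.length_cons]
        rw [if_pos (by omega)]
      · refine Finset.sum_eq_zero fun i _ => Finset.sum_eq_zero fun j _ => ?_
        simp only [List.length_append, List.length_cons]
        rw [if_neg (by omega), mul_zero]⟩
  map_add' f g := by
    apply Subtype.ext
    funext w
    change (if w.length = n then (f : Sh K (Fin A.nvar)) w + (g : Sh K (Fin A.nvar)) w else 0) =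
      (if w.length = n then (f : Sh K (Fin A.nvar)) w else 0) +
      (if w.length = n then (g : Sh K (Fin A.nvar)) w else 0)
    split_ifs <;> simp
  map_smul' c f := by
    apply Subtype.ext
    funext w
    change (if w.length = n then c * (f : Sh K (Fin A.nvar)) w else 0) =
      c * (if w.length = n then (f : Sh K (Fin A.nvar)) w else 0)
    split_ifs <;> simp

theorem lenP_apply (n : ℕ) (f : A.D) (w : List (Fin A.nvar)) :
    (A.lenP n f : Sh K (Fin A.nvar)) w = if w.length = n then (f : Sh K (Fin A.nvar)) w else 0 :=
  rfl

/-- The length grading of `A.D`. -/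
noncomputable def lenProj : GrProj A.len where
  P := A.lenP
  mem := fun n f w hw => by rw [lenP_apply, if_neg hw]
  self := fun n f hf => by
    apply Subtype.ext
    funext w
    rw [lenP_apply]
    by_cases h : w.length = n
    · rw [if_pos h]
    · rw [if_neg h, hf w h]
  ne := fun n n' hn f hf => by
    apply Subtype.ext
    funext w
    rw [lenP_apply]
    by_cases h : w.length = n
    · rw [if_pos h, hf w (by omega)]; rfl
    · rw [if_neg h]; rfl
  top := fun f => by
    obtain ⟨a, ha⟩ := f.2.1
    have : f = ∑ n ∈ Finset.range (a + 1), A.lenP n f := by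
      apply Subtype.ext
      rw [AddSubmonoidClass.coe_finsetSum]
      funext w
      rw [Sh.sum_apply]
      simp only [lenP_apply]
      rw [Finset.sum_ite_eq]
      split_ifs with h
      · rfl
      · exact ha w (by simpa using h)
    rw [this]
    refine sum_mem fun n _ => Submodule.mem_iSup_of_mem n ?_
    intro w hw
    rw [lenP_apply, if_neg hw]

/-- Index set of a length-homogeneous basis of `A.D`. -/
abbrev B0 : Type u := (n : ℕ) × Module.Basis.ofVectorSpaceIndex K (A.len n)

/-- A length-homogeneous basis of `A.D`. -/
noncomputable def bD : Module.Basis A.B0 K A.D :=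
  A.lenProj.isInternal.collectedBasis fun n => Module.Basis.ofVectorSpace K (A.len n)

theorem bD_mem (b : A.B0) : A.bD b ∈ A.len b.1 :=
  A.lenProj.isInternal.collectedBasis_mem _ b

theorem repr_ne_len {n : ℕ} {f : A.D} (hf : f ∈ A.len n) {b : A.B0} (h : A.bD.repr f b ≠ 0) :
    b.1 = n := by
  by_contra hne
  obtain ⟨m, b⟩ := b
  exact h (A.lenProj.isInternal.collectedBasis_repr_of_mem_ne _ (Ne.symm hne) hf)

theorem repr_lenP (f : A.D) (b : A.B0) : A.bD.repr f b = A.bD.repr (A.lenP b.1 f) b := by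
  classical
  obtain ⟨s, hs⟩ := A.lenProj.exists_finset f
  conv_lhs => rw [hs]
  rw [map_sum, Finsupp.finsetSum_apply]
  by_cases hb : b.1 ∈ s
  · rw [Finset.sum_eq_single_of_mem b.1 hb]
    · rfl
    · intro n _ hn
      by_contra h
      exact hn (A.repr_ne_len (A.lenProj.mem n f) h).symm
  · rw [Finset.sum_eq_zero]
    · have : A.lenP b.1 f = 0 := by
        conv_lhs => rw [hs]
        rw [map_sum]
        refine Finset.sum_eq_zero fun n hn => ?_
        exact A.lenProj.ne b.1 n (fun h => hb (h ▸ hn)) _ (A.lenProj.mem n f)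
      rw [this]; simp
    · intro n hn
      by_contra h
      exact hb ((A.repr_ne_len (A.lenProj.mem n f) h) ▸ hn)

theorem repr_le_bdd {n : ℕ} {f : A.D} (hf : Sh.Bdd n (f : Sh K (Fin A.nvar))) {b : A.B0}
    (h : A.bD.repr f b ≠ 0) : b.1 ≤ n := by
  by_contra hne
  rw [repr_lenP] at h
  have : A.lenP b.1 f = 0 := by
    apply Subtype.ext
    funext w
    rw [lenP_apply]
    split_ifs with hw
    · exact hf w (by omega)
    · rfl
  rw [this] at h
  simp at h

theorem bdd_bD (b : A.B0) : Sh.Bdd b.1 (A.bD b : Sh K (Fin A.nvar)) :=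
  fun w hw => A.bD_mem b w (by omega)

theorem delD_len {n : ℕ} {f : A.D} (hf : f ∈ A.len n) (i : Fin A.nvar) {b : A.B0}
    (h : A.bD.repr (A.delD i f) b ≠ 0) : n = b.1 + 1 := by
  cases n with
  | zero =>
    have : A.delD i f = 0 := by
      apply Subtype.ext
      funext w
      exact hf (i :: w) (by simp)
    rw [this] at h
    simp at h
  | succ n =>
    have : A.delD i f ∈ A.len n := fun w hw => hf (i :: w) (by simpa using hw)
    rw [A.repr_ne_len this h]

theorem one_len : (1 : A.D) ∈ A.len 0 := by
  intro w hw
  cases w with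
  | nil => simp at hw
  | cons i w => rfl

/-- The one-letter word. -/
noncomputable def letter (i : Fin A.nvar) : A.D := ⟨fun w => if w = [i] then 1 else 0, by
  refine ⟨⟨1, fun w hw => ?_⟩, fun l w w' => ?_⟩
  · refine if_neg ?_
    rintro rfl
    simp at hw
  · refine Finset.sum_eq_zero fun j _ => Finset.sum_eq_zero fun k _ => ?_
    refine mul_eq_zero_of_right _ (if_neg ?_)
    intro h
    have := congrArg List.length h
    simp only [List.length_append, List.length_cons, List.length_nil] at this
    omega⟩

theorem delD_letter (i j : Fin A.nvar) : A.delD j (A.letter i) = if j = i then 1 else 0 := by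
  apply Subtype.ext
  funext w
  change (if j :: w = [i] then (1 : K) else 0) = _
  by_cases h : j = i
  · subst h
    cases w with
    | nil => simp
    | cons k w => simp
  · simp [h]

end StdGrading

namespace StdGrading
variable (A : StdGrading K R)

/-- The Priddy complex `R ⊗ D`, as an algebra. -/
abbrev C : Type (max u v) := R ⊗[K] A.D

/-- The differential of the Priddy complex. -/
noncomputable def dC : A.C →ₗ[R] A.C := ∑ i, A.x i • (A.delD i).baseChange R

/-- The sign involution of the Priddy complex. -/
noncomputable def tauC : A.C →ₗ[R] A.C := A.tauD.baseChange R

/-- The basis of `A.C` over `R` induced by a length-homogeneous basis of `A.D`. -/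
noncomputable def bC : Module.Basis A.B0 R A.C := Algebra.TensorProduct.basis R A.bD

theorem dC_tmul (a : R) (f : A.D) : A.dC (a ⊗ₜ f) = ∑ i, (A.x i * a) ⊗ₜ A.delD i f := by
  simp [dC, LinearMap.sum_apply, TensorProduct.smul_tmul']

theorem tauC_tmul (a : R) (f : A.D) : A.tauC (a ⊗ₜ f) = a ⊗ₜ A.tauD f := rfl

theorem repr_tmul (a : R) (f : A.D) (b : A.B0) :
    A.bC.repr (a ⊗ₜ f) b = A.bD.repr f b • a := by
  simp [bC, Algebra.TensorProduct.basis_repr_tmul, Algebra.smul_def, mul_comm]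

theorem bC_apply (b : A.B0) : A.bC b = 1 ⊗ₜ A.bD b := by
  simp [bC]

theorem dC_mul (p q : A.C) : A.dC (p * q) = A.dC p * q + A.tauC p * A.dC q := by
  induction p using TensorProduct.induction_on with
  | zero => simp
  | add p p' hp hp' => simp only [add_mul, map_add, hp, hp']; abel
  | tmul a f =>
    induction q using TensorProduct.induction_on with
    | zero => simp
    | add q q' hq hq' => simp only [mul_add, map_add, hq, hq']; abel
    | tmul b g =>
      simp only [Algebra.TensorProduct.tmul_mul_tmul, dC_tmul, tauC_tmul, delD_mul,
        TensorProduct.tmul_add, Finset.sum_add_distrib, Finset.sum_mul, Finset.mul_sum]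
      congr 1
      · refine Finset.sum_congr rfl fun i _ => ?_
        rw [mul_assoc]
      · refine Finset.sum_congr rfl fun i _ => ?_
        rw [mul_left_comm]

theorem tauC_mul (p q : A.C) : A.tauC (p * q) = A.tauC p * A.tauC q := by
  induction p using TensorProduct.induction_on with
  | zero => simp
  | add p p' hp hp' => simp only [add_mul, map_add, hp, hp']
  | tmul a f =>
    induction q using TensorProduct.induction_on with
    | zero => simp
    | add q q' hq hq' => simp only [mul_add, map_add, hq, hq']
    | tmul b g => simp only [Algebra.TensorProduct.tmul_mul_tmul, tauC_tmul, tauD_mul]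

theorem tauC_tauC (p : A.C) : A.tauC (A.tauC p) = p := by
  induction p using TensorProduct.induction_on with
  | zero => simp
  | add p p' hp hp' => simp only [map_add, hp, hp']
  | tmul a f => simp only [tauC_tmul, tauD_tauD]

theorem dC_tauC (p : A.C) : A.dC (A.tauC p) = -A.tauC (A.dC p) := by
  induction p using TensorProduct.induction_on with
  | zero => simp
  | add p p' hp hp' => simp only [map_add, hp, hp', neg_add]
  | tmul a f =>
    simp only [tauC_tmul, dC_tmul, map_sum, delD_tauD, TensorProduct.tmul_neg,
      Finset.sum_neg_distrib]

theorem tauC_one : A.tauC 1 = 1 := by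
  rw [Algebra.TensorProduct.one_def, tauC_tmul, tauD_one]

theorem dC_one : A.dC 1 = 0 := by
  rw [Algebra.TensorProduct.one_def, dC_tmul]
  simp [delD_one]

/-- A tensor in `R ⊗ D` vanishes if all functionals on `R` kill it. -/
theorem eq_zero_of_dual (q : A.C)
    (h : ∀ l : Module.Dual K R, (TensorProduct.lid K A.D) (l.rTensor A.D q) = 0) : q = 0 := by
  apply A.bC.repr.injective
  rw [map_zero]
  ext b
  rw [Finsupp.zero_apply, ← Module.forall_dual_apply_eq_zero_iff K]
  intro l
  have key : l (A.bC.repr q b) = A.bD.repr ((TensorProduct.lid K A.D) (l.rTensor A.D q)) b := by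
    clear h
    induction q using TensorProduct.induction_on with
    | zero => simp
    | add p p' hp hp' => simp only [map_add, Finsupp.add_apply, hp, hp']
    | tmul a f =>
      simp [repr_tmul, mul_comm]
  rw [key, h l]; simp

theorem dC_dC (p : A.C) : A.dC (A.dC p) = 0 := by
  induction p using TensorProduct.induction_on with
  | zero => simp
  | add p p' hp hp' => simp only [map_add, hp, hp', add_zero]
  | tmul a f =>
    have h1 : (a ⊗ₜ[K] f : A.C) = a • ((1 : R) ⊗ₜ[K] f) := by simp [TensorProduct.smul_tmul']
    have h0 : A.dC (A.dC ((1 : R) ⊗ₜ[K] f)) = 0 := by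
      apply A.eq_zero_of_dual
      intro l
      have := A.sum_delD l f
      rw [← this]
      simp only [dC_tmul, map_sum, mul_one]
      refine Finset.sum_congr rfl fun i _ => Finset.sum_congr rfl fun j _ => ?_
      simp [mul_comm]
    rw [h1, map_smul, map_smul, h0, smul_zero]

/-- The part of `A.C` with coefficients in `R_c`. -/
def Cwt (c : ℤ) : Submodule K A.C where
  carrier := {q | ∀ b, A.bC.repr q b ∈ A.gr c}
  add_mem' := fun hf hg b => by rw [map_add, Finsupp.add_apply]; exact add_mem (hf b) (hg b)
  zero_mem' := fun b => by simp
  smul_mem' := fun k f hf b => by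
    rw [← algebraMap_smul R k f, map_smul, Finsupp.smul_apply, algebraMap_smul]
    exact Submodule.smul_mem _ _ (hf b)

theorem tmul_mem {c : ℤ} {a : R} (ha : a ∈ A.gr c) (f : A.D) : a ⊗ₜ f ∈ A.Cwt c := by
  intro b
  rw [repr_tmul]
  exact Submodule.smul_mem _ _ ha

theorem Cwt_eq (c : ℤ) : A.Cwt c = Submodule.span K {q | ∃ a ∈ A.gr c, ∃ f, q = a ⊗ₜ f} := by
  apply le_antisymm
  · intro q hq
    rw [← A.bC.linearCombination_repr q, Finsupp.linearCombination_apply]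
    refine sum_mem fun b _ => Submodule.subset_span ⟨_, hq b, A.bD b, ?_⟩
    simp [bC_apply, TensorProduct.smul_tmul']
  · rw [Submodule.span_le]
    rintro _ ⟨a, ha, f, rfl⟩
    exact A.tmul_mem ha f

theorem Cwt_induction {c : ℤ} {motive : A.C → Prop}
    (tmul : ∀ a ∈ A.gr c, ∀ f, motive (a ⊗ₜ f))
    (add : ∀ p q, motive p → motive q → motive (p + q)) {q : A.C} (hq : q ∈ A.Cwt c) :
    motive q := by
  rw [Cwt_eq] at hq
  have key : ∀ k : K, motive (k • q) := by
    refine Submodule.span_induction (p := fun q _ => ∀ k : K, motive (k • q)) ?_ ?_ ?_ ?_ hq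
    · rintro _ ⟨a, ha, f, rfl⟩ k
      rw [TensorProduct.smul_tmul']
      exact tmul _ (Submodule.smul_mem _ _ ha) f
    · intro k
      simpa using tmul 0 (zero_mem _) 0
    · intro p q _ _ hp hq k
      rw [smul_add]
      exact add _ _ (hp k) (hq k)
    · intro k q _ hq k'
      rw [smul_smul]
      exact hq _
  simpa using key 1

theorem dC_mem {c : ℤ} {q : A.C} (hq : q ∈ A.Cwt c) : A.dC q ∈ A.Cwt (c + 1) := by
  refine A.Cwt_induction (motive := fun q => A.dC q ∈ A.Cwt (c + 1)) ?_ ?_ hq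
  · intro a ha f
    rw [dC_tmul]
    refine sum_mem fun i _ => A.tmul_mem ?_ _
    rw [add_comm]
    exact A.mul_mem (A.x_mem i) ha
  · intro p q hp hq
    rw [map_add]; exact add_mem hp hq

theorem tauC_mem {c : ℤ} {q : A.C} (hq : q ∈ A.Cwt c) : A.tauC q ∈ A.Cwt c := by
  refine A.Cwt_induction (motive := fun q => A.tauC q ∈ A.Cwt c) ?_ ?_ hq
  · intro a ha f
    exact A.tmul_mem ha _
  · intro p q hp hq
    rw [map_add]; exact add_mem hp hq

theorem Cmul_mem {c c' : ℤ} {p q : A.C} (hp : p ∈ A.Cwt c) (hq : q ∈ A.Cwt c') :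
    p * q ∈ A.Cwt (c + c') := by
  refine A.Cwt_induction (motive := fun p => p * q ∈ A.Cwt (c + c')) ?_ ?_ hp
  · intro a ha f
    refine A.Cwt_induction (motive := fun q => (a ⊗ₜ f) * q ∈ A.Cwt (c + c')) ?_ ?_ hq
    · intro b hb g
      rw [Algebra.TensorProduct.tmul_mul_tmul]
      exact A.tmul_mem (A.mul_mem ha hb) _
    · intro p q hp hq
      rw [mul_add]; exact add_mem hp hq
  · intro p q hp hq
    rw [add_mul]; exact add_mem hp hq

theorem one_memC : (1 : A.C) ∈ A.Cwt 0 := A.tmul_mem A.one_mem _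

/-- The class `1 ⊗ x_i` whose differential is `x_i`. -/
noncomputable def e (i : Fin A.nvar) : A.C := 1 ⊗ₜ A.letter i

theorem e_mem (i : Fin A.nvar) : A.e i ∈ A.Cwt 0 := A.tmul_mem A.one_mem _

theorem dC_e (i : Fin A.nvar) : A.dC (A.e i) = A.x i • 1 := by
  rw [e, dC_tmul, Finset.sum_eq_single i]
  · simp [delD_letter, Algebra.TensorProduct.one_def, TensorProduct.smul_tmul']
  · intro j _ hj
    simp [delD_letter, hj]
  · simp

theorem tauC_e (i : Fin A.nvar) : A.tauC (A.e i) = -A.e i := by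
  rw [e, tauC_tmul, ← TensorProduct.tmul_neg]
  congr 1
  apply Subtype.ext
  funext w
  rw [coe_tauD, Sh.tau_apply]
  change (-1) ^ w.length * (if w = [i] then (1 : K) else 0) = -(if w = [i] then (1 : K) else 0)
  split_ifs with h
  · simp [h]
  · simp

theorem repr_dC {b b' : A.B0} (h : A.bC.repr (A.dC (A.bC b)) b' ≠ 0) : b.1 = b'.1 + 1 := by
  rw [bC_apply, dC_tmul, map_sum, Finsupp.finsetSum_apply] at h
  obtain ⟨i, _, hi⟩ := Finset.exists_ne_zero_of_sum_ne_zero h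
  rw [repr_tmul] at hi
  exact A.delD_len (A.bD_mem b) i (left_ne_zero_of_smul hi)

theorem repr_mul {b b' b'' : A.B0} (h : A.bC.repr (A.bC b * A.bC b') b'' ≠ 0) :
    b''.1 ≤ b.1 + b'.1 := by
  rw [bC_apply, bC_apply, Algebra.TensorProduct.tmul_mul_tmul, repr_tmul] at h
  exact A.repr_le_bdd ((A.bdd_bD b).mul (A.bdd_bD b')) (left_ne_zero_of_smul h)

theorem repr_one {b : A.B0} (h : A.bC.repr 1 b ≠ 0) : b.1 = 0 := by
  rw [Algebra.TensorProduct.one_def, repr_tmul] at h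
  exact A.repr_ne_len A.one_len (left_ne_zero_of_smul h)

theorem repr_one_unit [Nontrivial R] : ∃ b, IsUnit (A.bC.repr 1 b) := by
  have h1 : (1 : A.D) ≠ 0 := by
    intro h
    have := congrFun (congrArg Subtype.val h) []
    exact one_ne_zero this
  have h2 : A.bD.repr 1 ≠ 0 := by simpa using h1
  obtain ⟨b, hb⟩ := Finsupp.ne_iff.1 h2
  refine ⟨b, ?_⟩
  rw [Algebra.TensorProduct.one_def, repr_tmul, ← Algebra.algebraMap_eq_smul_one]
  exact (IsUnit.mk0 _ hb).map (algebraMap K R)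

/-- `H^0` of the Priddy complex (in weight) is `K`. -/
theorem cycle_zero {q : A.C} (hq : q ∈ A.Cwt 0) (h : A.dC q = 0) : ∃ k : K, q = k • 1 := by
  obtain ⟨f, rfl⟩ : ∃ f : A.D, q = 1 ⊗ₜ f := by
    refine A.Cwt_induction (motive := fun q => ∃ f : A.D, q = 1 ⊗ₜ f) ?_ ?_ hq
    · intro a ha f
      obtain ⟨k, rfl⟩ := A.mem_zero.1 ha
      exact ⟨k • f, by rw [Algebra.algebraMap_eq_smul_one, TensorProduct.smul_tmul]⟩
    · rintro _ _ ⟨f, rfl⟩ ⟨g, rfl⟩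
      exact ⟨f + g, by rw [TensorProduct.tmul_add]⟩
  have h1 : ∀ i, A.delD i f = 0 := by
    intro i
    apply A.bD.repr.injective
    rw [map_zero]
    ext b
    have := congrArg (fun q => A.bC.repr q b) h
    simp only [dC_tmul, map_sum, Finsupp.finsetSum_apply, repr_tmul, mul_one, map_zero,
      Finsupp.zero_apply] at this
    simpa using A.x_indep _ this i
  refine ⟨(f : Sh K (Fin A.nvar)) [], ?_⟩
  rw [Algebra.TensorProduct.one_def, ← TensorProduct.tmul_smul]
  congr 1
  apply Subtype.ext
  funext w
  change _ = (f : Sh K (Fin A.nvar)) [] * (1 : Sh K (Fin A.nvar)) w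
  cases w with
  | nil => simp
  | cons i w =>
    have := congrFun (congrArg Subtype.val (h1 i)) w
    simpa [coe_delD] using this

/-- The Priddy complex is exact in weight one. -/
theorem cycle_one {q : A.C} (hq : q ∈ A.Cwt 1) (h : A.dC q = 0) : ∃ p ∈ A.Cwt 0, A.dC p = q := by
  obtain ⟨t, rfl⟩ : ∃ t : Fin A.nvar → A.D, q = ∑ i, A.x i ⊗ₜ t i := by
    refine A.Cwt_induction (motive := fun q => ∃ t : Fin A.nvar → A.D, q = ∑ i, A.x i ⊗ₜ t i)
      ?_ ?_ hq
    · intro a ha f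
      obtain ⟨k, rfl⟩ := A.exists_x ha
      refine ⟨fun i => k i • f, ?_⟩
      rw [TensorProduct.sum_tmul]
      refine Finset.sum_congr rfl fun i _ => ?_
      rw [TensorProduct.smul_tmul]
    · rintro _ _ ⟨f, rfl⟩ ⟨g, rfl⟩
      exact ⟨f + g, by simp [TensorProduct.tmul_add, Finset.sum_add_distrib]⟩
  have h1 : ∀ l : Module.Dual K R, ∑ i, ∑ j, l (A.x i * A.x j) • A.delD j (t i) = 0 := by
    intro l
    have := congrArg (fun q => (TensorProduct.lid K A.D) (l.rTensor A.D q)) h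
    simp only [map_zero] at this
    rw [← this]
    simp only [map_sum, dC_tmul]
    refine Finset.sum_congr rfl fun i _ => Finset.sum_congr rfl fun j _ => ?_
    simp [mul_comm]
  -- the primitive: prefix the letter `i` to `t i`
  let F : Sh K (Fin A.nvar) := fun w => match w with
    | [] => 0
    | i :: w => (t i : Sh K (Fin A.nvar)) w
  have hF : F ∈ A.D := by
    constructor
    · choose a ha using fun i => (t i).2.1
      refine ⟨(∑ i, a i) + 1, fun w hw => ?_⟩
      cases w with
      | nil => rfl
      | cons i w =>
        refine ha i w ?_
        have := Finset.single_le_sum (f := a) (fun i _ => Nat.zero_le _) (Finset.mem_univ i)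
        simp only [List.length_cons] at hw
        omega
    · intro l w w'
      cases w with
      | nil =>
        have := congrFun (congrArg Subtype.val (h1 l)) w'
        rw [AddSubmonoidClass.coe_finsetSum] at this
        simp only [AddSubmonoidClass.coe_finsetSum] at this
        rw [Sh.sum_apply] at this
        simp only [Sh.sum_apply] at this
        exact this
      | cons i w => exact (t i).2.2 l w w'
  refine ⟨1 ⊗ₜ ⟨F, hF⟩, A.tmul_mem A.one_mem _, ?_⟩
  rw [dC_tmul]
  refine Finset.sum_congr rfl fun i _ => ?_
  rw [mul_one]
  rfl

end StdGrading

/-! ### Extending endomorphisms of free modules to coefficients in a module -/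

section Coeff
variable {Q : Type*} [AddCommGroup Q] [Module R Q] {B : Type*} (bas : Module.Basis B R Q)
  {N : Type*} [AddCommGroup N] [Module R N] {N' : Type*} [AddCommGroup N'] [Module R N']

/-- The pure tensor `q ⊗ m`, written in coordinates with respect to a basis of `Q`. -/
noncomputable def tm : Q →ₗ[R] N →ₗ[R] (B →₀ N) :=
  LinearMap.mk₂ R (fun q m => (bas.repr q).mapRange (fun r => r • m) (zero_smul R m))
    (fun q q' m => by ext b; simp [add_smul])
    (fun r q m => by ext b; simp [mul_smul])
    (fun q m m' => by ext b; simp)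
    (fun r q m => by ext b; simp [smul_smul, mul_comm])

@[simp] theorem tm_apply (q : Q) (m : N) (b : B) : tm bas q m b = bas.repr q b • m := rfl

theorem tm_basis (b : B) (m : N) : tm bas (bas b) m = Finsupp.single b m := by
  classical
  ext b'
  rw [tm_apply, bas.repr_self, Finsupp.single_apply, Finsupp.single_apply]
  split_ifs <;> simp

/-- The map `φ ⊗ N` on `Q ⊗ N = B →₀ N`. -/
noncomputable def cext (φ : Q →ₗ[R] Q) : (B →₀ N) →ₗ[R] (B →₀ N) :=
  Finsupp.lsum R fun b => tm bas (φ (bas b))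

@[simp] theorem cext_single (φ : Q →ₗ[R] Q) (b : B) (m : N) :
    cext bas φ (Finsupp.single b m) = tm bas (φ (bas b)) m := by
  simp [cext]

theorem cext_tm (φ : Q →ₗ[R] Q) (q : Q) (m : N) : cext bas φ (tm bas q m) = tm bas (φ q) m := by
  have : (cext bas φ) ∘ₗ ((tm bas).flip m) = ((tm bas).flip m) ∘ₗ φ := by
    refine bas.ext fun b => ?_
    simp [tm_basis]
  exact congrArg (fun L => L q) this

theorem cext_apply (φ : Q →ₗ[R] Q) (f : B →₀ N) (b' : B) :
    cext bas φ f b' = f.sum fun b m => bas.repr (φ (bas b)) b' • m := by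
  simp only [cext, Finsupp.lsum_apply, Finsupp.sum_apply, tm_apply]

theorem cext_mem (φ : Q →ₗ[R] Q) (f : B →₀ N) (b' : B) {S : Type*} [SetLike S N]
    [AddSubmonoidClass S N] (T : S)
    (h : ∀ b, bas.repr (φ (bas b)) b' ≠ 0 → bas.repr (φ (bas b)) b' • f b ∈ T) :
    cext bas φ f b' ∈ T := by
  rw [cext_apply]
  refine sum_mem fun b _ => ?_
  by_cases h0 : bas.repr (φ (bas b)) b' = 0
  · simp only [h0, zero_smul]; exact zero_mem _
  · exact h b h0

theorem cext_mem_submodule (φ : Q →ₗ[R] Q) (f : B →₀ N) (Z : Submodule R N) (h : ∀ b, f b ∈ Z)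
    (b' : B) : cext bas φ f b' ∈ Z :=
  cext_mem bas φ f b' Z fun b _ => Z.smul_mem _ (h b)

theorem cext_comp (φ ψ : Q →ₗ[R] Q) (f : B →₀ N) :
    cext bas φ (cext bas ψ f) = cext bas (φ ∘ₗ ψ) f := by
  induction f using Finsupp.induction_linear with
  | zero => simp
  | add f g hf hg => simp only [map_add, hf, hg]
  | single b m => simp [cext_tm]

theorem cext_ext_zero (φ : Q →ₗ[R] Q) (h : ∀ q, φ (φ q) = 0) (f : B →₀ N) :
    cext bas φ (cext bas φ f) = 0 := by
  rw [cext_comp]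
  have : φ ∘ₗ φ = 0 := by ext q; simp [h]
  rw [this]
  ext b
  simp [cext_apply]

theorem cext_mapRange (φ : Q →ₗ[R] Q) (L : N →ₗ[R] N') (f : B →₀ N) :
    cext bas φ (Finsupp.mapRange.linearMap L f) = Finsupp.mapRange.linearMap L (cext bas φ f) := by
  induction f using Finsupp.induction_linear with
  | zero => simp
  | add f g hf hg => simp only [map_add, hf, hg]
  | single b m =>
    simp only [Finsupp.mapRange.linearMap_apply, Finsupp.mapRange_single, cext_single]
    ext b'
    simp

theorem cext_repr (φ : Q →ₗ[R] Q) (q : Q) : cext bas φ (bas.repr q) = bas.repr (φ q) := by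
  have h : ∀ q, bas.repr q = tm bas q (1 : R) := fun q => by ext b; simp
  rw [h, cext_tm, ← h]

theorem mapRange_sub_eq_zero (L : N →ₗ[R] N') {f f' : B →₀ N} {g : B →₀ N'}
    (h : Finsupp.mapRange.linearMap L f = g) (h' : Finsupp.mapRange.linearMap L f' = g) (b : B) :
    L ((f - f') b) = 0 := by
  have h1 := congrArg (fun f => f b) (h.trans h'.symm)
  simp only [Finsupp.mapRange.linearMap_apply, Finsupp.mapRange_apply] at h1
  rw [Finsupp.sub_apply, map_sub, h1, sub_self]

variable {σ : Type*}

/-- The `p`-th coordinate in `Q` of an element of `Q ⊗ (σ →₀ R)`. -/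
noncomputable def coord (p : σ) (y : B →₀ (σ →₀ R)) : Q :=
  bas.repr.symm (Finsupp.mapRange.linearMap (Finsupp.lapply p : (σ →₀ R) →ₗ[R] R) y)

theorem repr_coord (p : σ) (y : B →₀ (σ →₀ R)) (b : B) : bas.repr (coord bas p y) b = y b p := by
  simp [coord]

theorem coord_cext (φ : Q →ₗ[R] Q) (p : σ) (y : B →₀ (σ →₀ R)) :
    coord bas p (cext bas φ y) = φ (coord bas p y) := by
  apply bas.repr.injective
  rw [← cext_repr, coord, coord, LinearEquiv.apply_symm_apply, LinearEquiv.apply_symm_apply,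
    cext_mapRange]

theorem coord_injective {y y' : B →₀ (σ →₀ R)} (h : ∀ p, coord bas p y = coord bas p y') : y = y' := by
  ext b p
  rw [← repr_coord bas, ← repr_coord bas, h p]

theorem exists_coord (h : σ →₀ Q) : ∃ y : B →₀ (σ →₀ R), ∀ p, coord bas p y = h p := by
  classical
  refine ⟨h.sum fun p q => tm bas q (Finsupp.single p 1), fun p => ?_⟩
  apply bas.repr.injective
  ext b
  rw [repr_coord, Finsupp.sum_apply, Finsupp.sum, Finsupp.finsetSum_apply]
  simp only [tm_apply, Finsupp.smul_apply, Finsupp.single_apply, smul_eq_mul, mul_ite, mul_one,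
    mul_zero]
  rw [Finset.sum_ite_eq']
  split_ifs with hp
  · rfl
  · rw [Finsupp.notMem_support_iff.1 hp]; simp

end Coeff

/-- Pointwise choice for finitely supported functions. -/
theorem finsupp_choice {B N N' : Type*} [Zero N] [Zero N'] (f : B →₀ N) (r : B → N' → Prop)
    (h : ∀ b, ∃ n, r b n) (h0 : ∀ b, f b = 0 → r b 0) :
    ∃ f' : B →₀ N', (∀ b, r b (f' b)) ∧ ∀ b, f b = 0 → f' b = 0 := by
  classical
  choose t ht using h
  refine ⟨Finsupp.onFinset f.support (fun b => if f b = 0 then 0 else t b) ?_, ?_, ?_⟩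
  · intro b hb
    rw [Finsupp.mem_support_iff]
    intro h
    simp [h] at hb
  · intro b
    rw [Finsupp.onFinset_apply]
    split_ifs with hb
    · exact h0 b hb
    · exact ht b
  · intro b hb
    rw [Finsupp.onFinset_apply, if_pos hb]

/-- Coordinatewise solvability of `φ s = y` implies solvability over `σ →₀ R`. -/
theorem exists_ext_eq {Q : Type*} [AddCommGroup Q] [Module R Q] {B : Type*}
    (bas : Module.Basis B R Q) {σ : Type*} (φ : Q →ₗ[R] Q) (y : B →₀ (σ →₀ R))
    (r : σ → Q → Prop) (hr : ∀ p, r p 0)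
    (h : ∀ p, ∃ q, r p q ∧ φ q = coord bas p y) :
    ∃ s : B →₀ (σ →₀ R), cext bas φ s = y ∧ ∀ p, r p (coord bas p s) := by
  classical
  let S : Finset σ := y.support.biUnion fun b => (y b).support
  have hS : ∀ p ∉ S, coord bas p y = 0 := by
    intro p hp
    apply bas.repr.injective
    ext b
    rw [repr_coord]
    by_contra hne
    apply hp
    have h1 : y b p ≠ 0 := by simpa using hne
    refine Finset.mem_biUnion.2 ⟨b, ?_, by simpa using h1⟩
    rw [Finsupp.mem_support_iff]
    intro h0
    rw [h0] at h1
    simp at h1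
  let f : σ →₀ Q := Finsupp.onFinset S (fun p => coord bas p y) fun p hp => by
    by_contra hn; exact hp (hS p hn)
  obtain ⟨t, ht, -⟩ := finsupp_choice f (fun p q => r p q ∧ φ q = coord bas p y) h (by
    intro p hp
    refine ⟨hr p, ?_⟩
    rw [map_zero]; exact hp.symm)
  obtain ⟨s, hs⟩ := exists_coord bas t
  refine ⟨s, coord_injective bas fun p => ?_, fun p => ?_⟩
  · rw [coord_cext, hs, (ht p).2]
  · rw [hs]; exact (ht p).1

/-- Lifting a finitely supported family through a map whose range contains it. -/
theorem exists_mapRange {B N N' : Type*} [AddCommGroup N] [Module R N] [AddCommGroup N']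
    [Module R N'] (L : N →ₗ[R] N') (f : B →₀ N') (h : ∀ b, f b ∈ LinearMap.range L) :
    ∃ f' : B →₀ N, Finsupp.mapRange.linearMap L f' = f := by
  obtain ⟨f', hf', -⟩ := finsupp_choice f (fun b n => L n = f b) (fun b => h b)
    (fun b hb => by rw [hb, map_zero])
  exact ⟨f', by ext b; simpa using hf' b⟩

/-! ### Vanishing of Betti numbers from exactness of the Priddy complex -/

/-- The Priddy complex is exact in positive weights. -/
def StdGrading.Acyclic (A : StdGrading K R) : Prop :=
  ∀ c : ℤ, 1 ≤ c → ∀ q ∈ A.Cwt c, A.dC q = 0 → ∃ p ∈ A.Cwt (c - 1), A.dC p = q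

/-- Every cycle of degree `c` of the Priddy complex with coefficients in the range of `p` is the
boundary of a chain with coefficients in that range. -/
def PriddyExact (A : StdGrading K R) {G : Type*} [AddCommGroup G] [Module R G] {X : Type*}
    [AddCommGroup X] [Module R X] [Module K X] (p : G →ₗ[R] X) (gX : ℤ → Submodule K X)
    (c : ℤ) : Prop :=
  ∀ y : A.B0 →₀ X, (∀ b, y b ∈ gX c) → (∀ b, y b ∈ LinearMap.range p) → cext A.bC A.dC y = 0 →
    ∃ s : A.B0 →₀ X, (∀ b, s b ∈ LinearMap.range p) ∧ cext A.bC A.dC s = y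

/-- Dimension shifting: if the Priddy complex is acyclic, exactness with coefficients in the image
of `p` in degree `c - 1` gives exactness with coefficients in the kernel of `p` in degree `c`. -/
theorem priddyExact_shift {A : StdGrading K R} (hA : A.Acyclic) {β : ℕ → ℤ → ℕ} {i : ℕ}
    {X : Type*} [AddCommGroup X] [Module R X] [Module K X] {gX : ℤ → Submodule K X}
    (p : FreeMod R β i →ₗ[R] X) (q : FreeMod R β (i + 1) →ₗ[R] FreeMod R β i)
    (hex : Function.Exact q p) (hp : ∀ c, ∀ f ∈ freeGr A β i c, p f ∈ gX c)
    (hmin : ∀ f t, q f t ∈ A.maxIdeal) {c : ℤ} (h : PriddyExact A p gX (c - 1)) :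
    PriddyExact A q (freeGr A β i) c := by
  intro y hy hyr hy0
  -- coordinatewise, `y` has weight `c - t.1`; minimality forces it to vanish in weight `≤ 0`
  obtain ⟨s, hs, hsw⟩ := exists_ext_eq A.bC A.dC y (fun t z => z ∈ A.Cwt (c - 1 - t.1))
    (fun t => zero_mem _) (by
      intro t
      have hcyc : A.dC (coord A.bC t y) = 0 := by
        rw [← coord_cext, hy0]; simp [coord]
      have hw : coord A.bC t y ∈ A.Cwt (c - t.1) := fun b => by
        rw [repr_coord]; exact hy b t
      by_cases hc : 1 ≤ c - t.1
      · obtain ⟨z, hz, hz'⟩ := hA _ hc _ hw hcyc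
        exact ⟨z, by rwa [show c - 1 - t.1 = c - t.1 - 1 by ring], hz'⟩
      · refine ⟨0, zero_mem _, ?_⟩
        rw [map_zero]
        apply A.bC.repr.injective
        ext b
        rw [repr_coord, map_zero, Finsupp.zero_apply]
        symm
        obtain ⟨f, hf⟩ := hyr b
        by_cases hc0 : c - t.1 = 0
        · refine A.eq_zero_of_mem_maxIdeal ?_ (hc0 ▸ hy b t)
          rw [← hf]; exact hmin f t
        · exact A.eq_zero_of_neg (by omega) (hy b t))
  obtain ⟨s', hs'r, hs'⟩ := h (Finsupp.mapRange.linearMap p s)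
    (fun b => by
      rw [Finsupp.mapRange.linearMap_apply, Finsupp.mapRange_apply]
      refine hp _ _ fun t => ?_
      rw [← repr_coord A.bC]
      exact hsw t b)
    (fun b => ⟨s b, by simp⟩)
    (by
      rw [cext_mapRange, hs]
      ext b
      rw [Finsupp.mapRange.linearMap_apply, Finsupp.mapRange_apply, Finsupp.zero_apply]
      exact (hex _).2 (hyr b))
  obtain ⟨s'', hs''⟩ := exists_mapRange p s' hs'r
  refine ⟨s - cext A.bC A.dC s'', fun b => ?_, ?_⟩
  · refine (hex _).1 ?_
    exact mapRange_sub_eq_zero p rfl (by rw [← cext_mapRange, hs'', hs']) b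
  · rw [map_sub, hs, cext_ext_zero _ _ A.dC_dC, sub_zero]

/-- A minimal generator of degree `c` would give a constant cycle, on the empty word, which is not a
boundary. -/
theorem betti_zero_of_priddyExact [Nontrivial R] {A : StdGrading K R} {β : ℕ → ℤ → ℕ} {i : ℕ}
    {X : Type*} [AddCommGroup X] [Module R X] [Module K X] {gX : ℤ → Submodule K X}
    (p : FreeMod R β i →ₗ[R] X) (hp : ∀ c, ∀ f ∈ freeGr A β i c, p f ∈ gX c)
    (hmin : ∀ f, p f = 0 → ∀ t, f t ∈ A.maxIdeal) {c : ℤ} (h : PriddyExact A p gX c) :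
    β i c = 0 := by
  classical
  by_contra hne
  let t : (j : ℤ) × Fin (β i j) := ⟨c, ⟨0, Nat.pos_of_ne_zero hne⟩⟩
  let g : FreeMod R β i := Finsupp.single t 1
  have hg : g ∈ freeGr A β i c := by
    intro t'
    by_cases ht : t = t'
    · subst ht
      simpa [g, t] using A.one_mem
    · rw [Finsupp.single_apply, if_neg ht]; exact zero_mem _
  obtain ⟨s, hsr, hs⟩ := h (tm A.bC 1 (p g))
    (fun b => by
      rw [tm_apply, ← map_smul]
      refine hp _ _ fun t' => ?_
      rw [Finsupp.smul_apply, smul_eq_mul, show c - t'.1 = 0 + (c - t'.1) by ring]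
      exact A.mul_mem (A.one_memC b) (hg t'))
    (fun b => ⟨A.bC.repr 1 b • g, by rw [tm_apply, map_smul]⟩)
    (by rw [cext_tm, A.dC_one, map_zero]; rfl)
  obtain ⟨s', hs'⟩ := exists_mapRange p s hsr
  obtain ⟨b, hb⟩ := A.repr_one_unit
  have h2 : (tm A.bC 1 g - cext A.bC A.dC s') b t ∈ A.maxIdeal := by
    refine hmin _ (mapRange_sub_eq_zero p ?_ (by rw [← cext_mapRange, hs', hs]) b) t
    ext b
    simp
  have h3 : cext A.bC A.dC s' b t ∈ A.maxIdeal := by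
    rw [← repr_coord A.bC, coord_cext, ← cext_repr]
    refine cext_mem _ _ _ _ _ fun b' _ => ?_
    rw [smul_eq_mul]
    refine Ideal.mul_mem_right _ _ ?_
    refine A.mem_maxIdeal_of_pos one_pos ?_
    have := A.dC_mem (c := 0) (q := A.bC b') (by
      rw [A.bC_apply]; exact A.tmul_mem A.one_mem _)
    exact this b
  have h4 : A.bC.repr 1 b ∈ A.maxIdeal := by
    have := add_mem h2 h3
    simpa [g] using this
  exact A.one_notMem ((Ideal.eq_top_of_isUnit_mem _ h4 hb) ▸ Submodule.mem_top)

/-- If the Priddy complex is acyclic, `β n b` vanishes as soon as the Priddy complex with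
coefficients in `M` is exact in degree `b - n`. -/
theorem betti_zero [Nontrivial R] {A : StdGrading K R} (hA : A.Acyclic) {M : Type*}
    [AddCommGroup M] [Module K M] [Module R M] [IsScalarTower K R M] {g : ℤ → Submodule K M}
    {β : ℕ → ℤ → ℕ} (F : MinFreeRes A g β) (n : ℕ) (b : ℤ)
    (h : PriddyExact A F.eps g (b - n)) : β n b = 0 := by
  cases n with
  | zero =>
    refine betti_zero_of_priddyExact F.eps F.graded_eps ?_ (by simpa using h)
    intro f hf t
    obtain ⟨f', rfl⟩ := (F.exact_eps f).1 hf
    exact F.minimal 0 f' t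
  | succ n =>
    have key : ∀ k : ℕ, k ≤ n →
        PriddyExact A (F.d k) (freeGr A β k) (b - n + k) := by
      intro k
      induction k with
      | zero =>
        intro _
        refine priddyExact_shift hA F.eps (F.d 0) F.exact_eps F.graded_eps (F.minimal 0) ?_
        convert h using 1
        push_cast; ring
      | succ k ih =>
        intro hk
        refine priddyExact_shift hA (F.d k) (F.d (k + 1)) (F.exact_d k) (F.graded_d k)
          (F.minimal (k + 1)) ?_
        convert ih (by omega) using 1
        push_cast; ring
    have h1 := key n le_rfl
    refine betti_zero_of_priddyExact (F.d n) (F.graded_d n) ?_ (by simpa using h1)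
    intro f hf t
    obtain ⟨f', rfl⟩ := (F.exact_d n f).1 hf
    exact F.minimal (n + 1) f' t

/-! ### Exactness in high degrees with coefficients in a finitely generated module -/

section Bounded
variable {A : StdGrading K R} {M : Type*} [AddCommGroup M] [Module K M] [Module R M]
  [IsScalarTower K R M] {g : ℤ → Submodule K M}

theorem P_smul (hg : IsGradedModule A g) (p : GrProj g) {i : ℤ} {r : R} (hr : r ∈ A.gr i)
    (c : ℤ) (m : M) : p.P (i + c) (r • m) = r • p.P c m := by
  refine Submodule.iSup_induction g (motive := fun m => p.P (i + c) (r • m) = r • p.P c m)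
    (p.top m) ?_ (by simp) ?_
  · intro c' m hm
    by_cases hc : c = c'
    · subst hc
      rw [p.self c m hm, p.self _ _ (hg.2 i c r hr m hm)]
    · rw [p.ne c c' hc m hm, p.ne _ _ (by omega) _ (hg.2 i c' r hr m hm), smul_zero]
  · intro a b ha hb
    simp only [smul_add, map_add, ha, hb]

theorem cext_wt (hg : IsGradedModule A g) {φ : A.C →ₗ[R] A.C} {i : ℤ}
    (hφ : ∀ b, φ (A.bC b) ∈ A.Cwt i) {c : ℤ} {f : A.B0 →₀ M} (hf : ∀ b, f b ∈ g c) (b : A.B0) :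
    cext A.bC φ f b ∈ g (i + c) :=
  cext_mem _ _ _ _ _ fun b' _ => hg.2 i c _ (hφ b' b) _ (hf b')

theorem bC_mem (A : StdGrading K R) (b : A.B0) : A.bC b ∈ A.Cwt 0 := by
  rw [A.bC_apply]; exact A.tmul_mem A.one_mem _

theorem dC_bC_mem (A : StdGrading K R) (b : A.B0) : A.dC (A.bC b) ∈ A.Cwt 1 := by
  simpa using A.dC_mem (bC_mem A b)

/-- If `m_R M ⊆ N` for a finitely generated graded module `M`, then `N` contains all of `M` in
high degrees. -/
theorem high_degree_le [Module.Finite R M] (p : GrProj g)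
    (N : Submodule R M) (hN : ∀ m ∈ N, ∀ c, p.P c m ∈ N) (hx : ∀ i, ∀ m : M, A.x i • m ∈ N) :
    ∃ c0 : ℤ, ∀ c, c0 ≤ c → ∀ m ∈ g c, m ∈ N := by
  have hpos : ∀ i : ℤ, 0 < i → ∀ r ∈ A.gr i, ∀ m : M, r • m ∈ N := by
    intro i hi r hr m
    have h1 := A.mulEq 1 (i - 1) (by omega) (by omega)
    rw [show 1 + (i - 1) = i by ring] at h1
    rw [← h1] at hr
    refine Submodule.mul_induction_on hr ?_ ?_
    · intro a ha b _
      obtain ⟨k, rfl⟩ := A.exists_x ha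
      rw [mul_smul, Finset.sum_smul]
      refine sum_mem fun j _ => ?_
      rw [smul_assoc, ← algebraMap_smul R]
      exact N.smul_mem _ (hx j _)
    · intro a b ha hb
      rw [add_smul]; exact add_mem ha hb
  obtain ⟨S, hS⟩ := (inferInstance : Module.Finite R M).fg_top
  -- a degree above which all components of the generators vanish
  have hb : ∀ m : M, ∃ c0 : ℤ, ∀ c, c0 ≤ c → p.P c m = 0 := by
    intro m
    refine Submodule.iSup_induction g (motive := fun m => ∃ c0 : ℤ, ∀ c, c0 ≤ c → p.P c m = 0)
      (p.top m) ?_ ⟨0, by simp⟩ ?_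
    · intro c' m hm
      exact ⟨c' + 1, fun c hc => p.ne c c' (by omega) m hm⟩
    · rintro a b ⟨c1, h1⟩ ⟨c2, h2⟩
      refine ⟨max c1 c2, fun c hc => ?_⟩
      rw [map_add, h1 c (le_trans (le_max_left _ _) hc), h2 c (le_trans (le_max_right _ _) hc),
        add_zero]
  choose d hd using hb
  obtain ⟨c0, hc0⟩ : ∃ c0 : ℤ, ∀ m ∈ S, d m ≤ c0 := by
    obtain ⟨c0, h⟩ := (S.image d).exists_le
    exact ⟨c0, fun m hm => h _ (Finset.mem_image_of_mem d hm)⟩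
  let L : Submodule R M :=
    { carrier := {m | ∀ c, c0 ≤ c → p.P c m ∈ N}
      add_mem' := fun ha hb c hc => by rw [map_add]; exact add_mem (ha c hc) (hb c hc)
      zero_mem' := fun c _ => by rw [map_zero]; exact zero_mem _
      smul_mem' := fun r m hm => by
        refine Submodule.iSup_induction A.gr
          (motive := fun r => ∀ c, c0 ≤ c → p.P c (r • m) ∈ N) (A.pr.top r) ?_ ?_ ?_
        · intro i r hr c hc
          rcases lt_trichotomy i 0 with h | h | h
          · rw [A.eq_zero_of_neg h hr, zero_smul, map_zero]; exact zero_mem _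
          · subst h
            obtain ⟨k, rfl⟩ := A.mem_zero.1 hr
            rw [algebraMap_smul, map_smul, ← algebraMap_smul R]
            exact N.smul_mem _ (hm c hc)
          · exact hN _ (hpos i h r hr m) c
        · intro c _
          rw [zero_smul, map_zero]; exact zero_mem _
        · intro a b ha hb c hc
          rw [add_smul, map_add]; exact add_mem (ha c hc) (hb c hc) }
  have hL : L = ⊤ := by
    rw [eq_top_iff, ← hS, Submodule.span_le]
    intro m hm c hc
    rw [hd m c (le_trans (hc0 m hm) hc)]
    exact zero_mem _
  refine ⟨c0, fun c hc m hm => ?_⟩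
  have : m ∈ L := by rw [hL]; trivial
  rw [← p.self c m hm]
  exact this c hc

/-- Noetherian induction on homogeneous submodules `N`: in high degrees every chain which is a
cycle modulo `N` is a boundary modulo `N`. -/
theorem good_submodule (hg : IsGradedModule A g) [Module.Finite R M] (p : GrProj g)
    (N : Submodule R M) (hN : ∀ m ∈ N, ∀ c, p.P c m ∈ N) :
    ∃ c0 : ℤ, ∀ c, c0 ≤ c → ∀ f : A.B0 →₀ M, (∀ b, f b ∈ g c) →
      (∀ b, cext A.bC A.dC f b ∈ N) →
      ∃ s : A.B0 →₀ M, (∀ b, s b ∈ g (c - 1)) ∧ ∀ b, (f - cext A.bC A.dC s) b ∈ N := by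
  have := A.isNoetherianRing
  have : IsNoetherian R M := isNoetherian_of_isNoetherianRing_of_finite R M
  induction N using WellFoundedGT.induction with
  | ind N ih =>
  by_cases hx : ∀ i, ∀ m : M, A.x i • m ∈ N
  · obtain ⟨c0, h⟩ := high_degree_le p N hN hx
    refine ⟨c0, fun c hc f hf _ => ⟨0, fun b => zero_mem _, fun b => ?_⟩⟩
    rw [map_zero, sub_zero]
    exact h c hc _ (hf b)
  push Not at hx
  obtain ⟨i, m0, hm0⟩ := hx
  let X : M →ₗ[R] M := LinearMap.lsmul R M (A.x i)
  have hX : ∀ m, X m = A.x i • m := fun m => rfl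
  have hPX : ∀ c m, p.P c (X m) = X (p.P (c - 1) m) := by
    intro c m
    rw [hX, hX, ← P_smul hg p (A.x_mem i)]
    congr 2; ring
  have hgX : ∀ c, ∀ m ∈ g (c - 1), X m ∈ g c := by
    intro c m hm
    have := hg.2 1 (c - 1) _ (A.x_mem i) m hm
    rwa [show 1 + (c - 1) = c by ring] at this
  let N1 : Submodule R M := N ⊔ LinearMap.range X
  let N2 : Submodule R M := N.comap X
  have hN1 : N < N1 := by
    refine lt_of_le_of_ne le_sup_left fun h => hm0 ?_
    rw [h]
    exact (le_sup_right : LinearMap.range X ≤ N1) ⟨m0, rfl⟩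
  have hN2 : N ≤ N2 := fun m hm => N.smul_mem _ hm
  obtain ⟨c1, h1⟩ := ih N1 hN1 (by
    intro m hm c
    obtain ⟨n, hn, _, ⟨m', rfl⟩, rfl⟩ := Submodule.mem_sup.1 hm
    rw [map_add, hPX]
    exact Submodule.add_mem_sup (hN n hn c) ⟨_, rfl⟩)
  -- reduction to a chain `X f'` modulo boundaries and `N`
  have red : ∀ c, c1 ≤ c → ∀ f : A.B0 →₀ M, (∀ b, f b ∈ g c) →
      (∀ b, cext A.bC A.dC f b ∈ N) → ∃ s1 f' : A.B0 →₀ M, (∀ b, s1 b ∈ g (c - 1)) ∧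
      (∀ b, f' b ∈ g (c - 1)) ∧
      (∀ b, (f - cext A.bC A.dC s1 - A.x i • f') b ∈ N) ∧
      (∀ b, cext A.bC A.dC f' b ∈ N2) := by
    intro c hc f hf hdf
    obtain ⟨s1, hs1, hs1'⟩ := h1 c hc f hf fun b => hN1.le (hdf b)
    have hw : ∀ b, (f - cext A.bC A.dC s1) b ∈ g c := by
      intro b
      refine sub_mem (hf b) ?_
      have := cext_wt hg (dC_bC_mem A) hs1 b
      rwa [show 1 + (c - 1) = c by ring] at this
    obtain ⟨f', hf', -⟩ := finsupp_choice (f - cext A.bC A.dC s1)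
      (fun b m => m ∈ g (c - 1) ∧ (f - cext A.bC A.dC s1) b - A.x i • m ∈ N)
      (by
        intro b
        obtain ⟨n, hn, _, ⟨m', rfl⟩, h⟩ := Submodule.mem_sup.1 (hs1' b)
        refine ⟨p.P (c - 1) m', p.mem _ _, ?_⟩
        rw [← hX, ← hPX, ← p.self c _ (hw b), ← h, ← map_sub, add_sub_cancel_right]
        exact hN n hn c)
      (by
        intro b hb
        refine ⟨zero_mem _, ?_⟩
        rw [hb, smul_zero, sub_zero]
        exact zero_mem _)
    have hfin : ∀ b, (f - cext A.bC A.dC s1 - A.x i • f') b ∈ N := fun b => (hf' b).2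
    refine ⟨s1, f', hs1, fun b => (hf' b).1, hfin, fun b => ?_⟩
    have h2 := cext_mem_submodule A.bC A.dC _ N hfin b
    rw [map_sub, map_sub, cext_ext_zero _ _ A.dC_dC, sub_zero, map_smul] at h2
    have h3 := sub_mem (hdf b) h2
    rw [Finsupp.sub_apply, sub_sub_cancel] at h3
    exact h3
  by_cases hNe : N2 = N
  · -- `X` is injective modulo `N`: contract by left multiplication with `e_i`
    refine ⟨c1, fun c hc f hf hdf => ?_⟩
    obtain ⟨s1, f', hs1, hf', hfin, hdf'⟩ := red c hc f hf hdf
    rw [hNe] at hdf'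
    let E : A.C →ₗ[R] A.C := LinearMap.mulLeft R (A.e i)
    have hE : ∀ q, A.dC (E q) = A.x i • q - E (A.dC q) := by
      intro q
      change A.dC (A.e i * q) = A.x i • q - A.e i * A.dC q
      have h1 : (-A.e i) * A.dC q = -(A.e i * A.dC q) := neg_mul (A.e i) (A.dC q)
      rw [A.dC_mul, A.dC_e, A.tauC_e, smul_mul_assoc, one_mul, h1, sub_eq_add_neg]
    have hE' : ∀ t : A.B0 →₀ M, cext A.bC A.dC (cext A.bC E t) =
        A.x i • t - cext A.bC E (cext A.bC A.dC t) := by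
      intro t
      induction t using Finsupp.induction_linear with
      | zero => simp
      | add t t' ht ht' => simp only [map_add, ht, ht', smul_add]; abel
      | single b m =>
        rw [cext_single, cext_tm, hE, cext_single, cext_tm, map_sub, LinearMap.sub_apply, map_smul,
          LinearMap.smul_apply, tm_basis]
    refine ⟨s1 + cext A.bC E f', fun b => ?_, fun b => ?_⟩
    · refine add_mem (hs1 b) ?_
      have := cext_wt hg (φ := E) (i := 0) (fun b => by
        have h0 := A.Cmul_mem (A.e_mem i) (bC_mem A b)
        rw [zero_add] at h0
        exact h0) hf' b
      rwa [zero_add] at this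
    · rw [map_add, hE']
      have h4 := cext_mem_submodule A.bC E _ N hdf' b
      have h5 := add_mem (hfin b) h4
      rw [← Finsupp.add_apply] at h5
      convert h5 using 2
      abel
  · obtain ⟨c2, h2⟩ := ih N2 (lt_of_le_of_ne hN2 (Ne.symm hNe)) (by
      intro m hm c
      have h3 := hN _ hm (c + 1)
      rw [hPX, add_sub_cancel_right] at h3
      exact h3)
    refine ⟨max c1 (c2 + 1), fun c hc f hf hdf => ?_⟩
    obtain ⟨s1, f', hs1, hf', hfin, hdf'⟩ := red c (le_trans (le_max_left _ _) hc) f hf hdf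
    obtain ⟨s2, hs2, hs2'⟩ := h2 (c - 1) (by
      have := le_trans (le_max_right c1 (c2 + 1)) hc
      omega) f' hf' hdf'
    refine ⟨s1 + A.x i • s2, fun b => add_mem (hs1 b) (hgX _ _ (hs2 b)), fun b => ?_⟩
    have h5 := add_mem (hfin b) (hs2' b : X ((f' - cext A.bC A.dC s2) b) ∈ N)
    rw [hX, ← Finsupp.smul_apply, ← Finsupp.add_apply] at h5
    rw [map_add, map_smul]
    convert h5 using 2
    rw [smul_sub]
    abel

/-- The Priddy complex with coefficients in a finitely generated graded module is exact in high
degrees. -/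
theorem exists_bound (hg : IsGradedModule A g) [Module.Finite R M] :
    ∃ c0 : ℤ, ∀ c, c0 ≤ c → ∀ f : A.B0 →₀ M, (∀ b, f b ∈ g c) → cext A.bC A.dC f = 0 →
      ∃ s : A.B0 →₀ M, (∀ b, s b ∈ g (c - 1)) ∧ cext A.bC A.dC s = f := by
  have p := GrProj.ofInternal hg.1
  obtain ⟨c0, h⟩ := good_submodule hg p ⊥ (by
    intro m hm c
    rw [Submodule.mem_bot] at hm
    simp [hm])
  refine ⟨c0, fun c hc f hf hdf => ?_⟩
  obtain ⟨s, hs, hs'⟩ := h c hc f hf (fun b => by rw [hdf]; simp)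
  refine ⟨s, hs, ?_⟩
  ext b
  have := hs' b
  rw [Submodule.mem_bot, Finsupp.sub_apply, sub_eq_zero] at this
  exact this.symm

end Bounded

/-! ### Semifree modules over the Priddy algebra -/

theorem StdGrading.repr_tauC_mul (A : StdGrading K R) {b b'' : A.B0} {c : A.C}
    (h : A.bC.repr (A.tauC (A.bC b) * c) b'' ≠ 0) :
    ∃ b', A.bC.repr c b' ≠ 0 ∧ b''.1 ≤ b.1 + b'.1 := by
  rw [← A.bC.linearCombination_repr c, Finsupp.linearCombination_apply, Finsupp.sum,
    Finset.mul_sum, map_sum, Finsupp.finsetSum_apply] at h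
  obtain ⟨b', hb', h⟩ := Finset.exists_ne_zero_of_sum_ne_zero h
  refine ⟨b', by simpa using hb', ?_⟩
  rw [mul_smul_comm, map_smul, Finsupp.smul_apply] at h
  have h2 := right_ne_zero_of_smul h
  rw [A.bC_apply, A.bC_apply, A.tauC_tmul, Algebra.TensorProduct.tmul_mul_tmul, A.repr_tmul] at h2
  exact A.repr_le_bdd ((A.bdd_bD b).tau.mul (A.bdd_bD b')) (left_ne_zero_of_smul h2)

section Semifree
variable {A : StdGrading K R} {Ω : Type*}

theorem mul_smulQ (a b : A.C) (q : Ω →₀ A.C) : (a * b) • q = a • b • q :=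
  Finsupp.ext fun ω => mul_assoc a b (q ω)

theorem zero_smulQ (q : Ω →₀ A.C) : (0 : A.C) • q = 0 :=
  Finsupp.ext fun ω => zero_mul (q ω)

theorem neg_smulQ (a : A.C) (q : Ω →₀ A.C) : (-a) • q = -(a • q) :=
  Finsupp.ext fun ω => neg_mul a (q ω)

theorem one_smulQ (q : Ω →₀ A.C) : (1 : A.C) • q = q :=
  Finsupp.ext fun ω => one_mul (q ω)

theorem smul_smulQ (k : K) (q : Ω →₀ A.C) : (k • (1 : A.C)) • q = k • q :=
  Finsupp.ext fun ω => by
    rw [Finsupp.smul_apply, Finsupp.smul_apply, smul_eq_mul, smul_mul_assoc, one_mul]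

/-- The differential of the free `A.C`-module on `Ω` that sends the generator `ω` to `v ω`. -/
noncomputable def dQ (v : Ω → (Ω →₀ A.C)) : (Ω →₀ A.C) →ₗ[R] (Ω →₀ A.C) :=
  Finsupp.lsum R fun ω => Finsupp.lsingle ω ∘ₗ A.dC +
    ((LinearMap.toSpanSingleton A.C (Ω →₀ A.C) (v ω)).restrictScalars R) ∘ₗ A.tauC

theorem dQ_single (v : Ω → (Ω →₀ A.C)) (ω : Ω) (c : A.C) :
    dQ v (Finsupp.single ω c) = Finsupp.single ω (A.dC c) + A.tauC c • v ω := by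
  rw [dQ, Finsupp.lsum_apply, Finsupp.sum_single_index (by simp [zero_smulQ])]
  rfl

theorem dQ_smul (v : Ω → (Ω →₀ A.C)) (c : A.C) (q : Ω →₀ A.C) :
    dQ v (c • q) = A.dC c • q + A.tauC c • dQ v q := by
  induction q using Finsupp.induction_linear with
  | zero => simp
  | add f g hf hg => simp only [smul_add, map_add, hf, hg]; abel
  | single ω p =>
    rw [Finsupp.smul_single, smul_eq_mul, dQ_single, dQ_single, A.dC_mul, A.tauC_mul, mul_smulQ,
      smul_add, Finsupp.smul_single, Finsupp.smul_single, smul_eq_mul, smul_eq_mul,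
      Finsupp.single_add, add_assoc]

theorem dQ_dQ {v : Ω → (Ω →₀ A.C)} (hv : ∀ ω, dQ v (v ω) = 0) (q : Ω →₀ A.C) :
    dQ v (dQ v q) = 0 := by
  induction q using Finsupp.induction_linear with
  | zero => simp
  | add f g hf hg => simp only [map_add, hf, hg, add_zero]
  | single ω p =>
    rw [dQ_single, map_add, dQ_single, dQ_smul, hv, A.dC_dC, A.dC_tauC, smul_zero,
      Finsupp.single_zero, zero_add, add_zero, neg_smulQ]
    exact add_neg_cancel (A.tauC (A.dC p) • v ω)

/-- The weight `c` part of the free `A.C`-module on generators of weights `wt`. -/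
def Qwt (A : StdGrading K R) (wt : Ω → ℤ) (c : ℤ) : Submodule K (Ω →₀ A.C) where
  carrier := {q | ∀ ω, q ω ∈ A.Cwt (c - wt ω)}
  add_mem' := fun hf hg ω => add_mem (hf ω) (hg ω)
  zero_mem' := fun _ => zero_mem _
  smul_mem' := fun k _ hf ω => Submodule.smul_mem _ k (hf ω)

theorem Qwt_single {wt : Ω → ℤ} {c : ℤ} {ω : Ω} {p : A.C} (hp : p ∈ A.Cwt (c - wt ω)) :
    Finsupp.single ω p ∈ Qwt A wt c := by
  classical
  intro ω'
  rw [Finsupp.single_apply]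
  split_ifs with h
  · subst h; exact hp
  · exact zero_mem _

theorem Qwt_smul {wt : Ω → ℤ} {c c' : ℤ} {p : A.C} (hp : p ∈ A.Cwt c') {q : Ω →₀ A.C}
    (hq : q ∈ Qwt A wt c) : p • q ∈ Qwt A wt (c' + c) := by
  intro ω
  rw [Finsupp.smul_apply, smul_eq_mul, add_sub_assoc]
  exact A.Cmul_mem hp (hq ω)

theorem dQ_mem {wt : Ω → ℤ} {v : Ω → (Ω →₀ A.C)} (hv : ∀ ω, v ω ∈ Qwt A wt (wt ω + 1)) {c : ℤ}
    {q : Ω →₀ A.C} (hq : q ∈ Qwt A wt c) : dQ v q ∈ Qwt A wt (c + 1) := by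
  rw [← Finsupp.sum_single q, Finsupp.sum, map_sum]
  refine sum_mem fun ω _ => ?_
  rw [dQ_single]
  refine add_mem (Qwt_single ?_) ?_
  · rw [show c + 1 - wt ω = c - wt ω + 1 by ring]
    exact A.dC_mem (hq ω)
  · have := Qwt_smul (A.tauC_mem (hq ω)) (hv ω)
    rwa [show c - wt ω + (wt ω + 1) = c + 1 by ring] at this

/-- Exactness of the semifree module in weight `c`. -/
def QExact (A : StdGrading K R) (wt : Ω → ℤ) (v : Ω → (Ω →₀ A.C)) (c : ℤ) : Prop :=
  ∀ q ∈ Qwt A wt c, dQ v q = 0 → ∃ p ∈ Qwt A wt (c - 1), dQ v p = q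

end Semifree

/-- Exactness of the Priddy complex in weight `c`. -/
def CExact (A : StdGrading K R) (c : ℤ) : Prop :=
  ∀ q ∈ A.Cwt c, A.dC q = 0 → ∃ p ∈ A.Cwt (c - 1), A.dC p = q

/-- A semifree module over the Priddy algebra, with generators `Ω` of weights `wt` and differentials
`v`, which is exact in the weights `1, …, t + 1` and in all weights above `ρ + t`, but not in every
positive weight. The parameter `ρ` stands for the top weight in which the Priddy algebra has
homology, and `h` is a filtration of the generators strictly decreased by the differential. -/
structure Stage (A : StdGrading K R) (ρ : ℤ) (t : ℕ) where
  Ω : Type (max u v)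
  wt : Ω → ℤ
  h : Ω → ℕ
  v : Ω → (Ω →₀ A.C)
  wt_le : ∀ ω, wt ω ≤ t
  v_mem : ∀ ω, v ω ∈ Qwt A wt (wt ω + 1)
  v_cycle : ∀ ω, dQ v (v ω) = 0
  v_lt : ∀ ω ω' b, A.bC.repr (v ω ω') b ≠ 0 → b.1 + h ω' < h ω
  low : ∀ c : ℤ, 1 ≤ c → c ≤ t + 1 → QExact A wt v c
  high : ∀ c : ℤ, ρ + t < c → QExact A wt v c
  bad : ¬ ∀ c : ℤ, 1 ≤ c → QExact A wt v c

theorem exists_complement {V : Type*} [AddCommGroup V] [Module K V] (Z B : Submodule K V)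
    (h : B ≤ Z) : ∃ W : Submodule K V, W ≤ Z ∧ Disjoint W B ∧ Z ≤ W ⊔ B := by
  obtain ⟨W, hW⟩ := Submodule.exists_isCompl B
  refine ⟨W ⊓ Z, inf_le_right, ?_, ?_⟩
  · exact hW.disjoint.symm.mono_left inf_le_left
  · intro z hz
    obtain ⟨b, hb, w, hw, rfl⟩ := Submodule.mem_sup.1
      ((hW.sup_eq_top ▸ Submodule.mem_top : z ∈ B ⊔ W))
    rw [add_comm]
    refine Submodule.add_mem_sup ⟨hw, ?_⟩ hb
    have := Z.sub_mem hz (h hb)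
    rwa [add_sub_cancel_left] at this

/-- Representatives of a basis of the quotient `Z / B`. -/
theorem exists_reps {V : Type w} [AddCommGroup V] [Module K V] (Z B : Submodule K V)
    (h : B ≤ Z) : ∃ (J : Type w) (v : J → V), (∀ j, v j ∈ Z) ∧
      (∀ z ∈ Z, ∃ k : J →₀ K, z - k.sum (fun j a => a • v j) ∈ B) ∧
      ∀ k : J →₀ K, k.sum (fun j a => a • v j) ∈ B → k = 0 := by
  obtain ⟨W, hWZ, hd, hs⟩ := exists_complement Z B h
  let bas := Module.Basis.ofVectorSpace K W
  have hsum : ∀ k : Module.Basis.ofVectorSpaceIndex K W →₀ K,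
      k.sum (fun j a => a • (bas j : V)) = (Finsupp.linearCombination K bas k : W) := by
    intro k
    rw [Finsupp.linearCombination_apply, Finsupp.sum, Finsupp.sum]
    simp
  refine ⟨_, fun j => (bas j : V), fun j => hWZ (bas j).2, ?_, ?_⟩
  · intro z hz
    obtain ⟨w, hw, b, hb, rfl⟩ := Submodule.mem_sup.1 (hs hz)
    refine ⟨bas.repr ⟨w, hw⟩, ?_⟩
    rw [hsum, bas.linearCombination_repr, add_sub_cancel_left]
    exact hb
  · intro k hk
    rw [hsum] at hk
    have h0 : (Finsupp.linearCombination K bas k : W) = 0 := by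
      apply Subtype.ext
      exact (Submodule.disjoint_def.1 hd) _ (Subtype.mem _) hk
    have := bas.linearIndependent
    rw [linearIndependent_iff] at this
    exact this k h0

section Adjoin
variable {A : StdGrading K R} {Ω J : Type*}

/-- The element of the free module on `Ω ⊕ J` with the given components. -/
noncomputable def pr2 (q : Ω →₀ A.C) (f : J →₀ A.C) : (Ω ⊕ J) →₀ A.C := Finsupp.sumElim q f

@[simp] theorem pr2_inl (q : Ω →₀ A.C) (f : J →₀ A.C) (ω : Ω) : pr2 q f (Sum.inl ω) = q ω :=
  Finsupp.sumElim_inl _ _ _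

@[simp] theorem pr2_inr (q : Ω →₀ A.C) (f : J →₀ A.C) (j : J) : pr2 q f (Sum.inr j) = f j :=
  Finsupp.sumElim_inr _ _ _

theorem pr2_add (q q' : Ω →₀ A.C) (f f' : J →₀ A.C) :
    pr2 (q + q') (f + f') = pr2 q f + pr2 q' f' := by
  refine Finsupp.ext fun z => ?_
  cases z with
  | inl ω => simp only [Finsupp.add_apply, pr2_inl]
  | inr j => simp only [Finsupp.add_apply, pr2_inr]

theorem pr2_smul (c : A.C) (q : Ω →₀ A.C) (f : J →₀ A.C) :
    pr2 (c • q) (c • f) = c • pr2 q f := by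
  refine Finsupp.ext fun z => ?_
  cases z with
  | inl ω => simp only [Finsupp.smul_apply, pr2_inl]
  | inr j => simp only [Finsupp.smul_apply, pr2_inr]

theorem exists_pr2 (z : (Ω ⊕ J) →₀ A.C) : ∃ q f, z = pr2 q f := by
  refine ⟨z.comapDomain Sum.inl Sum.inl_injective.injOn,
    z.comapDomain Sum.inr Sum.inr_injective.injOn, Finsupp.ext fun y => ?_⟩
  cases y with
  | inl ω => simp
  | inr j => simp

theorem pr2_inj {q q' : Ω →₀ A.C} {f f' : J →₀ A.C} (h : pr2 q f = pr2 q' f') :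
    q = q' ∧ f = f' :=
  ⟨Finsupp.ext fun ω => by rw [← pr2_inl q f, h, pr2_inl],
    Finsupp.ext fun j => by rw [← pr2_inr q f, h, pr2_inr]⟩

theorem pr2_zero : pr2 (0 : Ω →₀ A.C) (0 : J →₀ A.C) = 0 := by
  refine Finsupp.ext fun z => ?_
  cases z <;> simp

theorem pr2_single_inl (ω : Ω) (c : A.C) :
    pr2 (Finsupp.single ω c) (0 : J →₀ A.C) = Finsupp.single (Sum.inl ω) c := by
  classical
  refine Finsupp.ext fun z => ?_
  cases z <;> simp [Finsupp.single_apply]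

theorem pr2_single_inr (j : J) (c : A.C) :
    pr2 (0 : Ω →₀ A.C) (Finsupp.single j c) = Finsupp.single (Sum.inr j) c := by
  classical
  refine Finsupp.ext fun z => ?_
  cases z <;> simp [Finsupp.single_apply]

/-- The twisting term `∑ τ(f_j) w_j` of the differential after adjoining generators killing the
cycles `w_j`. -/
noncomputable def tw (w : J → (Ω →₀ A.C)) : (J →₀ A.C) →ₗ[R] (Ω →₀ A.C) :=
  Finsupp.lsum R fun j =>
    ((LinearMap.toSpanSingleton A.C (Ω →₀ A.C) (w j)).restrictScalars R) ∘ₗ A.tauC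

theorem tw_single (w : J → (Ω →₀ A.C)) (j : J) (c : A.C) :
    tw w (Finsupp.single j c) = A.tauC c • w j := by
  rw [tw, Finsupp.lsum_apply, Finsupp.sum_single_index (by simp [zero_smulQ])]
  rfl

theorem tw_mem {wt : Ω → ℤ} {a : ℤ} {w : J → (Ω →₀ A.C)} (hw : ∀ j, w j ∈ Qwt A wt a)
    {c : ℤ} {f : J →₀ A.C} (hf : ∀ j, f j ∈ A.Cwt (c - a)) : tw w f ∈ Qwt A wt c := by
  rw [← Finsupp.sum_single f, Finsupp.sum, map_sum]
  refine sum_mem fun j _ => ?_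
  rw [tw_single]
  have := Qwt_smul (A.tauC_mem (hf j)) (hw j)
  rwa [sub_add_cancel] at this

/-- The images of the generators after adjoining generators killing the cycles `w_j`. -/
noncomputable def vNew (v : Ω → (Ω →₀ A.C)) (w : J → (Ω →₀ A.C)) : Ω ⊕ J → ((Ω ⊕ J) →₀ A.C) :=
  Sum.elim (fun ω => pr2 (v ω) 0) (fun j => pr2 (w j) 0)

theorem dQ_pr2 (v : Ω → (Ω →₀ A.C)) (w : J → (Ω →₀ A.C)) (q : Ω →₀ A.C) (f : J →₀ A.C) :
    dQ (vNew v w) (pr2 q f) =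
      pr2 (dQ v q + tw w f) (Finsupp.mapRange.linearMap A.dC f) := by
  have h1 : dQ (vNew v w) (pr2 q 0) = pr2 (dQ v q) 0 := by
    induction q using Finsupp.induction_linear with
    | zero => rw [pr2_zero, map_zero, map_zero, pr2_zero]
    | add q q' hq hq' =>
      have := pr2_add q q' (0 : J →₀ A.C) 0
      rw [add_zero] at this
      rw [this, map_add, hq, hq', ← pr2_add, add_zero, map_add]
    | single ω c =>
      have h0 : vNew v w (Sum.inl ω) = pr2 (v ω) 0 := rfl
      rw [pr2_single_inl, dQ_single, dQ_single, ← pr2_single_inl, h0, ← pr2_smul, ← pr2_add]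
      rw [smul_zero, add_zero]
  have h2 : dQ (vNew v w) (pr2 0 f) = pr2 (tw w f) (Finsupp.mapRange.linearMap A.dC f) := by
    induction f using Finsupp.induction_linear with
    | zero => rw [pr2_zero, map_zero, map_zero, map_zero, pr2_zero]
    | add f f' hf hf' =>
      have := pr2_add (0 : Ω →₀ A.C) 0 f f'
      rw [add_zero] at this
      rw [this, map_add, hf, hf', ← pr2_add, map_add, map_add]
    | single j c =>
      have h0 : vNew v w (Sum.inr j) = pr2 (w j) 0 := rfl
      rw [pr2_single_inr, dQ_single, tw_single, ← pr2_single_inr, h0, ← pr2_smul, ← pr2_add]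
      rw [smul_zero, add_zero, zero_add, Finsupp.mapRange.linearMap_apply,
        Finsupp.mapRange_single]
  have h3 := pr2_add q 0 0 f
  rw [add_zero, zero_add] at h3
  rw [h3, map_add, h1, h2, ← pr2_add, zero_add]

theorem pr2_mem {wt : Ω → ℤ} {a c : ℤ} {q : Ω →₀ A.C} {f : J →₀ A.C} :
    pr2 q f ∈ Qwt A (Sum.elim wt fun _ => a) c ↔
      q ∈ Qwt A wt c ∧ ∀ j, f j ∈ A.Cwt (c - a) := by
  constructor
  · intro h
    refine ⟨fun ω => ?_, fun j => ?_⟩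
    · have := h (Sum.inl ω)
      rwa [pr2_inl] at this
    · have := h (Sum.inr j)
      rwa [pr2_inr] at this
  · rintro ⟨h1, h2⟩ z
    cases z with
    | inl ω => rw [pr2_inl]; exact h1 ω
    | inr j => rw [pr2_inr]; exact h2 j

end Adjoin

theorem Qwt_sub {A : StdGrading K R} {Ω : Type*} {wt : Ω → ℤ} {c : ℤ} {q q' : Ω →₀ A.C}
    (h : q ∈ Qwt A wt c) (h' : q' ∈ Qwt A wt c) : q - q' ∈ Qwt A wt c := by
  intro ω b
  rw [Finsupp.sub_apply, map_sub, Finsupp.sub_apply]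
  exact sub_mem (h ω b) (h' ω b)

/-- A cycle of the extended module whose new components are boundaries is a boundary, provided this
holds for cycles of the old module. -/
theorem exact_of_comp {A : StdGrading K R} {Ω J : Type*} {wt : Ω → ℤ} {v : Ω → (Ω →₀ A.C)}
    {w : J → (Ω →₀ A.C)} {a : ℤ} (hw : ∀ j, w j ∈ Qwt A wt (a + 1)) {c : ℤ}
    {q : Ω →₀ A.C} {f : J →₀ A.C}
    (hq : q ∈ Qwt A wt c) (h0 : dQ (vNew v w) (pr2 q f) = 0)
    (hvw : ∀ z, dQ (vNew v w) (dQ (vNew v w) z) = 0)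
    (hf : ∀ j, ∃ p ∈ A.Cwt (c - a - 1), A.dC p = f j)
    (hex : ∀ q' ∈ Qwt A wt c, dQ v q' = 0 →
      ∃ p ∈ Qwt A (Sum.elim wt fun _ => a) (c - 1), dQ (vNew v w) p = pr2 q' (0 : J →₀ A.C)) :
    ∃ p ∈ Qwt A (Sum.elim wt fun _ => a) (c - 1), dQ (vNew v w) p = pr2 q f := by
  obtain ⟨g, hg, -⟩ := finsupp_choice f (fun j p => p ∈ A.Cwt (c - a - 1) ∧ A.dC p = f j) hf
    (fun j hj => ⟨zero_mem _, by rw [hj, map_zero]⟩)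
  have hdg : Finsupp.mapRange.linearMap A.dC g = f := Finsupp.ext fun j => (hg j).2
  have hdg' : dQ (vNew v w) (pr2 0 g) = pr2 (tw w g) f := by
    rw [dQ_pr2, map_zero, zero_add, hdg]
  have hsplit : pr2 q f = pr2 (q - tw w g) 0 + pr2 (tw w g) f := by
    rw [← pr2_add, zero_add]
    congr 1
    exact (sub_add_cancel q (tw w g)).symm
  have htw : tw w g ∈ Qwt A wt c := tw_mem hw fun j => by
    rw [← sub_sub]; exact (hg j).1
  have hcyc : dQ v (q - tw w g) = 0 := by
    have h1 := h0
    rw [hsplit, map_add, ← hdg', hvw, add_zero, dQ_pr2, map_zero, map_zero, add_zero,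
      ← pr2_zero] at h1
    exact (pr2_inj h1).1
  obtain ⟨p, hp, hpd⟩ := hex _ (Qwt_sub hq htw) hcyc
  refine ⟨p + pr2 0 g, add_mem hp (pr2_mem.2 ⟨zero_mem _, fun j => ?_⟩), ?_⟩
  · rw [sub_right_comm]; exact (hg j).1
  · rw [map_add, hpd, hdg', ← hsplit]

theorem Qwt_neg {A : StdGrading K R} {Ω : Type*} {wt : Ω → ℤ} {c : ℤ} {q : Ω →₀ A.C}
    (h : q ∈ Qwt A wt c) : -q ∈ Qwt A wt c := by
  intro ω b
  rw [Finsupp.neg_apply, map_neg, Finsupp.neg_apply]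
  exact neg_mem (h ω b)

theorem neg_add_cancelQ {A : StdGrading K R} {Ω : Type*} (q : Ω →₀ A.C) : -q + q = 0 :=
  Finsupp.ext fun ω => neg_add_cancel (q ω)

theorem neg_eqQ {A : StdGrading K R} {Ω : Type*} {q q' : Ω →₀ A.C} (h : q + q' = 0) : -q = q' :=
  Finsupp.ext fun ω => neg_eq_of_add_eq_zero_right (congrArg (fun f => f ω) h)

theorem dQ_neg {A : StdGrading K R} {Ω : Type*} (v : Ω → (Ω →₀ A.C)) (q : Ω →₀ A.C) :
    dQ v (-q) = -dQ v q :=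
  (neg_eqQ (by rw [← map_add, add_comm, neg_add_cancelQ, map_zero])).symm

theorem Cwt_neg {A : StdGrading K R} {c : ℤ} (hc : c < 0) {q : A.C} (hq : q ∈ A.Cwt c) : q = 0 := by
  apply A.bC.repr.injective
  rw [map_zero]
  refine Finsupp.ext fun b => ?_
  exact A.eq_zero_of_neg hc (hq b)

/-- Every element lies in a bounded part of the filtration by `h` plus word length. -/
theorem exists_height {A : StdGrading K R} {Ω : Type*} (h : Ω → ℕ) (q : Ω →₀ A.C) :
    ∃ n : ℕ, ∀ ω b, A.bC.repr (q ω) b ≠ 0 → b.1 + h ω < n := by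
  classical
  refine ⟨(q.support.sup fun ω => (A.bC.repr (q ω)).support.sup fun b => b.1 + h ω) + 1,
    fun ω b hb => Nat.lt_succ_of_le ?_⟩
  have hω : ω ∈ q.support := by
    rw [Finsupp.mem_support_iff]
    intro h0
    apply hb
    rw [h0, map_zero, Finsupp.zero_apply]
  exact le_trans (Finset.le_sup (f := fun b : A.B0 => b.1 + h ω) (Finsupp.mem_support_iff.2 hb))
    (Finset.le_sup (f := fun ω => (A.bC.repr (q ω)).support.sup fun b => b.1 + h ω) hω)

/-- Killing the homology of a stage in weight `t + 2` by generators of weight `t + 1`, one for each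
element of a basis of that homology. A new generator contributes to the homology a copy of the
classes of weight `ρ` of the Priddy algebra: the obstruction to lifting them to cycles has weight
`ρ + t + 2`, in which the given stage is exact. Hence the new stage is again not exact in every
positive weight. -/
theorem Stage.step {A : StdGrading K R} {ρ : ℤ} (hρ : 1 ≤ ρ) (hC : ∀ c, ρ < c → CExact A c)
    (hbad : ¬ CExact A ρ) {t : ℕ} (S : Stage A ρ t) : Nonempty (Stage A ρ (t + 1)) := by
  obtain ⟨Ω, wt, h, v, wt_le, v_mem, v_cycle, v_lt, low, high, bad⟩ := S
  let d : (Ω →₀ A.C) →ₗ[K] (Ω →₀ A.C) := (dQ v).restrictScalars K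
  have hd : ∀ q, d q = dQ v q := fun q => rfl
  obtain ⟨J, w, hwZ, hspan, hind⟩ := exists_reps (V := Ω →₀ A.C) (Qwt A wt (t + 2) ⊓ LinearMap.ker d)
    ((Qwt A wt (t + 1)).map d) (by
      rintro _ ⟨q, hq, rfl⟩
      refine ⟨?_, ?_⟩
      · have := dQ_mem v_mem hq
        rwa [add_assoc] at this
      · exact dQ_dQ v_cycle q)
  have hw : ∀ j, w j ∈ Qwt A wt ((t + 1 : ℤ) + 1) := fun j => by
    have := (hwZ j).1
    rwa [show (t : ℤ) + 2 = t + 1 + 1 by ring] at this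
  have hwc : ∀ j, dQ v (w j) = 0 := fun j => (hwZ j).2
  have hcyc : ∀ z, dQ (vNew v w) (vNew v w z) = 0 := by
    intro z
    cases z with
    | inl ω =>
      change dQ (vNew v w) (pr2 (v ω) 0) = 0
      rw [dQ_pr2, v_cycle, map_zero, map_zero, add_zero, pr2_zero]
    | inr j =>
      change dQ (vNew v w) (pr2 (w j) 0) = 0
      rw [dQ_pr2, hwc, map_zero, map_zero, add_zero, pr2_zero]
  have hvw := dQ_dQ hcyc
  have hk : ∀ k : J →₀ K, tw w (k.mapRange (fun a => a • (1 : A.C)) (zero_smul K 1)) =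
      k.sum fun j a => a • w j := by
    intro k
    rw [tw, Finsupp.lsum_apply, Finsupp.sum_mapRange_index (by simp [zero_smulQ])]
    refine Finset.sum_congr rfl fun j _ => ?_
    change A.tauC (k j • 1) • w j = k j • w j
    have : A.tauC (k j • (1 : A.C)) = k j • (1 : A.C) := by
      rw [← algebraMap_smul R, map_smul, A.tauC_one]
    rw [this, smul_smulQ]
  choose n hn using fun j => exists_height h (w j)
  -- a cycle of the extended module, in components
  have comp : ∀ q f, dQ (vNew v w) (pr2 q f) = 0 → dQ v q + tw w f = 0 ∧ ∀ j, A.dC (f j) = 0 := by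
    intro q f h0
    rw [dQ_pr2, ← pr2_zero] at h0
    obtain ⟨h1, h2⟩ := pr2_inj h0
    exact ⟨h1, fun j => congrArg (fun f => f j) h2⟩
  have lift : ∀ c (q : Ω →₀ A.C), (∃ p ∈ Qwt A wt (c - 1), dQ v p = q) →
      ∃ p ∈ Qwt A (Sum.elim wt fun _ : J => (t : ℤ) + 1) (c - 1), dQ (vNew v w) p = pr2 q 0 := by
    rintro c q ⟨p, hp, rfl⟩
    refine ⟨pr2 p 0, pr2_mem.2 ⟨hp, fun j => zero_mem _⟩, ?_⟩
    rw [dQ_pr2, map_zero, map_zero, add_zero]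
  refine ⟨⟨Ω ⊕ J, Sum.elim wt fun _ => (t : ℤ) + 1, Sum.elim h n, vNew v w, ?_, ?_, hcyc, ?_, ?_,
    ?_, ?_⟩⟩
  · intro z
    push_cast
    cases z with
    | inl ω => exact le_trans (wt_le ω) (by omega)
    | inr j => exact le_rfl
  · intro z
    cases z with
    | inl ω => exact pr2_mem.2 ⟨v_mem ω, fun j => zero_mem _⟩
    | inr j => exact pr2_mem.2 ⟨hw j, fun j => zero_mem _⟩
  · intro z z' b hb
    cases z' with
    | inr j =>
      exfalso
      apply hb
      cases z with
      | inl ω => change A.bC.repr (pr2 (v ω) 0 (Sum.inr j)) b = 0; simp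
      | inr j' => change A.bC.repr (pr2 (w j') 0 (Sum.inr j)) b = 0; simp
    | inl ω' =>
      cases z with
      | inl ω =>
        change A.bC.repr (pr2 (v ω) 0 (Sum.inl ω')) b ≠ 0 at hb
        rw [pr2_inl] at hb
        exact v_lt ω ω' b hb
      | inr j =>
        change A.bC.repr (pr2 (w j) 0 (Sum.inl ω')) b ≠ 0 at hb
        rw [pr2_inl] at hb
        exact hn j ω' b hb
  · intro c hc1 hc2 z hz h0
    push_cast at hc2
    obtain ⟨q, f, rfl⟩ := exists_pr2 z
    obtain ⟨hq, hf⟩ := pr2_mem.1 hz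
    obtain ⟨h1, h2⟩ := comp q f h0
    by_cases hct : c = t + 2
    · subst hct
      refine exact_of_comp hw hq h0 hvw (fun j => ?_) (fun q' hq' hq0 => ?_)
      · have := hf j
        rw [show (t : ℤ) + 2 - (t + 1) = 1 by ring] at this
        rw [show (t : ℤ) + 2 - (t + 1) - 1 = 0 by ring]
        exact A.cycle_one this (h2 j)
      · obtain ⟨k, p, hp, hpk⟩ := hspan q' ⟨hq', hq0⟩
        refine ⟨pr2 p (k.mapRange (fun a => a • (1 : A.C)) (zero_smul K 1)), pr2_mem.2 ⟨?_, ?_⟩, ?_⟩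
        · rwa [show (t : ℤ) + 2 - 1 = t + 1 by ring]
        · intro j
          rw [show (t : ℤ) + 2 - 1 - (t + 1) = 0 by ring]
          exact Submodule.smul_mem _ _ A.one_memC
        · rw [dQ_pr2, hk, ← hd, hpk, sub_add_cancel]
          congr 1
          refine Finsupp.ext fun j => ?_
          change A.dC (k j • 1) = 0
          rw [← algebraMap_smul R, map_smul, A.dC_one, smul_zero]
    · have hf0 : f = 0 := by
        by_cases hct' : c = t + 1
        · subst hct'
          have h3 : ∀ j, ∃ k : K, f j = k • 1 := fun j => by
            refine A.cycle_zero ?_ (h2 j)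
            have := hf j
            rwa [sub_self] at this
          obtain ⟨k, hk1, -⟩ := finsupp_choice f (fun j k => f j = k • 1) h3
            (fun j hj => by rw [hj, zero_smul])
          have h4 : f = k.mapRange (fun a => a • (1 : A.C)) (zero_smul K 1) :=
            Finsupp.ext hk1
          rw [h4, hk] at h1
          have h5 := hind k ⟨-q, Qwt_neg hq, by
            rw [hd, dQ_neg]
            exact neg_eqQ h1⟩
          rw [h4, h5]
          simp
        · refine Finsupp.ext fun j => ?_
          exact Cwt_neg (by omega) (hf j)
      subst hf0
      refine lift c q (low c hc1 (by omega) q hq ?_)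
      rwa [map_zero, add_zero] at h1
  · intro c hc z hz h0
    push_cast at hc
    obtain ⟨q, f, rfl⟩ := exists_pr2 z
    obtain ⟨hq, hf⟩ := pr2_mem.1 hz
    obtain ⟨h1, h2⟩ := comp q f h0
    refine exact_of_comp hw hq h0 hvw (fun j => ?_) (fun q' hq' hq0 => ?_)
    · exact hC _ (by omega) _ (hf j) (h2 j)
    · exact lift c q' (high c (by omega) q' hq' hq0)
  · intro hall
    rcases isEmpty_or_nonempty J with hJ | ⟨⟨j⟩⟩
    · apply bad
      intro c hc q hq hq0
      obtain ⟨p, hp, hpd⟩ := hall c hc (pr2 q 0) (pr2_mem.2 ⟨hq, fun j => zero_mem _⟩) (by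
        rw [dQ_pr2, hq0, map_zero, map_zero, add_zero, pr2_zero])
      obtain ⟨p1, f, rfl⟩ := exists_pr2 p
      refine ⟨p1, (pr2_mem.1 hp).1, ?_⟩
      have hf : f = 0 := Finsupp.ext fun j => (hJ.false j).elim
      rw [dQ_pr2] at hpd
      have := (pr2_inj hpd).1
      rwa [hf, map_zero, add_zero] at this
    · -- a top class of the Priddy algebra on a new generator gives a non-trivial class
      apply hbad
      intro x hx hx0
      obtain ⟨q, hq, hqd⟩ := high (ρ + (t + 2)) (by omega) (A.tauC x • w j)
        (Qwt_smul (A.tauC_mem hx) (hwZ j).1)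
        (by rw [dQ_smul, hwc, smul_zero, add_zero, A.dC_tauC, hx0, map_zero, neg_zero, zero_smulQ])
      obtain ⟨p, hp, hpd⟩ := hall (ρ + (t + 1)) (by omega) (pr2 (-q) (Finsupp.single j x))
        (pr2_mem.2 ⟨by
            rw [show ρ + ((t : ℤ) + 2) - 1 = ρ + (t + 1) by ring] at hq
            exact Qwt_neg hq, by
            have := Qwt_single (wt := fun _ : J => (t : ℤ) + 1) (c := ρ + (t + 1)) (ω := j)
              (p := x) (by rwa [add_sub_cancel_right])
            exact this⟩)
        (by
          rw [dQ_pr2, tw_single, dQ_neg, hqd, neg_add_cancelQ, Finsupp.mapRange.linearMap_apply,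
            Finsupp.mapRange_single, hx0, Finsupp.single_zero, pr2_zero])
      obtain ⟨p1, f, rfl⟩ := exists_pr2 p
      rw [dQ_pr2] at hpd
      have h3 := (pr2_inj hpd).2
      refine ⟨f j, ?_, ?_⟩
      · have := (pr2_mem.1 hp).2 j
        rwa [show ρ + ((t : ℤ) + 1) - 1 - (t + 1) = ρ - 1 by ring] at this
      · have := congrArg (fun f => f j) h3
        simpa using this

/-- The Priddy algebra as the initial stage. -/
theorem Stage.exists_zero {A : StdGrading K R} {ρ : ℤ} (hρ : 1 ≤ ρ)
    (hC : ∀ c, ρ < c → CExact A c) (hbad : ¬ CExact A ρ) : Nonempty (Stage A ρ 0) := by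
  have hd : ∀ q : PUnit.{max u v + 1} →₀ A.C, dQ (fun _ => 0) q = Finsupp.mapRange.linearMap A.dC q := by
    intro q
    induction q using Finsupp.induction_linear with
    | zero => rw [map_zero, map_zero]
    | add f g hf hg => rw [map_add, map_add, hf, hg]
    | single ω c =>
      rw [dQ_single, smul_zero, add_zero, Finsupp.mapRange.linearMap_apply, Finsupp.mapRange_single]
  have hex : ∀ c, CExact A c →
      QExact A (fun _ : PUnit.{max u v + 1} => (0 : ℤ)) (fun _ => 0) c := by
    intro c hc q hq h0
    rw [hd] at h0
    obtain ⟨p, hp, hpd⟩ := hc (q PUnit.unit) (by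
      have := hq PUnit.unit
      rwa [sub_zero] at this) (congrArg (fun f => f PUnit.unit) h0)
    refine ⟨Finsupp.single PUnit.unit p, Qwt_single (by rwa [sub_zero]), ?_⟩
    rw [hd, Finsupp.mapRange.linearMap_apply, Finsupp.mapRange_single]
    refine Finsupp.ext fun ω => ?_
    rw [hpd]
    simp
  refine ⟨⟨PUnit, fun _ => 0, fun _ => 0, fun _ => 0, fun _ => by simp, fun _ => zero_mem _,
    fun _ => map_zero _, ?_, ?_, ?_, ?_⟩⟩
  · intro ω ω' b hb
    exact absurd (by rw [Finsupp.zero_apply, map_zero, Finsupp.zero_apply]) hb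
  · intro c h1 h2
    apply hex
    obtain rfl : c = 1 := by push_cast at h2; omega
    intro q hq h0
    exact A.cycle_one hq h0
  · intro c hc
    exact hex c (hC c (by simpa using hc))
  · intro hall
    apply hbad
    intro q hq h0
    obtain ⟨p, hp, hpd⟩ := hall ρ hρ (Finsupp.single PUnit.unit q) (Qwt_single (by rwa [sub_zero]))
      (by rw [hd, Finsupp.mapRange.linearMap_apply, Finsupp.mapRange_single, h0,
        Finsupp.single_zero])
    refine ⟨p PUnit.unit, ?_, ?_⟩
    · have := hp PUnit.unit
      rwa [sub_zero] at this
    · rw [hd] at hpd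
      have := congrArg (fun f => f PUnit.unit) hpd
      simpa using this

theorem Stage.exists {A : StdGrading K R} {ρ : ℤ} (hρ : 1 ≤ ρ)
    (hC : ∀ c, ρ < c → CExact A c) (hbad : ¬ CExact A ρ) (t : ℕ) : Nonempty (Stage A ρ t) := by
  induction t with
  | zero => exact Stage.exists_zero hρ hC hbad
  | succ t ih => exact ih.elim fun S => S.step hρ hC hbad

/-- If the Priddy complex is not acyclic, it has a top weight with homology. -/
theorem exists_top (A : StdGrading K R) (hA : ¬ A.Acyclic) :
    ∃ ρ : ℤ, 1 ≤ ρ ∧ (∀ c, ρ < c → CExact A c) ∧ ¬ CExact A ρ := by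
  have hg : IsGradedModule A A.gr := ⟨A.internal, fun i j r hr x hx => A.mul_mem hr hx⟩
  obtain ⟨c0, hc0⟩ := exists_bound hg
  have hhigh : ∀ c, c0 ≤ c → CExact A c := by
    intro c hc q hq h0
    obtain ⟨s, hs, hsd⟩ := hc0 c hc (A.bC.repr q) hq (by rw [cext_repr, h0, map_zero])
    refine ⟨A.bC.repr.symm s, fun b => ?_, ?_⟩
    · rw [LinearEquiv.apply_symm_apply]; exact hs b
    · apply A.bC.repr.injective
      rw [← cext_repr, LinearEquiv.apply_symm_apply, hsd]
  have hex : ∃ c : ℤ, 1 ≤ c ∧ ¬ CExact A c := by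
    by_contra hne
    push Not at hne
    exact hA hne
  obtain ⟨ρ, ⟨h1, h2⟩, h3⟩ := Int.exists_greatest_of_bdd (P := fun c => 1 ≤ c ∧ ¬ CExact A c)
    ⟨c0, fun c hc => by
      by_contra hlt
      exact hc.2 (hhigh c (by omega))⟩ hex
  refine ⟨ρ, h1, fun c hc => ?_, h2⟩
  by_contra hne
  have := h3 c ⟨by omega, hne⟩
  omega

/-! ### Graded free modules and the residue field -/

/-- Projections onto the graded pieces of a graded free module. -/
noncomputable def freeProj (A : StdGrading K R) (β : ℕ → ℤ → ℕ) (i : ℕ) :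
    GrProj (freeGr A β i) where
  P := fun c =>
    { toFun := fun f => Finsupp.onFinset f.support (fun p => A.pr.P (c - p.1) (f p)) (by
        intro p hp
        rw [Finsupp.mem_support_iff]
        intro h0
        rw [h0, map_zero] at hp
        exact hp rfl)
      map_add' := fun f g => by ext p; simp
      map_smul' := fun k f => by ext p; simp }
  mem := fun c f p => A.pr.mem _ _
  self := fun c f hf => by ext p; exact A.pr.self _ _ (hf p)
  ne := fun c c' hc f hf => by
    ext p
    exact A.pr.ne (c - p.1) (c' - p.1) (by intro h; exact hc (by linarith)) _ (hf p)
  top := fun f => by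
    classical
    rw [← Finsupp.sum_single f]
    refine sum_mem fun p _ => ?_
    obtain ⟨s, hs⟩ := A.pr.exists_finset (f p)
    rw [hs, Finsupp.single_finsetSum]
    refine sum_mem fun c _ => ?_
    refine Submodule.mem_iSup_of_mem (c + p.1) fun p' => ?_
    rw [Finsupp.single_apply]
    split_ifs with h
    · subst h
      rw [add_sub_cancel_right]
      exact A.pr.mem _ _
    · exact zero_mem _

theorem single_mem_freeGr (A : StdGrading K R) {β : ℕ → ℤ → ℕ} {i : ℕ}
    (p : (j : ℤ) × Fin (β i j)) {c : ℤ} {r : R} (hr : r ∈ A.gr (c - p.1)) :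
    (Finsupp.single p r : FreeMod R β i) ∈ freeGr A β i c := by
  classical
  intro p'
  rw [Finsupp.single_apply]
  split_ifs with h
  · subst h; exact hr
  · exact zero_mem _

theorem smul_mem_freeGr {A : StdGrading K R} {β : ℕ → ℤ → ℕ} {i : ℕ} {a c : ℤ} {r : R}
    (hr : r ∈ A.gr a) {f : FreeMod R β i} (hf : f ∈ freeGr A β i c) :
    r • f ∈ freeGr A β i (a + c) := by
  intro p
  rw [Finsupp.smul_apply, smul_eq_mul, add_sub_assoc]
  exact A.mul_mem hr (hf p)

theorem resGr_eq_zero {A : StdGrading K R} {c : ℤ} (hc : c ≠ 0) {x : R ⧸ A.maxIdeal}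
    (hx : x ∈ resGr A c) : x = 0 := by
  obtain ⟨r, hr, rfl⟩ := hx
  exact (Submodule.Quotient.mk_eq_zero _).2 (A.mem_maxIdeal_of_ne hc hr)

theorem mem_resGr_zero (A : StdGrading K R) (x : R ⧸ A.maxIdeal) : x ∈ resGr A 0 := by
  obtain ⟨r, rfl⟩ := Submodule.Quotient.mk_surjective _ x
  refine ⟨A.pr.P 0 r, A.pr.mem _ _, ?_⟩
  refine (Submodule.Quotient.eq _).2 (A.mem_maxIdeal_of_proj ?_)
  rw [map_sub, A.pr.self 0 _ (A.pr.mem 0 r), sub_self]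

/-- Projections onto the graded pieces of the residue field, which is concentrated in degree `0`. -/
noncomputable def resProj (A : StdGrading K R) : GrProj (resGr A) where
  P := fun c => if c = 0 then LinearMap.id else 0
  mem := fun c x => by
    split_ifs with h
    · subst h; exact mem_resGr_zero A x
    · exact zero_mem _
  self := fun c x hx => by
    split_ifs with h
    · rfl
    · rw [resGr_eq_zero h hx]; rfl
  ne := fun c c' hc x hx => by
    split_ifs with h
    · subst h
      rw [resGr_eq_zero hc.symm hx]; rfl
    · rfl
  top := fun x => Submodule.mem_iSup_of_mem 0 (mem_resGr_zero A x)

theorem resGr_graded (A : StdGrading K R) : IsGradedModule A (resGr A) := by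
  refine ⟨(resProj A).isInternal, ?_⟩
  rintro i j r hr _ ⟨x, hx, rfl⟩
  exact ⟨r * x, A.mul_mem hr hx, rfl⟩

/-- The `i`-th syzygies of the residue field are generated in degrees at least `i`. -/
theorem le_of_betti_ne_zero {A : StdGrading K R} [Nontrivial R] {β : ℕ → ℤ → ℕ}
    (F : MinFreeRes A (resGr A) β) (i : ℕ) (j : ℤ) (h : β i j ≠ 0) : (i : ℤ) ≤ j := by
  induction i generalizing j with
  | zero =>
    by_contra hne
    let p : (j : ℤ) × Fin (β 0 j) := ⟨j, ⟨0, Nat.pos_of_ne_zero h⟩⟩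
    have h1 : F.eps (Finsupp.single p 1) = 0 :=
      resGr_eq_zero (c := j) (by push_cast at hne; omega) (F.graded_eps j _
        (single_mem_freeGr A p (by simpa [p] using A.one_mem)))
    obtain ⟨f, hf⟩ := (F.exact_eps _).1 h1
    have h2 := F.minimal 0 f p
    rw [hf, Finsupp.single_eq_same] at h2
    exact A.one_notMem h2
  | succ i ih =>
    by_contra hne
    let p : (j : ℤ) × Fin (β (i + 1) j) := ⟨j, ⟨0, Nat.pos_of_ne_zero h⟩⟩
    have h0 := F.graded_d i j _ (single_mem_freeGr A p (c := j) (r := 1)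
      (by simpa [p] using A.one_mem))
    have h1 : F.d i (Finsupp.single p 1) = 0 := by
      ext p'
      have hp' : (i : ℤ) ≤ p'.1 := ih p'.1 (by
        intro h0
        have := p'.2.2
        omega)
      rw [Finsupp.zero_apply]
      by_cases hj : j - p'.1 = 0
      · exact A.eq_zero_of_mem_maxIdeal (F.minimal i _ p') (hj ▸ h0 p')
      · exact A.eq_zero_of_neg (by push_cast at hne; omega) (h0 p')
    obtain ⟨f, hf⟩ := (F.exact_d i _).1 h1
    have h2 := F.minimal (i + 1) f p
    rw [hf, Finsupp.single_eq_same] at h2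
    exact A.one_notMem h2

/-! ### Finite regularity of the residue field forces acyclicity -/

section Zigzag
variable {A : StdGrading K R} {β : ℕ → ℤ → ℕ} {r : ℕ} {ρ : ℤ}

/-- The `R`-basis of a stage. -/
noncomputable def Stage.bas {t : ℕ} (S : Stage A ρ t) :
    Module.Basis ((_ : S.Ω) × A.B0) R (S.Ω →₀ A.C) := Finsupp.basis fun _ => A.bC

theorem Stage.bas_repr {t : ℕ} (S : Stage A ρ t) (q : S.Ω →₀ A.C) (b : (_ : S.Ω) × A.B0) :
    S.bas.repr q b = A.bC.repr (q b.1) b.2 := rfl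

theorem Stage.bas_apply {t : ℕ} (S : Stage A ρ t) (b : (_ : S.Ω) × A.B0) :
    S.bas b = Finsupp.single b.1 (A.bC b.2) := by
  simp [Stage.bas]

/-- The filtration degree of a basis element of a stage. -/
def Stage.rk {t : ℕ} (S : Stage A ρ t) (b : (_ : S.Ω) × A.B0) : ℕ := b.2.1 + S.h b.1

theorem Stage.rk_lt {t : ℕ} (S : Stage A ρ t) {b b' : (_ : S.Ω) × A.B0}
    (h : S.bas.repr (dQ S.v (S.bas b)) b' ≠ 0) : S.rk b' < S.rk b := by
  classical
  rw [S.bas_repr, S.bas_apply, dQ_single, Finsupp.add_apply, map_add, Finsupp.add_apply,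
    Finsupp.smul_apply, smul_eq_mul] at h
  by_cases h1 : A.bC.repr ((Finsupp.single b.1 (A.dC (A.bC b.2)) : S.Ω →₀ A.C) b'.1) b'.2 = 0
  · rw [h1, zero_add] at h
    obtain ⟨b1, hb1, hle⟩ := A.repr_tauC_mul h
    have := S.v_lt _ _ _ hb1
    unfold Stage.rk
    omega
  · rw [Finsupp.single_apply] at h1
    split_ifs at h1 with heq
    · have := A.repr_dC h1
      unfold Stage.rk
      rw [heq]
      omega
    · exact absurd (by rw [map_zero, Finsupp.zero_apply]) h1

theorem Stage.d_wt {t : ℕ} (S : Stage A ρ t) (b b' : (_ : S.Ω) × A.B0) :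
    S.bas.repr (dQ S.v (S.bas b)) b' ∈ A.gr (S.wt b.1 + 1 - S.wt b'.1) := by
  have h1 : S.bas b ∈ Qwt A S.wt (S.wt b.1) := by
    rw [S.bas_apply]
    exact Qwt_single (by rw [sub_self]; exact bC_mem A b.2)
  exact dQ_mem S.v_mem h1 b'.1 b'.2

section Abstract
variable {Q : Type*} [AddCommGroup Q] [Module R Q] {B : Type*} (bas : Module.Basis B R Q)
  (φ : Q →ₗ[R] Q) (wt : B → ℤ) (rk : B → ℕ)

/-- Exactness in weight `c` of a free module with a differential `φ` raising weights by one; the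
basis element `b` has weight `wt b`. -/
def WExact (A : StdGrading K R) (c : ℤ) : Prop :=
  ∀ q, (∀ b, bas.repr q b ∈ A.gr (c - wt b)) → φ q = 0 →
    ∃ p, (∀ b, bas.repr p b ∈ A.gr (c - 1 - wt b)) ∧ φ p = q

/-- Comparison with the minimal resolution `F` of `K`. If exactness is known in the weights
`1, …, c0 - 1`, a cycle `y` of weight `c0 + j` with coefficients in the image of `F.d j` is the
boundary of a chain with coefficients in that image. The induction is on a bound `k` for the
filtration degree `rk` on the support of `y`. A lift `z` of `y` to `F_{j+1}` need not be a cycle;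
its differential has coefficients in the image of `F.d (j + 1)` and smaller filtration degree, so
the induction hypothesis corrects `z` to a cycle. The coordinates of the latter have weights
`c0 + j - p` with `p` the degree of a generator of `F_{j+1}`; as `j + 1 ≤ p ≤ j + 1 + r`, these
weights lie between `1` and `c0 - 1`. -/
theorem zigzag [Nontrivial R] (F : MinFreeRes A (resGr A) β) (hr : ∀ i j, β i j ≠ 0 → j - i ≤ r)
    (hφ : ∀ q, φ (φ q) = 0) (hrk : ∀ b b', bas.repr (φ (bas b)) b' ≠ 0 → rk b' < rk b)
    (hwt : ∀ b b', bas.repr (φ (bas b)) b' ∈ A.gr (wt b + 1 - wt b')) {c0 : ℤ}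
    (hc0 : (r : ℤ) + 2 ≤ c0) (hlow : ∀ c, 1 ≤ c → c < c0 → WExact bas φ wt A c) (k : ℕ) :
    ∀ (j : ℕ) (y : B →₀ FreeMod R β j),
      (∀ b, k ≤ rk b → y b = 0) →
      (∀ b, y b ∈ freeGr A β j (c0 + j - wt b)) →
      (∀ b, y b ∈ LinearMap.range (F.d j)) → cext bas φ y = 0 →
      ∃ s : B →₀ FreeMod R β j,
        (∀ b, s b ∈ freeGr A β j (c0 + j - 1 - wt b)) ∧
        (∀ b, s b ∈ LinearMap.range (F.d j)) ∧ cext bas φ s = y := by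
  induction k with
  | zero =>
    intro j y hy0 _ _ _
    have : y = 0 := Finsupp.ext fun b => hy0 b (Nat.zero_le _)
    subst this
    exact ⟨0, fun b => zero_mem _, fun b => zero_mem _, map_zero _⟩
  | succ k ih =>
    intro j y hyk hyw hyr hy0
    obtain ⟨z, hz, hz0⟩ := finsupp_choice y (fun b n => n ∈ freeGr A β (j + 1) (c0 + j - wt b) ∧
      F.d j n = y b)
      (by
        intro b
        obtain ⟨n, hn⟩ := hyr b
        obtain ⟨n', hn', he⟩ := (freeProj A β (j + 1)).exists_preimage (freeProj A β j)
          (F.d j).toAddMonoidHom (F.graded_d j) _ n (by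
            have := hyw b
            rw [← hn] at this
            exact this)
        exact ⟨n', hn', he.trans hn⟩)
      (fun b hb => ⟨zero_mem _, by rw [hb, map_zero]⟩)
    have hzy : Finsupp.mapRange.linearMap (F.d j) z = y := Finsupp.ext fun b => (hz b).2
    obtain ⟨s, hsw, hsr, hs⟩ := ih (j + 1) (cext bas φ z)
      (by
        intro b hb
        have : cext bas φ z b ∈ (⊥ : Submodule R (FreeMod R β (j + 1))) := by
          refine cext_mem _ _ _ _ _ fun b' hb' => ?_
          have := hrk _ _ hb'
          rw [hz0 b' (hyk b' (by omega)), smul_zero]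
          exact zero_mem _
        exact (Submodule.mem_bot R).1 this)
      (by
        intro b
        refine cext_mem _ _ _ _ _ fun b' _ => ?_
        have := smul_mem_freeGr (hwt b' b) (hz b').1
        convert this using 1
        push_cast
        ring)
      (by
        intro b
        refine (F.exact_d j _).1 ?_
        have : Finsupp.mapRange.linearMap (F.d j) (cext bas φ z) = 0 := by
          rw [← cext_mapRange, hzy, hy0]
        exact congrArg (fun f => f b) this)
      (cext_ext_zero _ _ hφ _)
    -- `z - s` is a cycle all of whose coordinates live in weights where exactness is known
    have hcyc : cext bas φ (z - s) = 0 := by rw [map_sub, hs, sub_self]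
    obtain ⟨s2, hs2, hs2w⟩ := exists_ext_eq bas φ (z - s)
      (fun p q => ∀ b, bas.repr q b ∈ A.gr (c0 + j - p.1 - 1 - wt b))
      (fun p b => by rw [map_zero]; exact zero_mem _) (by
        intro p
        have hp1 := le_of_betti_ne_zero F (j + 1) p.1 (by have := p.2.2; omega)
        have hp2 := hr (j + 1) p.1 (by have := p.2.2; omega)
        push_cast at hp1 hp2
        refine hlow (c0 + j - p.1) (by omega) (by omega) _ ?_ ?_
        · intro b
          have h1 := (hz b).1 p
          have h2 := hsw b p
          rw [repr_coord, Finsupp.sub_apply, Finsupp.sub_apply]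
          refine sub_mem ?_ ?_
          · convert h1 using 1; ring_nf
          · convert h2 using 1; push_cast; ring_nf
        · rw [← coord_cext, hcyc]
          simp [coord])
    refine ⟨Finsupp.mapRange.linearMap (F.d j) s2, fun b => ?_, fun b => ⟨s2 b, rfl⟩, ?_⟩
    · refine F.graded_d j _ _ fun p => ?_
      have := hs2w p b
      rw [repr_coord] at this
      convert this using 1
      ring_nf
    · rw [cext_mapRange, hs2]
      refine Finsupp.ext fun b => ?_
      obtain ⟨n, hn⟩ := hsr b
      have h4 : F.d j (s b) = 0 := by
        rw [← hn]; exact (F.exact_d j _).2 ⟨n, rfl⟩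
      change F.d j ((z - s) b) = y b
      rw [Finsupp.sub_apply, map_sub, (hz b).2, h4, sub_zero]

/-- The resolution of `K` has a generator of degree `0` in position `0`. -/
theorem exists_gen [Nontrivial R] (F : MinFreeRes A (resGr A) β) :
    ∃ p : (j : ℤ) × Fin (β 0 j), p.1 = 0 := by
  by_contra hne
  push Not at hne
  have h0 : F.eps = 0 := by
    refine Finsupp.lhom_ext' fun p => LinearMap.ext_ring ?_
    exact resGr_eq_zero (hne p) (F.graded_eps p.1 _
      (single_mem_freeGr A p (by simpa using A.one_mem)))
  obtain ⟨f, hf⟩ := F.eps_surjective (Submodule.Quotient.mk 1)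
  rw [h0, LinearMap.zero_apply] at hf
  exact A.one_notMem ((Submodule.Quotient.mk_eq_zero _).1 hf.symm)

/-- If the regularity of the residue field is at most `r`, exactness in the weights `1, …, r + 1`
propagates to all positive weights. -/
theorem wExact_of_reg [Nontrivial R] (F : MinFreeRes A (resGr A) β)
    (hr : ∀ i j, β i j ≠ 0 → j - i ≤ r) (hφ : ∀ q, φ (φ q) = 0)
    (hrk : ∀ b b', bas.repr (φ (bas b)) b' ≠ 0 → rk b' < rk b)
    (hwt : ∀ b b', bas.repr (φ (bas b)) b' ∈ A.gr (wt b + 1 - wt b'))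
    (hwt1 : ∀ b, wt b ≤ r) (hlow : ∀ c : ℤ, 1 ≤ c → c ≤ r + 1 → WExact bas φ wt A c) :
  ∀ n : ℕ, ∀ c : ℤ, 1 ≤ c → c ≤ n → WExact bas φ wt A c := by
  intro n
  induction n with
  | zero => intro c h1 h2; push_cast at h2; omega
  | succ n ih =>
    intro c h1 h2
    by_cases hcr : c ≤ r + 1
    · exact hlow c h1 hcr
    intro q hq hq0
    obtain ⟨p, hp⟩ := exists_gen F
    let y := tm bas q (Finsupp.single p 1 : FreeMod R β 0)
    have hyb : ∀ b, y b = Finsupp.single p (bas.repr q b) := fun b => by simp [y]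
    have hyw : ∀ b, bas.repr q b ∈ A.gr (c - wt b) := fun b => hq b
    obtain ⟨k, hk⟩ : ∃ k, ∀ b, k ≤ rk b → y b = 0 := by
      refine ⟨y.support.sup rk + 1, fun b hb => ?_⟩
      by_contra hne
      have := Finset.le_sup (f := rk) (Finsupp.mem_support_iff.2 hne)
      omega
    obtain ⟨s, hsw, -, hs⟩ := zigzag bas φ wt rk F hr hφ hrk hwt (c0 := c) (by omega)
      (fun c' h1' h2' => ih c' h1' (by push_cast at h2; omega)) k 0 y hk
      (by
        intro b
        rw [hyb]
        refine single_mem_freeGr A p ?_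
        convert hyw b using 1
        rw [hp]; push_cast; ring)
      (by
        intro b
        refine (F.exact_eps _).1 ?_
        -- the coefficients of `q` have positive degree, hence annihilate the residue field
        have hm : bas.repr q b ∈ A.maxIdeal :=
          A.mem_maxIdeal_of_pos (by have := hwt1 b; omega) (hyw b)
        change F.eps (bas.repr q b • Finsupp.single p 1) = 0
        rw [map_smul]
        obtain ⟨x, hx⟩ := Submodule.Quotient.mk_surjective _ (F.eps (Finsupp.single p 1))
        rw [← hx, ← Submodule.Quotient.mk_smul]
        exact (Submodule.Quotient.mk_eq_zero _).2 (Ideal.mul_mem_right _ _ hm))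
      (by rw [cext_tm, hq0, map_zero]; rfl)
    refine ⟨coord bas p s, fun b => ?_, ?_⟩
    · rw [repr_coord]
      convert hsw b p using 1
      rw [hp]; push_cast; ring_nf
    · rw [← coord_cext, hs]
      apply bas.repr.injective
      refine Finsupp.ext fun b => ?_
      rw [repr_coord, hyb, Finsupp.single_eq_same]

end Abstract

/-- If the regularity of the residue field is finite, the Priddy complex is acyclic. -/
theorem acyclic_of_reg [Nontrivial R] (F : MinFreeRes A (resGr A) β)
    (hr : ∀ i j, β i j ≠ 0 → j - i ≤ r) : A.Acyclic := by
  by_contra hA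
  obtain ⟨ρ, hρ, hC, hbad⟩ := exists_top A hA
  obtain ⟨S⟩ := Stage.exists hρ hC hbad r
  apply S.bad
  intro c hc q hq hq0
  obtain ⟨p, hp, hpq⟩ := wExact_of_reg (Q := S.Ω →₀ A.C) S.bas (dQ S.v) (fun b => S.wt b.1) S.rk F hr
    (dQ_dQ S.v_cycle) (fun b b' h => S.rk_lt h) S.d_wt (fun b => S.wt_le b.1)
    (fun c h1 h2 q hq hq0 => by
      obtain ⟨p, hp, hpq⟩ := S.low c h1 h2 q (fun ω b => hq ⟨ω, b⟩) hq0
      exact ⟨p, fun b => hp b.1 b.2, hpq⟩)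
    c.toNat c hc (by omega) q (fun b => hq b.1 b.2) hq0
  exact ⟨p, fun ω b => hp ⟨ω, b⟩, hpq⟩

end Zigzag

/-! ### Existence of minimal graded free resolutions -/

section Cover
variable {A : StdGrading K R} {X : Type*} [AddCommGroup X] [Module K X] [Module R X]
  {g : ℤ → Submodule K X}

/-- The degree `c` component of an element of `m N` is a combination of homogeneous elements of `N`
of degree less than `c`. -/
theorem proj_mem_of_mem_smul (p : GrProj g)
    (hg : ∀ i j : ℤ, ∀ r ∈ A.gr i, ∀ x ∈ g j, r • x ∈ g (i + j)) (N T : Submodule R X)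
    (hN : ∀ x ∈ N, ∀ c, p.P c x ∈ N) (c : ℤ) (hT : ∀ c' < c, ∀ x ∈ N, x ∈ g c' → x ∈ T)
    {y : X} (hy : y ∈ A.maxIdeal • N) : p.P c y ∈ T := by
  induction hy using Submodule.smul_induction_on' with
  | smul r hr n hn =>
    obtain ⟨s, hs⟩ := A.pr.exists_finset r
    obtain ⟨s', hs'⟩ := p.exists_finset n
    rw [hs, hs', Finset.sum_smul, map_sum]
    refine sum_mem fun i _ => ?_
    rw [Finset.smul_sum, map_sum]
    refine sum_mem fun j _ => ?_
    have hmem := hg i j _ (A.pr.mem i r) _ (p.mem j n)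
    by_cases hc : c = i + j
    · rw [hc, p.self _ _ hmem]
      rcases lt_trichotomy i 0 with hi | hi | hi
      · rw [A.eq_zero_of_neg hi (A.pr.mem i r), zero_smul]; exact zero_mem _
      · rw [hi, A.proj_zero_of_mem hr, zero_smul]; exact zero_mem _
      · exact T.smul_mem _ (hT j (by omega) _ (hN n hn j) (p.mem j n))
    · rw [p.ne c (i + j) hc _ hmem]; exact zero_mem _
  | add x hx y hy h1 h2 => rw [map_add]; exact add_mem h1 h2

/-- A minimal graded free cover of a homogeneous submodule `N` (graded Nakayama): in each degree,
take a `K`-basis of a complement of `m N` in `N`. -/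
theorem exists_cover [IsScalarTower K R X] (p : GrProj g)
    (hg : ∀ i j : ℤ, ∀ r ∈ A.gr i, ∀ x ∈ g j, r • x ∈ g (i + j)) {c0 : ℤ}
    (hbd : ∀ c < c0, ∀ x ∈ g c, x = 0) (hfin : ∀ c, Module.Finite K (g c)) (N : Submodule R X)
    (hN : ∀ x ∈ N, ∀ c, p.P c x ∈ N) :
    ∃ b : ℤ → ℕ, (∀ j < c0, b j = 0) ∧ ∃ φ : (((j : ℤ) × Fin (b j)) →₀ R) →ₗ[R] X,
      (∀ c, ∀ f ∈ freeGr A (fun _ => b) 0 c, φ f ∈ g c) ∧ LinearMap.range φ = N ∧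
      ∀ f, φ f = 0 → ∀ t, f t ∈ A.maxIdeal := by
  classical
  have hle : ∀ e, (A.maxIdeal • N).restrictScalars K ⊓ g e ≤ N.restrictScalars K ⊓ g e :=
    fun e => inf_le_inf_right _ (show A.maxIdeal • N ≤ N from
      Submodule.smul_le.2 fun r _ n hn => N.smul_mem r hn)
  choose W hWZ hWd hWs using fun e => exists_complement _ _ (hle e)
  have hWfin : ∀ e, Module.Finite K (W e) := fun e =>
    have := hfin e
    Module.Finite.of_injective (Submodule.inclusion ((hWZ e).trans inf_le_right))
      (Submodule.inclusion_injective _)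
  let b : ℤ → ℕ := fun e => Module.finrank K (W e)
  let bas : ∀ e, Module.Basis (Fin (b e)) K (W e) := fun e => Module.finBasis K (W e)
  let w : ((j : ℤ) × Fin (b j)) → X := fun t => (bas t.1 t.2 : X)
  have hwN : ∀ t, w t ∈ N := fun t => (hWZ _ (bas t.1 t.2).2).1
  have hwg : ∀ t, w t ∈ g t.1 := fun t => (hWZ _ (bas t.1 t.2).2).2
  let φ : (((j : ℤ) × Fin (b j)) →₀ R) →ₗ[R] X := Finsupp.linearCombination R w
  have hφ : ∀ f, φ f = f.sum fun t r => r • w t := fun f => Finsupp.linearCombination_apply R f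
  have hgr : ∀ c, ∀ f ∈ freeGr A (fun _ => b) 0 c, φ f ∈ g c := by
    intro c f hf
    rw [hφ]
    refine sum_mem fun t _ => ?_
    have := hg _ _ _ (hf t) _ (hwg t)
    rwa [sub_add_cancel] at this
  have hsmul : ∀ (k : K) (x : X), k • x = algebraMap K R k • x := fun k x => by
    rw [algebraMap_smul]
  have hW : ∀ e, ∀ x ∈ W e, x ∈ LinearMap.range φ := by
    intro e x hx
    have h1 := congrArg Subtype.val ((bas e).sum_repr ⟨x, hx⟩)
    rw [← show _ = x from h1]
    rw [Submodule.coe_sum]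
    refine sum_mem fun k _ => ?_
    rw [Submodule.coe_smul, hsmul]
    refine Submodule.smul_mem _ _ ⟨Finsupp.single ⟨e, k⟩ 1, ?_⟩
    simp [φ, w]
  refine ⟨b, ?_, φ, hgr, le_antisymm ?_ ?_, ?_⟩
  · intro j hj
    have : W j = ⊥ := (Submodule.eq_bot_iff _).2 fun x hx => hbd j hj x (hWZ j hx).2
    change Module.finrank K (W j) = 0
    rw [this, finrank_bot]
  · rintro _ ⟨f, rfl⟩
    rw [hφ]
    exact sum_mem fun t _ => N.smul_mem _ (hwN t)
  · have key : ∀ n : ℕ, ∀ c : ℤ, c < c0 + n → ∀ x ∈ N, x ∈ g c → x ∈ LinearMap.range φ := by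
      intro n
      induction n with
      | zero =>
        intro c hc x _ hx
        rw [hbd c (by simpa using hc) x hx]
        exact zero_mem _
      | succ n ih =>
        intro c hc x hxN hxg
        obtain ⟨x1, hx1, x2, hx2, rfl⟩ := Submodule.mem_sup.1 (hWs c ⟨hxN, hxg⟩)
        refine add_mem (hW c _ hx1) ?_
        rw [← p.self c x2 hx2.2]
        exact proj_mem_of_mem_smul p hg N _ hN c
          (fun c' hc' => ih c' (by push_cast at hc; omega)) hx2.1
    intro x hx
    obtain ⟨s, hs⟩ := p.exists_finset x
    rw [hs]
    exact sum_mem fun c _ => key (c - c0 + 1).toNat c (by omega) _ (hN x hx c) (p.mem c x)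
  · intro f hf t
    obtain ⟨e, k⟩ := t
    let f' := (freeProj A (fun _ => b) 0).P e f
    have hf' : f' ∈ freeGr A (fun _ => b) 0 e := (freeProj A (fun _ => b) 0).mem e f
    have hφf' : φ f' = 0 := by
      have := (freeProj A (fun _ => b) 0).map_P p φ.toAddMonoidHom hgr e f
      refine this.symm.trans ?_
      change p.P e (φ f) = 0
      rw [hf, map_zero]
    have hf't : ∀ t, f' t = A.pr.P (e - t.1) (f t) := fun t => rfl
    have ha : ∀ k, ∃ a : K, algebraMap K R a = f' ⟨e, k⟩ := by
      intro k
      have h1 := hf' ⟨e, k⟩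
      simp only [sub_self] at h1
      obtain ⟨a, ha⟩ := A.mem_zero.1 h1
      exact ⟨a, ha.symm⟩
    choose a ha using ha
    let f0 : ((j : ℤ) × Fin (b j)) →₀ R := ∑ k, Finsupp.single ⟨e, k⟩ (algebraMap K R (a k))
    have hf0 : φ f0 = ((∑ k, a k • bas e k : W e) : X) := by
      simp [f0, φ, w, ← hsmul]
    have hf0e : ∀ k, f0 ⟨e, k⟩ = f' ⟨e, k⟩ := by
      intro k
      rw [← ha]
      simp only [f0, Finsupp.finsetSum_apply, Finsupp.single_apply, Sigma.mk.injEq, heq_eq_eq,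
        true_and]
      simp
    have hf0n : ∀ t, t.1 ≠ e → f0 t = 0 := by
      intro t ht
      simp only [f0, Finsupp.finsetSum_apply]
      refine Finset.sum_eq_zero fun k _ => ?_
      rw [Finsupp.single_apply, if_neg]
      rintro rfl
      exact ht rfl
    have hm : φ (f' - f0) ∈ A.maxIdeal • N := by
      rw [hφ]
      refine sum_mem fun t _ => Submodule.smul_mem_smul ?_ (hwN t)
      rw [Finsupp.sub_apply]
      by_cases ht : t.1 = e
      · obtain ⟨e', k'⟩ := t
        simp only at ht
        subst ht
        rw [hf0e, sub_self]; exact zero_mem _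
      · rw [hf0n t ht, sub_zero]
        exact A.mem_maxIdeal_of_ne (by omega) (hf' t)
    rw [map_sub, hφf', zero_sub, neg_mem_iff, hf0] at hm
    have hz := (Submodule.disjoint_def.1 (hWd e)) _ (∑ k, a k • bas e k : W e).2
      ⟨hm, (hWZ e (∑ k, a k • bas e k : W e).2).2⟩
    have hz' : (∑ k, a k • bas e k : W e) = 0 := Subtype.ext hz
    have hak := Fintype.linearIndependent_iff.1 (bas e).linearIndependent a hz' k
    refine A.mem_maxIdeal_of_proj ?_
    have h1 := hf't ⟨e, k⟩
    rw [← ha, hak, map_zero] at h1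
    simp only [sub_self] at h1
    exact h1.symm

end Cover

theorem freeGr_eq_zero {A : StdGrading K R} {b : ℤ → ℕ} {c0 : ℤ} (hb : ∀ j < c0, b j = 0) {c : ℤ}
    (hc : c < c0) {f : FreeMod R (fun _ => b) 0} (hf : f ∈ freeGr A (fun _ => b) 0 c) : f = 0 := by
  ext t
  refine A.eq_zero_of_neg ?_ (hf t)
  by_contra h
  have h1 := hb t.1 (by omega)
  have h2 := t.2.2
  simp only at h2
  omega

theorem finite_freeGr (A : StdGrading K R) {b : ℤ → ℕ} {c0 : ℤ} (hb : ∀ j < c0, b j = 0) (c : ℤ) :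
    Module.Finite K (freeGr A (fun _ => b) 0 c) := by
  have := A.finite_gr
  let T : Finset ((j : ℤ) × Fin (b j)) := (Finset.Icc c0 c).sigma fun _ => Finset.univ
  let L : freeGr A (fun _ => b) 0 c →ₗ[K] (∀ t : T, A.gr (c - t.1.1)) :=
    { toFun := fun f t => ⟨f.1 t.1, f.2 t.1⟩
      map_add' := fun _ _ => rfl
      map_smul' := fun _ _ => rfl }
  refine Module.Finite.of_injective L fun f f' hf => ?_
  refine Subtype.ext (Finsupp.ext fun t => ?_)
  by_cases h1 : c < t.1
  · rw [A.eq_zero_of_neg (by omega) (f.2 t), A.eq_zero_of_neg (by omega) (f'.2 t)]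
  · have h0 : c0 ≤ t.1 := by
      by_contra h
      have h1 := hb t.1 (by omega)
      have h2 := t.2.2
      simp only at h2
      omega
    have ht : t ∈ T := by simp [T]; omega
    exact congrArg Subtype.val (congrFun hf ⟨t, ht⟩)

/-- One map of a minimal graded free resolution. -/
structure SyzMap (A : StdGrading K R) where
  b : ℤ → ℕ
  b' : ℤ → ℕ
  φ : FreeMod R (fun _ => b') 0 →ₗ[R] FreeMod R (fun _ => b) 0
  bd : ∃ c0 : ℤ, ∀ j < c0, b' j = 0
  graded : ∀ c, ∀ f ∈ freeGr A (fun _ => b') 0 c, φ f ∈ freeGr A (fun _ => b) 0 c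
  ker_le : ∀ f, φ f = 0 → ∀ t, f t ∈ A.maxIdeal

/-- A minimal graded free cover of the kernel of a graded map out of a graded free module. -/
theorem exists_cover_ker {A : StdGrading K R} {b : ℤ → ℕ} (hb : ∃ c0 : ℤ, ∀ j < c0, b j = 0)
    {X : Type*} [AddCommGroup X] [Module K X] [Module R X] {g : ℤ → Submodule K X} (p : GrProj g)
    (φ : FreeMod R (fun _ => b) 0 →ₗ[R] X)
    (hφ : ∀ c, ∀ f ∈ freeGr A (fun _ => b) 0 c, φ f ∈ g c) :
    ∃ (b' : ℤ → ℕ) (ψ : FreeMod R (fun _ => b') 0 →ₗ[R] FreeMod R (fun _ => b) 0),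
      (∃ c0 : ℤ, ∀ j < c0, b' j = 0) ∧
      (∀ c, ∀ f ∈ freeGr A (fun _ => b') 0 c, ψ f ∈ freeGr A (fun _ => b) 0 c) ∧
      (∀ f, ψ f = 0 → ∀ t, f t ∈ A.maxIdeal) ∧ Function.Exact ψ φ := by
  obtain ⟨c0, hc0⟩ := hb
  obtain ⟨b', hb', ψ, h1, h2, h3⟩ := exists_cover (A := A) (freeProj A (fun _ => b) 0)
    (fun i j r hr x hx => smul_mem_freeGr hr hx) (c0 := c0) (fun c hc x hx => freeGr_eq_zero hc0 hc hx)
    (finite_freeGr A hc0) (LinearMap.ker φ) (by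
      intro x hx c
      have := (freeProj A (fun _ => b) 0).map_P p φ.toAddMonoidHom hφ c x
      refine LinearMap.mem_ker.2 (this.symm.trans ?_)
      change p.P c (φ x) = 0
      rw [LinearMap.mem_ker.1 hx, map_zero])
  exact ⟨b', ψ, ⟨c0, hb'⟩, h1, h3, LinearMap.exact_iff.2 h2.symm⟩

theorem SyzMap.exists_next {A : StdGrading K R} (s : SyzMap A) :
    ∃ (b' : ℤ → ℕ) (ψ : FreeMod R (fun _ => b') 0 →ₗ[R] FreeMod R (fun _ => s.b') 0),
      (∃ c0 : ℤ, ∀ j < c0, b' j = 0) ∧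
      (∀ c, ∀ f ∈ freeGr A (fun _ => b') 0 c, ψ f ∈ freeGr A (fun _ => s.b') 0 c) ∧
      (∀ f, ψ f = 0 → ∀ t, f t ∈ A.maxIdeal) ∧ Function.Exact ψ s.φ :=
  exists_cover_ker s.bd (freeProj A (fun _ => s.b) 0) s.φ s.graded

/-- The minimal cover of the kernel of a map of graded free modules. -/
noncomputable def SyzMap.next {A : StdGrading K R} (s : SyzMap A) : SyzMap A where
  b := s.b'
  b' := s.exists_next.choose
  φ := s.exists_next.choose_spec.choose
  bd := s.exists_next.choose_spec.choose_spec.1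
  graded := s.exists_next.choose_spec.choose_spec.2.1
  ker_le := s.exists_next.choose_spec.choose_spec.2.2.1

theorem SyzMap.next_exact {A : StdGrading K R} (s : SyzMap A) : Function.Exact s.next.φ s.φ :=
  s.exists_next.choose_spec.choose_spec.2.2.2

/-- The successive minimal covers of kernels starting from `s`. -/
noncomputable def SyzMap.iter {A : StdGrading K R} (s : SyzMap A) : ℕ → SyzMap A
  | 0 => s
  | n + 1 => (s.iter n).next

/-- The residue field has a minimal graded free resolution. -/
theorem exists_res (A : StdGrading K R) : ∃ β, HasBettiTable A (resGr A) β := by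
  have := A.finite_gr
  obtain ⟨b, hb, ε, hε, hr, hk⟩ := exists_cover (A := A) (resProj A) (resGr_graded A).2 (c0 := 0)
    (fun c hc x hx => resGr_eq_zero hc.ne hx)
    (fun c => by unfold resGr; infer_instance) ⊤ (fun x _ c => Submodule.mem_top)
  obtain ⟨b', ψ, hb', hψ, hψk, hex⟩ := exists_cover_ker ⟨0, hb⟩ (resProj A) ε hε
  have hsurj : Function.Surjective ε := LinearMap.range_eq_top.1 hr
  let s : SyzMap A := ⟨b, b', ψ, hb', hψ, hψk⟩
  refine ⟨fun i => (s.iter i).b, ⟨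
    { eps := ε
      d := fun i => (s.iter i).φ
      eps_surjective := hsurj
      exact_eps := hex
      exact_d := fun i => (s.iter i).next_exact
      graded_eps := hε
      graded_d := fun i => (s.iter i).graded
      minimal := fun i f p => ?_ }⟩⟩
  cases i with
  | zero => exact hk _ ((hex _).2 ⟨f, rfl⟩) p
  | succ i => exact (s.iter i).ker_le _ (((s.iter i).next_exact _).2 ⟨f, rfl⟩) p

/-! ### The three conditions -/

theorem isKoszul_of_acyclic [Nontrivial R] {A : StdGrading K R} (hA : A.Acyclic) : IsKoszul A := by
  rintro β ⟨F⟩ i j hj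
  refine betti_zero hA F i j fun y hy _ _ => ⟨0, fun b => zero_mem _, ?_⟩
  rw [map_zero]
  exact Finsupp.ext fun b => (resGr_eq_zero (sub_ne_zero.2 hj) (hy b)).symm

theorem acyclic_of_finite_reg [Nontrivial R] {A : StdGrading K R} {β : ℕ → ℤ → ℕ}
    (h : HasBettiTable A (resGr A) β)
    (hr : ∃ r : ℤ, ∀ (i : ℕ) (j : ℤ), β i j ≠ 0 → j - i ≤ r) : A.Acyclic := by
  obtain ⟨F⟩ := h
  obtain ⟨r, hr⟩ := hr
  exact acyclic_of_reg (r := r.toNat) F fun i j hij => (hr i j hij).trans (Int.self_le_toNat r)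

theorem finite_reg_of_acyclic [Nontrivial R] {A : StdGrading K R} (hA : A.Acyclic) {M : Type*}
    [AddCommGroup M] [Module K M] [Module R M] [IsScalarTower K R M] [Module.Finite R M]
    {g : ℤ → Submodule K M} (hg : IsGradedModule A g) {β : ℕ → ℤ → ℕ} (h : HasBettiTable A g β) :
    ∃ r : ℤ, ∀ (i : ℕ) (j : ℤ), β i j ≠ 0 → j - i ≤ r := by
  obtain ⟨F⟩ := h
  obtain ⟨c0, hc0⟩ := exists_bound hg
  refine ⟨c0, fun i j hij => ?_⟩
  by_contra hlt
  refine hij (betti_zero hA F i j fun y hy _ hy0 => ?_)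
  obtain ⟨s, -, hs⟩ := hc0 (j - i) (by omega) y hy hy0
  exact ⟨s, fun b => LinearMap.mem_range.2 (F.eps_surjective _), hs⟩

/-- Over the zero ring every table of numbers is a Betti table of every module. -/
theorem hasBettiTable_of_subsingleton [Subsingleton R] (A : StdGrading K R) {M : Type*}
    [AddCommGroup M] [Module K M] [Module R M] [IsScalarTower K R M] (g : ℤ → Submodule K M)
    (β : ℕ → ℤ → ℕ) : HasBettiTable A g β := by
  have : Subsingleton M := Module.subsingleton R M
  exact ⟨
    { eps := 0
      d := fun _ => 0
      eps_surjective := fun x => ⟨0, Subsingleton.elim _ _⟩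
      exact_eps := fun x => ⟨fun _ => ⟨0, Subsingleton.elim _ _⟩, fun _ => Subsingleton.elim _ _⟩
      exact_d := fun _ x =>
        ⟨fun _ => ⟨0, Subsingleton.elim _ _⟩, fun _ => Subsingleton.elim _ _⟩
      graded_eps := fun _ _ _ => zero_mem _
      graded_d := fun _ _ _ _ => zero_mem _
      minimal := fun _ _ _ => zero_mem _ }⟩

end Proof

/-- Avramov–Eisenbud–Peeva: for a standard graded algebra `R` over a field `K`,
the following are equivalent: (1) every finitely generated graded `R`-module has
finite regularity; (2) the residue field `K` has finite regularity; (3) `R` is Koszul. -/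
theorem stmt0 {K : Type u} [Field K] {R : Type v} [CommRing R] [Algebra K R]
    (A : StdGrading K R) :
    ((∀ (M : Type v) (_ : AddCommGroup M) (_ : Module K M) (_ : Module R M)
        (_ : IsScalarTower K R M) (_ : Module.Finite R M) (g : ℤ → Submodule K M),
        IsGradedModule A g → ∀ β : ℕ → ℤ → ℕ, HasBettiTable A g β →
          ∃ r : ℤ, ∀ (i : ℕ) (j : ℤ), β i j ≠ 0 → j - i ≤ r) ↔ IsKoszul A) ∧
    ((∀ β : ℕ → ℤ → ℕ, HasBettiTable A (resGr A) β →
          ∃ r : ℤ, ∀ (i : ℕ) (j : ℤ), β i j ≠ 0 → j - i ≤ r) ↔ IsKoszul A) := by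
  have h12 : (∀ (M : Type v) (_ : AddCommGroup M) (_ : Module K M) (_ : Module R M)
        (_ : IsScalarTower K R M) (_ : Module.Finite R M) (g : ℤ → Submodule K M),
        IsGradedModule A g → ∀ β : ℕ → ℤ → ℕ, HasBettiTable A g β →
          ∃ r : ℤ, ∀ (i : ℕ) (j : ℤ), β i j ≠ 0 → j - i ≤ r) →
      ∀ β : ℕ → ℤ → ℕ, HasBettiTable A (resGr A) β →
          ∃ r : ℤ, ∀ (i : ℕ) (j : ℤ), β i j ≠ 0 → j - i ≤ r :=
    fun h β hβ => h (R ⧸ A.maxIdeal) _ _ _ inferInstance inferInstance (resGr A) (resGr_graded A) β hβ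
  have h32 : IsKoszul A → ∀ β : ℕ → ℤ → ℕ, HasBettiTable A (resGr A) β →
          ∃ r : ℤ, ∀ (i : ℕ) (j : ℤ), β i j ≠ 0 → j - i ≤ r := by
    intro h β hβ
    refine ⟨0, fun i j hij => ?_⟩
    by_contra hlt
    exact hij (h β hβ i j (by omega))
  rcases subsingleton_or_nontrivial R with hR | hR
  · -- over the zero ring the constant table `1` is a Betti table, so all conditions fail
    have hno : ¬ ∀ β : ℕ → ℤ → ℕ, HasBettiTable A (resGr A) β →
        ∃ r : ℤ, ∀ (i : ℕ) (j : ℤ), β i j ≠ 0 → j - i ≤ r := by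
      intro h
      obtain ⟨r, hr⟩ := h (fun _ _ => 1) (hasBettiTable_of_subsingleton A _ _)
      have := hr 0 (r + 1) one_ne_zero
      push_cast at this
      omega
    exact ⟨⟨fun h => absurd (h12 h) hno, fun h => absurd (h32 h) hno⟩,
      ⟨fun h => absurd h hno, fun h => absurd (h32 h) hno⟩⟩
  · obtain ⟨β, hβ⟩ := exists_res A
    have h2A : (∀ β : ℕ → ℤ → ℕ, HasBettiTable A (resGr A) β →
        ∃ r : ℤ, ∀ (i : ℕ) (j : ℤ), β i j ≠ 0 → j - i ≤ r) → A.Acyclic :=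
      fun h => acyclic_of_finite_reg hβ (h β hβ)
    refine ⟨⟨fun h => isKoszul_of_acyclic (h2A (h12 h)), fun h => ?_⟩,
      ⟨fun h => isKoszul_of_acyclic (h2A h), h32⟩⟩
    intro M _ _ _ _ _ g hg β' hβ'
    exact finite_reg_of_acyclic (h2A (h32 h)) hg hβ'
end

section
/- Let K be a field and R = K[x_1,…,x_n]/(q_1,…,q_m) with q_1,…,q_m a regular sequence of homogeneous quadrics. Then the algebra A = R[y_1,…,y_m]/(y_1²+q_1,…,y_m²+q_m) is G-quadratic (with respect to a lexicographic term order with y_i > x_j for all i,j, the initial ideal of its defining ideal is (y_1²,…,y_m²)), the images of y_1,…,y_m form a regular sequence of linear forms in A, and A/(y_1,…,y_m) ≅ R. Hence every complete intersection of quadrics is LG-quadratic. -/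
/-!
Write `S = K[x]` and `J = (y_1² + q_1, …, y_m² + q_m) ⊆ S[y] = K[y, x]`. Everything rests on the
fact that `S[y]/J` is a free `S`-module on the squarefree monomials in the `y_i`. It is made
explicit by the `S`-linear normal form map `nf`, which replaces each `y_i²` by `-q_i`: it kills `J`
(`nf_eq_zero_of_mem`), is the identity modulo `J` (`sub_nf_mem`), and fixes every polynomial that
is squarefree in the `y_i` (`nf_eq_self`). More generally, for a set `T` of indices, membership in
`J + (y_i : i ∈ T)` means that the coefficients of the normal form at monomials prime to the `y_i`,
`i ∈ T`, lie in `(q_i : i ∈ T)` (`mem_relIdeal_sup_iff`).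

Regularity of the `y_i`: if `y_k p ∈ J + (y_1, …, y_{k-1})`, then `-q_k p`, congruent to `y_k² p`,
lies there too, so `q_k` times each relevant coefficient of `nf p` is in `(q_1, …, q_{k-1})`; as the
`q_i` form a regular sequence, so are the coefficients themselves (`relIdeal_regular`).

Initial ideal: divide a nonzero `p ∈ J` by the `y_i² + q_i`, whose leading terms are `y_i²`. The
remainder lies in `J` and is squarefree in the `y_i`, hence is zero, so the leading monomial of
`p` is a multiple of some `y_i²` (`initialIdeal_cavIdeal`).

These facts are proved with the variables indexed by any linearly ordered `σ` in which the `y_i`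
precede the `x_j`. The choice `Fin m ⊕ₗ Fin n` gives the statements about `J`, the choice
`Fin (m + n)` the LG-quadratic property.
-/

set_option synthInstance.maxHeartbeats 1000000
set_option maxHeartbeats 2000000

open MvPolynomial

universe u

/-- The leading monomial (largest exponent in the support) of a polynomial with
respect to a monomial (term) order. -/
noncomputable def leadMon {σ : Type*} {K : Type u} [Field K] (m : MonomialOrder σ)
    (p : MvPolynomial σ K) : σ →₀ ℕ :=
  m.toSyn.symm (p.support.sup m.toSyn)

/-- The initial ideal `in_τ(I)`: the ideal generated by the leading monomials of the
nonzero elements of `I`. -/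
noncomputable def initialIdeal {σ : Type*} {K : Type u} [Field K] (m : MonomialOrder σ)
    (I : Ideal (MvPolynomial σ K)) : Ideal (MvPolynomial σ K) :=
  Ideal.span ((fun p => (monomial (leadMon m p) (1 : K))) '' {p | p ∈ I ∧ p ≠ 0})

/-- A quotient presentation `S/I` is G-quadratic: for some (degree preserving) change
of coordinates `φ` and some term order, the initial ideal of `φ(I)` is generated by
monomials of degree `2`. -/
def IsGQuadratic {K : Type u} [Field K] (n' : ℕ)
    (I : Ideal (MvPolynomial (Fin n') K)) : Prop :=
  ∃ (φ : MvPolynomial (Fin n') K ≃ₐ[K] MvPolynomial (Fin n') K),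
    (homogeneousSubmodule (Fin n') K 1).map (φ.toLinearMap : _ →ₗ[K] _) =
        homogeneousSubmodule (Fin n') K 1 ∧
    ∃ (m : MonomialOrder.{0, 0} (Fin n')) (G : Set (Fin n' →₀ ℕ)),
      (∀ g ∈ G, (g.sum fun _ e => e) = 2) ∧
      initialIdeal m (I.map (φ : MvPolynomial (Fin n') K →+* MvPolynomial (Fin n') K)) =
        Ideal.span ((fun g => (monomial g (1 : K))) '' G)

/-- A `K`-algebra `R` is LG-quadratic: `R ≅ A/(y_1,…,y_c)` for a G-quadratic algebra
`A` and a regular sequence of linear forms `y_1,…,y_c`. -/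
def IsLGQuadratic (K : Type u) [Field K] (R : Type u) [CommRing R] [Algebra K R] :
    Prop :=
  ∃ (n' : ℕ) (J : Ideal (MvPolynomial (Fin n') K)), IsGQuadratic n' J ∧
    ∃ ys : List (MvPolynomial (Fin n') K ⧸ J),
      (∀ y ∈ ys, y ∈ (homogeneousSubmodule (Fin n') K 1).map
        ((Ideal.Quotient.mkₐ K J).toLinearMap : _ →ₗ[K] _)) ∧
      RingTheory.Sequence.IsRegular (MvPolynomial (Fin n') K ⧸ J) ys ∧
      Nonempty (((MvPolynomial (Fin n') K ⧸ J) ⧸ Ideal.span {y | y ∈ ys}) ≃ₐ[K] R)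


/-! ### Regular sequences in a ring, elementwise -/

lemma isRegular_ofFn_iff {R : Type*} [CommRing R] {m : ℕ} (y : Fin m → R) :
    RingTheory.Sequence.IsRegular R (List.ofFn y) ↔
      (∀ (k : Fin m) (p : R), y k * p ∈ Ideal.span (y '' {i | i < k}) →
        p ∈ Ideal.span (y '' {i | i < k})) ∧ (1 : R) ∉ Ideal.span (Set.range y) := by
  have htake : ∀ k : ℕ, Ideal.ofList ((List.ofFn y).take k) =
      Ideal.span (y '' {i | (i : ℕ) < k}) := by
    intro k
    unfold Ideal.ofList
    congr 1
    ext z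
    simp only [Set.mem_ofPred_eq, List.mem_take_iff_getElem, Set.mem_image]
    constructor
    · rintro ⟨j, hj, rfl⟩
      simp only [List.length_ofFn, lt_min_iff] at hj
      exact ⟨⟨j, hj.2⟩, hj.1, by simp⟩
    · rintro ⟨i, hi, rfl⟩
      exact ⟨i, by simp [hi], by simp⟩
  have hall : Ideal.ofList (List.ofFn y) = Ideal.span (Set.range y) := by
    unfold Ideal.ofList
    congr 1
    ext z
    simp [List.mem_ofFn]
  rw [RingTheory.Sequence.isRegular_iff, RingTheory.Sequence.isWeaklyRegular_iff, hall,
    smul_eq_mul, Ideal.mul_top, ne_comm, Ne, Ideal.eq_top_iff_one]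
  refine and_congr_left fun _ => ?_
  have hI : ∀ (k : ℕ) (p : R), p ∈ (Ideal.ofList ((List.ofFn y).take k) • ⊤ : Submodule R R) ↔
      p ∈ Ideal.span (y '' {i | (i : ℕ) < k}) := by
    intro k p
    rw [smul_eq_mul, Ideal.mul_top, htake]
  simp only [List.getElem_ofFn, List.length_ofFn]
  constructor
  · intro h k p hp
    have h1 := h k k.2
    rw [isSMulRegular_iff_right_eq_zero_of_smul] at h1
    have := h1 (Submodule.Quotient.mk p) (by
      rw [← Submodule.Quotient.mk_smul, Submodule.Quotient.mk_eq_zero, hI]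
      exact hp)
    rw [Submodule.Quotient.mk_eq_zero, hI] at this
    exact this
  · intro h k hk
    rw [isSMulRegular_iff_right_eq_zero_of_smul]
    intro x hx
    obtain ⟨p, rfl⟩ := Submodule.Quotient.mk_surjective _ x
    rw [← Submodule.Quotient.mk_smul, Submodule.Quotient.mk_eq_zero, hI] at hx
    rw [Submodule.Quotient.mk_eq_zero, hI]
    exact h ⟨k, hk⟩ p hx

lemma isRegular_quotient_ofFn {P : Type*} [CommRing P] {m : ℕ} (J : Ideal P) (y : Fin m → P)
    (h : ∀ (k : Fin m) (p : P), y k * p ∈ J ⊔ Ideal.span (y '' {i | i < k}) →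
      p ∈ J ⊔ Ideal.span (y '' {i | i < k}))
    (h1 : (1 : P) ∉ J ⊔ Ideal.span (Set.range y)) :
    RingTheory.Sequence.IsRegular (P ⧸ J) (List.ofFn fun i => Ideal.Quotient.mk J (y i)) := by
  have key : ∀ (s : Set P) (p : P), Ideal.Quotient.mk J p ∈
      Ideal.span (Ideal.Quotient.mk J '' s) ↔ p ∈ J ⊔ Ideal.span s := by
    intro s p
    rw [← Ideal.map_span, Ideal.mem_quotient_iff_mem_sup, sup_comm]
  rw [isRegular_ofFn_iff]
  have e : ∀ k : Fin m, (fun i => Ideal.Quotient.mk J (y i)) '' {i | i < k} =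
      Ideal.Quotient.mk J '' (y '' {i | i < k}) := fun k => by rw [Set.image_image]
  have e' : Set.range (fun i => Ideal.Quotient.mk J (y i)) =
      Ideal.Quotient.mk J '' (Set.range y) := by rw [← Set.range_comp]; rfl
  refine ⟨fun k p => ?_, ?_⟩
  · obtain ⟨p, rfl⟩ := Ideal.Quotient.mk_surjective p
    rw [e, key, ← map_mul, key]
    exact h k p
  · rw [e', ← map_one (Ideal.Quotient.mk J), key]
    exact h1

/-! ### Normal forms modulo `y_i² + q_i` -/

section NormalForm

variable {S : Type*} [CommRing S] {m : ℕ} (q : Fin m → S)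

/-- The exponent vector of `y^a` reduced modulo `2` in each variable. -/
noncomputable def redExp (a : Fin m →₀ ℕ) : Fin m →₀ ℕ := a.mapRange (· % 2) rfl

/-- The coefficient `∏ (-q_i)^⌊a_i/2⌋` produced by substituting `-q_i` for `y_i²` in `y^a`. -/
def redCoeff (a : Fin m →₀ ℕ) : S := ∏ i, (-q i) ^ (a i / 2)

/-- The `S`-linear normal form map `S[y] → S[y]` modulo the polynomials `y_i² + q_i`: it sends
`y^a` to `∏ (-q_i)^⌊a_i/2⌋ y^(a mod 2)`. -/
noncomputable def nf : MvPolynomial (Fin m) S →ₗ[S] MvPolynomial (Fin m) S :=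
  (basisMonomials (Fin m) S).constr S fun a => monomial (redExp a) (redCoeff q a)

/-- The ideal `(y_1² + q_1, …, y_m² + q_m)` of `S[y_1, …, y_m]`. -/
noncomputable def relIdeal : Ideal (MvPolynomial (Fin m) S) :=
  Ideal.span (Set.range fun i => X i ^ 2 + C (q i))

lemma nf_monomial (a : Fin m →₀ ℕ) (c : S) :
    nf q (monomial a c) = monomial (redExp a) (c * redCoeff q a) := by
  have h : (monomial a c : MvPolynomial (Fin m) S) = c • basisMonomials (Fin m) S a := by
    simp [smul_monomial]
  rw [h, map_smul, nf, Module.Basis.constr_basis, smul_monomial, smul_eq_mul]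

lemma redExp_add_two (a : Fin m →₀ ℕ) (i : Fin m) :
    redExp (a + Finsupp.single i 2) = redExp a := by
  ext j
  by_cases h : i = j
  · subst h; simp [redExp]
  · simp [redExp, Finsupp.single_eq_of_ne (Ne.symm h)]

lemma redCoeff_add_two (a : Fin m →₀ ℕ) (i : Fin m) :
    redCoeff q (a + Finsupp.single i 2) = -q i * redCoeff q a := by
  unfold redCoeff
  rw [← Finset.mul_prod_erase _ _ (Finset.mem_univ i),
    ← Finset.mul_prod_erase _ (fun j => (-q j) ^ (a j / 2)) (Finset.mem_univ i), ← mul_assoc]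
  congr 1
  · simp [pow_succ, mul_comm]
  · refine Finset.prod_congr rfl fun j hj => ?_
    rw [Finsupp.add_apply, Finsupp.single_eq_of_ne (Finset.ne_of_mem_erase hj), add_zero]

lemma nf_mul_rel (g : MvPolynomial (Fin m) S) (i : Fin m) :
    nf q (g * (X i ^ 2 + C (q i))) = 0 := by
  induction g using MvPolynomial.induction_on' with
  | monomial a c =>
    have h : (monomial a c : MvPolynomial (Fin m) S) * (X i ^ 2 + C (q i)) =
        monomial (a + Finsupp.single i 2) c + monomial a (c * q i) := by
      rw [mul_add, X_pow_eq_monomial, monomial_mul, mul_one, mul_comm _ (C _), C_mul_monomial,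
        mul_comm (q i)]
    rw [h, map_add, nf_monomial, nf_monomial, redExp_add_two, redCoeff_add_two, ← map_add]
    rw [show c * (-q i * redCoeff q a) + c * q i * redCoeff q a = 0 by ring, map_zero]
  | add f g hf hg => rw [add_mul, map_add, hf, hg, add_zero]

lemma nf_eq_zero_of_mem {p : MvPolynomial (Fin m) S} (hp : p ∈ relIdeal q) : nf q p = 0 := by
  induction hp using Submodule.span_induction with
  | mem x hx =>
    obtain ⟨i, rfl⟩ := hx
    simpa using nf_mul_rel q 1 i
  | zero => simp
  | add x y _ _ hx hy => rw [map_add, hx, hy, add_zero]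
  | smul a x hx' hx =>
    -- membership of `a * x` is again a combination of the generators
    have : a * x ∈ relIdeal q := Ideal.mul_mem_left _ a hx'
    obtain ⟨c, hc⟩ := (Ideal.mem_span_range_iff_exists_fun).1 this
    rw [smul_eq_mul, ← hc, map_sum]
    exact Finset.sum_eq_zero fun i _ => nf_mul_rel q (c i) i

lemma sub_nf_mem (p : MvPolynomial (Fin m) S) : p - nf q p ∈ relIdeal q := by
  induction p using MvPolynomial.induction_on' with
  | monomial a c =>
    rw [nf_monomial, ← Ideal.Quotient.eq]
    have hX : ∀ i, Ideal.Quotient.mk (relIdeal q) (X i) ^ 2 =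
        Ideal.Quotient.mk (relIdeal q) (C (-q i)) := by
      intro i
      rw [← map_pow, Ideal.Quotient.eq, map_neg, sub_neg_eq_add]
      exact Ideal.subset_span ⟨i, rfl⟩
    rw [monomial_eq, monomial_eq, Finsupp.prod_fintype _ _ (by simp),
      Finsupp.prod_fintype _ _ (by simp), C_mul, mul_assoc, map_mul, map_mul, redCoeff,
      map_prod C, ← Finset.prod_mul_distrib, map_prod, map_prod]
    congr 1
    refine Finset.prod_congr rfl fun i _ => ?_
    rw [map_mul, C_pow, map_pow, map_pow, map_pow, ← hX, ← pow_mul, ← pow_add]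
    congr 1
    simp only [redExp, Finsupp.mapRange_apply]
    omega
  | add f g hf hg =>
    rw [map_add, add_sub_add_comm]
    exact Ideal.add_mem _ hf hg

lemma nf_eq_self {p : MvPolynomial (Fin m) S} (hp : ∀ a ∈ p.support, ∀ i, a i < 2) :
    nf q p = p := by
  conv_lhs => rw [p.as_sum, map_sum]
  conv_rhs => rw [p.as_sum]
  refine Finset.sum_congr rfl fun a ha => ?_
  have h1 : redExp a = a := by
    ext i
    simpa [redExp] using Nat.mod_eq_of_lt (hp a ha i)
  have h2 : redCoeff q a = 1 :=
    Finset.prod_eq_one fun i _ => by rw [Nat.div_eq_of_lt (hp a ha i), pow_zero]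
  rw [nf_monomial, h1, h2, mul_one]

lemma coeff_nf_X_mul (p : MvPolynomial (Fin m) S) (i : Fin m) (a : Fin m →₀ ℕ) (ha : a i = 0) :
    coeff a (nf q (X i * p)) ∈ Ideal.span {q i} := by
  induction p using MvPolynomial.induction_on' with
  | monomial b c =>
    rw [X, monomial_mul, one_mul, nf_monomial, coeff_monomial]
    split_ifs with h
    · -- the exponent of `y_i` is even and positive, so `q_i` divides the coefficient
      have h1 : (1 + b i) % 2 = 0 := by
        have := DFunLike.congr_fun h i
        simpa [redExp, ha] using this
      refine Ideal.mul_mem_left _ _ ?_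
      rw [redCoeff, ← Finset.mul_prod_erase _ _ (Finset.mem_univ i)]
      refine Ideal.mul_mem_right _ _ (Ideal.pow_mem_of_mem _ ?_ _ ?_)
      · exact neg_mem (Ideal.subset_span rfl)
      · simp only [Finsupp.add_apply, Finsupp.single_eq_same]
        omega
    · exact zero_mem _
  | add f g hf hg =>
    rw [mul_add, map_add, coeff_add]
    exact add_mem hf hg

/-- Membership in `(y_i² + q_i)_i + (y_i : i ∈ T)` read off from normal forms: `S[y]` modulo this
ideal is free over `S/(q_i : i ∈ T)` on the squarefree monomials in the `y_i`, `i ∉ T`. -/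
lemma mem_relIdeal_sup_iff (T : Set (Fin m)) (p : MvPolynomial (Fin m) S) :
    p ∈ relIdeal q ⊔ Ideal.span (X '' T) ↔
      ∀ a : Fin m →₀ ℕ, (∀ i ∈ T, a i = 0) → coeff a (nf q p) ∈ Ideal.span (q '' T) := by
  constructor
  · intro hp a ha
    obtain ⟨u, hu, v, hv, rfl⟩ := Submodule.mem_sup.1 hp
    rw [map_add, nf_eq_zero_of_mem q hu, zero_add]
    classical
    rw [Set.image_eq_range] at hv
    obtain ⟨c, rfl⟩ := (Ideal.mem_span_range_iff_exists_fun).1 hv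
    rw [map_sum, coeff_sum]
    refine sum_mem fun i _ => ?_
    rw [mul_comm]
    refine Ideal.span_mono ?_ (coeff_nf_X_mul q (c i) i a (ha i i.2))
    rintro _ rfl
    exact ⟨i, i.2, rfl⟩
  · intro h
    have hN : nf q p ∈ relIdeal q ⊔ Ideal.span (X '' T) := by
      rw [(nf q p).as_sum]
      refine sum_mem fun a _ => ?_
      by_cases ha : ∀ i ∈ T, a i = 0
      · have hle : Ideal.span (q '' T) ≤ (relIdeal q ⊔ Ideal.span (X '' T)).comap C := by
          rw [Ideal.span_le]
          rintro _ ⟨i, hi, rfl⟩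
          have e : (C (q i) : MvPolynomial (Fin m) S) = (X i ^ 2 + C (q i)) - X i * X i := by ring
          rw [SetLike.mem_coe, Ideal.mem_comap]
          rw [e]
          refine sub_mem (Ideal.mem_sup_left (Ideal.subset_span ⟨i, rfl⟩))
            (Ideal.mem_sup_right (Ideal.mul_mem_left _ _ (Ideal.subset_span ⟨i, hi, rfl⟩)))
        have := hle (h a ha)
        rw [← mul_one (coeff a (nf q p)), ← C_mul_monomial]
        exact Ideal.mul_mem_right _ _ this
      · push Not at ha
        obtain ⟨i, hi, hai⟩ := ha
        refine Ideal.mem_sup_right ?_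
        have : (X i : MvPolynomial (Fin m) S) ∣ monomial a (coeff a (nf q p)) := by
          rw [X_dvd_monomial]; exact Or.inr hai
        exact Ideal.mem_of_dvd _ this (Ideal.subset_span ⟨i, hi, rfl⟩)
    have := add_mem (Ideal.mem_sup_left (sub_nf_mem q p)) hN
    rwa [sub_add_cancel] at this

/-- The `y_i` form a regular sequence modulo `y_i² + q_i`: if `y_k p` lies in
`(y_1, …, y_{k-1})`, so does `y_k² p = -q_k p`, and `q_k` acts injectively on the coefficients of
normal forms modulo `(q_1, …, q_{k-1})`. -/
lemma relIdeal_regular (hreg : RingTheory.Sequence.IsRegular S (List.ofFn q)) :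
    (∀ (k : Fin m) (p : MvPolynomial (Fin m) S),
      X k * p ∈ relIdeal q ⊔ Ideal.span (X '' {i | i < k}) →
      p ∈ relIdeal q ⊔ Ideal.span (X '' {i | i < k})) ∧
    (1 : MvPolynomial (Fin m) S) ∉ relIdeal q ⊔ Ideal.span (Set.range X) := by
  rw [isRegular_ofFn_iff] at hreg
  constructor
  · intro k p hp
    have h2 : C (q k) * p ∈ relIdeal q ⊔ Ideal.span (X '' {i | i < k}) := by
      have e : C (q k) * p = p * (X k ^ 2 + C (q k)) - X k * (X k * p) := by ring
      rw [e]
      exact sub_mem (Ideal.mem_sup_left (Ideal.mul_mem_left _ _ (Ideal.subset_span ⟨k, rfl⟩)))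
        (Ideal.mul_mem_left _ _ hp)
    rw [mem_relIdeal_sup_iff] at h2 ⊢
    intro a ha
    refine hreg.1 k _ ?_
    have := h2 a ha
    rwa [← smul_eq_C_mul, map_smul, coeff_smul, smul_eq_mul] at this
  · intro h
    rw [← Set.image_univ, mem_relIdeal_sup_iff, nf_eq_self q] at h
    · refine hreg.2 ?_
      simpa using h 0 (by simp)
    · intro a ha i
      have : a = 0 := by
        by_contra h0
        rw [mem_support_iff, coeff_one, if_neg (Ne.symm h0)] at ha
        exact ha rfl
      simp [this]

end NormalForm

/-! ### The ideal `(y_i² + q_i)` in `K[y, x]` -/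

section Relations

variable {K : Type u} [Field K] {n m : ℕ} {σ : Type} (e : Fin m ⊕ Fin n ≃ σ)
  (q : Fin m → MvPolynomial (Fin n) K)

/-- The ideal `(y_1² + q_1, …, y_m² + q_m)` of `K[y, x]`, where the variables are indexed by `σ`,
with `y_i = X (e (inl i))` and `x_j = X (e (inr j))`. -/
noncomputable def cavIdeal : Ideal (MvPolynomial σ K) :=
  Ideal.span (Set.range fun i : Fin m =>
    X (e (Sum.inl i)) ^ 2 + rename (fun a => e (Sum.inr a)) (q i))

/-- The identification `K[y, x] = K[x][y]`. -/
noncomputable def iterEquiv :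
    MvPolynomial σ K ≃ₐ[K] MvPolynomial (Fin m) (MvPolynomial (Fin n) K) :=
  (renameEquiv K e.symm).trans (sumAlgEquiv K (Fin m) (Fin n))

lemma iterEquiv_inl (i : Fin m) : iterEquiv (K := K) e (X (e (Sum.inl i))) = X i := by
  simp [iterEquiv]

lemma iterEquiv_inr (j : Fin n) : iterEquiv (K := K) e (X (e (Sum.inr j))) = C (X j) := by
  simp [iterEquiv]

lemma iterEquiv_rename (p : MvPolynomial (Fin n) K) :
    iterEquiv e (rename (fun a => e (Sum.inr a)) p) = C p := by
  induction p using MvPolynomial.induction_on with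
  | C a => simp [iterEquiv]
  | add f g hf hg => rw [map_add, map_add, hf, hg, C_add]
  | mul_X f j hf => rw [map_mul, map_mul, hf, rename_X, iterEquiv_inr, C_mul]

lemma mem_cavIdeal_sup_iff (T : Set (Fin m)) (p : MvPolynomial σ K) :
    p ∈ cavIdeal e q ⊔ Ideal.span ((fun i => X (e (Sum.inl i))) '' T) ↔
      iterEquiv e p ∈ relIdeal q ⊔ Ideal.span (X '' T) := by
  have h : (cavIdeal e q ⊔ Ideal.span ((fun i => X (e (Sum.inl i))) '' T)).map
      (iterEquiv e).toRingEquiv = relIdeal q ⊔ Ideal.span (X '' T) := by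
    rw [Ideal.map_sup, cavIdeal, relIdeal, Ideal.map_span, Ideal.map_span, ← Set.range_comp,
      Set.image_image]
    congr 3
    · funext i
      exact (map_add (iterEquiv e) _ _).trans (by
        rw [map_pow, iterEquiv_inl, iterEquiv_rename])
    · exact funext fun i => iterEquiv_inl (K := K) e i
  rw [← h, Ideal.mem_map_of_equiv]
  constructor
  · intro hp
    exact ⟨p, hp, rfl⟩
  · rintro ⟨x, hx, hxp⟩
    rwa [← (iterEquiv e).injective hxp]

lemma mem_cavIdeal_iff (p : MvPolynomial σ K) :
    p ∈ cavIdeal e q ↔ iterEquiv e p ∈ relIdeal q := by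
  simpa using mem_cavIdeal_sup_iff e q ∅ p

lemma cavIdeal_isRegular
    (hreg : RingTheory.Sequence.IsRegular (MvPolynomial (Fin n) K) (List.ofFn q)) :
    RingTheory.Sequence.IsRegular (MvPolynomial σ K ⧸ cavIdeal e q)
      (List.ofFn fun i : Fin m => Ideal.Quotient.mk (cavIdeal e q) (X (e (Sum.inl i)))) := by
  obtain ⟨h, h1⟩ := relIdeal_regular q hreg
  refine isRegular_quotient_ofFn _ (fun i => X (e (Sum.inl i))) ?_ ?_
  · intro k p hp
    rw [mem_cavIdeal_sup_iff] at hp ⊢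
    rw [map_mul, iterEquiv_inl] at hp
    exact h k _ hp
  · rw [← Set.image_univ, mem_cavIdeal_sup_iff, map_one, Set.image_univ]
    exact h1

/-- A polynomial which is squarefree in the `y_i` is its own normal form, so it lies in the ideal
only if it vanishes. -/
lemma eq_zero_of_reduced {r : MvPolynomial σ K} (hr : r ∈ cavIdeal e q)
    (h : ∀ c ∈ r.support, ∀ i, c (e (Sum.inl i)) < 2) : r = 0 := by
  let _ : Fintype σ := Fintype.ofEquiv _ e
  rw [mem_cavIdeal_iff] at hr
  have h1 : nf q (iterEquiv e r) = iterEquiv e r := by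
    conv_lhs => rw [r.as_sum, map_sum, map_sum]
    conv_rhs => rw [r.as_sum, map_sum]
    refine Finset.sum_congr rfl fun c hc => ?_
    obtain ⟨s, hs⟩ : ∃ s, iterEquiv e (monomial c (coeff c r)) =
        monomial (Finsupp.equivFunOnFinite.symm fun i => c (e (Sum.inl i))) s := by
      refine ⟨C (coeff c r) * ∏ j, X j ^ c (e (Sum.inr j)), ?_⟩
      rw [monomial_eq, Finsupp.prod_fintype _ _ (by simp), ← e.prod_comp,
        Fintype.prod_sum_type, monomial_eq, Finsupp.prod_fintype _ _ (by simp)]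
      simp only [map_mul, map_prod, map_pow, iterEquiv_inl, iterEquiv_inr,
        Finsupp.equivFunOnFinite_symm_apply_apply]
      rw [show iterEquiv e (C (coeff c r)) = C (C (coeff c r)) by simp [iterEquiv]]
      ring
    rw [hs]
    refine nf_eq_self q fun a ha i => ?_
    rw [Finset.mem_singleton.1 (support_monomial_subset ha)]
    exact h c hc i
  rw [nf_eq_zero_of_mem q hr] at h1
  exact (map_eq_zero_iff _ (iterEquiv e).injective).1 h1.symm

/-- Setting the `y_i` to zero in `K[y, x]/(y_i² + q_i)` gives `K[x]/(q_i)`. -/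
lemma cavIdeal_quotient_equiv :
    Nonempty (((MvPolynomial σ K ⧸ cavIdeal e q) ⧸
        Ideal.span (Set.range fun i : Fin m =>
          Ideal.Quotient.mk (cavIdeal e q) (X (e (Sum.inl i))))) ≃ₐ[K]
      (MvPolynomial (Fin n) K ⧸ Ideal.span (Set.range q))) := by
  obtain ⟨Y, hY⟩ : ∃ Y, Y = Ideal.span (Set.range fun i : Fin m =>
    Ideal.Quotient.mk (cavIdeal e q) (X (e (Sum.inl i)))) := ⟨_, rfl⟩
  rw [← hY]
  let f₀ : MvPolynomial σ K →ₐ[K] MvPolynomial (Fin n) K ⧸ Ideal.span (Set.range q) :=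
    aeval fun s => Sum.elim (fun _ => 0) (fun j => Ideal.Quotient.mk _ (X j)) (e.symm s)
  have f₀_inl : ∀ i, f₀ (X (e (Sum.inl i))) = 0 := fun i => by simp [f₀]
  have f₀_inr : ∀ j, f₀ (X (e (Sum.inr j))) = Ideal.Quotient.mk _ (X j) := fun j => by simp [f₀]
  have f₀_rename : ∀ p, f₀ (rename (fun a => e (Sum.inr a)) p) = Ideal.Quotient.mkₐ K _ p := by
    intro p
    have : f₀.comp (rename (fun a => e (Sum.inr a))) = Ideal.Quotient.mkₐ K _ := by
      ext j
      simp [f₀]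
    exact DFunLike.congr_fun this p
  have hf₀ : ∀ a ∈ cavIdeal e q, f₀ a = 0 := by
    intro a ha
    have hle : cavIdeal e q ≤ RingHom.ker f₀ := by
      rw [cavIdeal, Ideal.span_le]
      rintro _ ⟨i, rfl⟩
      rw [SetLike.mem_coe, RingHom.mem_ker, map_add, map_pow, f₀_inl, f₀_rename,
        zero_pow two_ne_zero, zero_add]
      exact Ideal.Quotient.eq_zero_iff_mem.2 (Ideal.subset_span ⟨i, rfl⟩)
    exact hle ha
  let f₁ : MvPolynomial σ K ⧸ cavIdeal e q →ₐ[K] _ := Ideal.Quotient.liftₐ _ f₀ hf₀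
  have hf₁ : ∀ a ∈ Y, f₁ a = 0 := by
    intro a ha
    have hle : Y ≤ RingHom.ker f₁ := by
      rw [hY, Ideal.span_le]
      rintro _ ⟨i, rfl⟩
      exact f₀_inl i
    exact hle ha
  let f : ((MvPolynomial σ K ⧸ cavIdeal e q) ⧸ Y) →ₐ[K] _ := Ideal.Quotient.liftₐ _ f₁ hf₁
  let π : MvPolynomial σ K →ₐ[K] ((MvPolynomial σ K ⧸ cavIdeal e q) ⧸ Y) :=
    (Ideal.Quotient.mkₐ K Y).comp (Ideal.Quotient.mkₐ K (cavIdeal e q))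
  have π_inl : ∀ i, π (X (e (Sum.inl i))) = 0 := fun i =>
    Ideal.Quotient.eq_zero_iff_mem.2 (hY ▸ Ideal.subset_span ⟨i, rfl⟩)
  let g₀ : MvPolynomial (Fin n) K →ₐ[K] ((MvPolynomial σ K ⧸ cavIdeal e q) ⧸ Y) :=
    π.comp (rename fun a => e (Sum.inr a))
  have hg₀ : ∀ a ∈ Ideal.span (Set.range q), g₀ a = 0 := by
    intro a ha
    have hle : Ideal.span (Set.range q) ≤ RingHom.ker g₀ := by
      rw [Ideal.span_le]
      rintro _ ⟨i, rfl⟩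
      rw [SetLike.mem_coe, RingHom.mem_ker]
      have h1 : π (X (e (Sum.inl i)) ^ 2 + rename (fun a => e (Sum.inr a)) (q i)) = 0 := by
        have : Ideal.Quotient.mkₐ K (cavIdeal e q)
            (X (e (Sum.inl i)) ^ 2 + rename (fun a => e (Sum.inr a)) (q i)) = 0 :=
          Ideal.Quotient.eq_zero_iff_mem.2 (Ideal.subset_span ⟨i, rfl⟩)
        rw [AlgHom.comp_apply, this, map_zero]
      have h2 : π (X (e (Sum.inl i)) ^ 2) = 0 :=
        Ideal.pow_mem_of_mem (RingHom.ker π) (π_inl i) 2 two_pos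
      rwa [map_add, h2, zero_add] at h1
    exact hle ha
  let g : (MvPolynomial (Fin n) K ⧸ Ideal.span (Set.range q)) →ₐ[K] _ :=
    Ideal.Quotient.liftₐ _ g₀ hg₀
  refine ⟨AlgEquiv.ofAlgHom f g ?_ ?_⟩
  · apply Ideal.Quotient.algHom_ext
    apply MvPolynomial.algHom_ext
    intro j
    change f₀ (rename (fun a => e (Sum.inr a)) (X j)) = Ideal.Quotient.mk _ (X j)
    rw [rename_X, f₀_inr]
  · apply Ideal.Quotient.algHom_ext
    apply Ideal.Quotient.algHom_ext
    apply MvPolynomial.algHom_ext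
    intro s
    obtain ⟨t, rfl⟩ := e.surjective s
    change g (f₀ (X (e t))) = π (X (e t))
    cases t with
    | inl i => rw [f₀_inl, π_inl, map_zero]
    | inr j =>
      rw [f₀_inr]
      change π (rename (fun a => e (Sum.inr a)) (X j)) = _
      rw [rename_X]

section Lex

variable [LinearOrder σ] [WellFoundedGT σ]

open scoped MonomialOrder

/-- The leading term of `y_i² + q_i` is `y_i²`, whatever the degree of `q_i`. -/
lemma degree_gen (he : ∀ i j, e (Sum.inl i) < e (Sum.inr j)) (i : Fin m) :
    MonomialOrder.lex.degree ((X (e (Sum.inl i)) : MvPolynomial σ K) ^ 2 +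
        rename (fun a => e (Sum.inr a)) (q i)) = Finsupp.single (e (Sum.inl i)) 2 ∧
    MonomialOrder.lex.leadingCoeff ((X (e (Sum.inl i)) : MvPolynomial σ K) ^ 2 +
        rename (fun a => e (Sum.inr a)) (q i)) = 1 := by
  classical
  have hX : MonomialOrder.lex.degree ((X (e (Sum.inl i)) : MvPolynomial σ K) ^ 2) =
      Finsupp.single (e (Sum.inl i)) 2 := by
    rw [X_pow_eq_monomial, MonomialOrder.degree_monomial, if_neg one_ne_zero]
  have hlt : MonomialOrder.lex.degree (rename (fun a => e (Sum.inr a)) (q i)) ≺[MonomialOrder.lex]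
      MonomialOrder.lex.degree ((X (e (Sum.inl i)) : MvPolynomial σ K) ^ 2) := by
    rw [hX, MonomialOrder.degree_lt_iff]
    · intro c hc
      have hinj : Function.Injective fun a : Fin n => e (Sum.inr a) :=
        e.injective.comp Sum.inr_injective
      rw [support_rename_of_injective hinj, Finset.mem_image] at hc
      obtain ⟨b, -, rfl⟩ := hc
      -- at every index up to that of `y_i`, the exponent of a monomial in the `x_j` is zero
      have hb : ∀ s ≤ e (Sum.inl i), Finsupp.mapDomain (fun a => e (Sum.inr a)) b s = 0 := by
        intro s hs
        refine Finsupp.mapDomain_of_notMem_range _ _ ?_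
        rintro ⟨j, rfl⟩
        exact absurd (he i j) (not_lt.2 hs)
      rw [MonomialOrder.lex_lt_iff]
      refine ⟨e (Sum.inl i), fun j hj => ?_, ?_⟩
      · simp [hb j hj.le, Finsupp.single_eq_of_ne hj.ne]
      · simp [hb _ le_rfl]
    · rw [MonomialOrder.lex_lt_iff]
      refine ⟨e (Sum.inl i), fun j hj => ?_, by simp⟩
      simp [Finsupp.single_eq_of_ne hj.ne]
  rw [MonomialOrder.degree_add_of_lt hlt, MonomialOrder.leadingCoeff_add_of_lt hlt, hX,
    X_pow_eq_monomial, MonomialOrder.leadingCoeff_monomial]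
  exact ⟨rfl, rfl⟩

lemma initialIdeal_cavIdeal (he : ∀ i j, e (Sum.inl i) < e (Sum.inr j)) :
    initialIdeal MonomialOrder.lex (cavIdeal e q) =
      Ideal.span (Set.range fun i : Fin m => (X (e (Sum.inl i)) : MvPolynomial σ K) ^ 2) := by
  classical
  apply le_antisymm
  · rw [initialIdeal, Ideal.span_le]
    rintro _ ⟨p, ⟨hp, hp0⟩, rfl⟩
    let b : Fin m → MvPolynomial σ K := fun i =>
      X (e (Sum.inl i)) ^ 2 + rename (fun a => e (Sum.inr a)) (q i)
    have hbd : ∀ i, MonomialOrder.lex.degree (b i) = Finsupp.single (e (Sum.inl i)) 2 :=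
      fun i => (degree_gen e q he i).1
    obtain ⟨g, r, hpr, hdeg, hr⟩ := MonomialOrder.lex.div (b := b)
      (fun i => by rw [(degree_gen e q he i).2]; exact isUnit_one) p
    have hsum : Finsupp.linearCombination _ b g ∈ cavIdeal e q :=
      (Finsupp.mem_span_range_iff_exists_finsupp).2 ⟨g, rfl⟩
    have hr0 : r = 0 := by
      refine eq_zero_of_reduced e q (r := r) ?_ ?_
      · have : r = p - Finsupp.linearCombination _ b g := by rw [hpr]; ring
        rw [this]
        exact sub_mem hp hsum
      · intro c hc i
        have := hr c hc i
        rw [hbd, Finsupp.single_le_iff] at this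
        omega
    rw [hr0, add_zero] at hpr
    -- some summand `g_i b_i` has a nonzero coefficient at the leading exponent of `p`
    have hne : coeff (MonomialOrder.lex.degree p) p ≠ 0 :=
      MonomialOrder.lex.coeff_degree_ne_zero_iff.2 hp0
    obtain ⟨i, hi⟩ : ∃ i, coeff (MonomialOrder.lex.degree p) (b i * g i) ≠ 0 := by
      by_contra! hall
      apply hne
      refine (congrArg (coeff _) hpr).trans ?_
      rw [Finsupp.linearCombination_apply, Finsupp.sum, coeff_sum]
      refine Finset.sum_eq_zero fun i _ => ?_
      rw [smul_eq_mul, mul_comm]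
      exact hall i
    have hbg : MonomialOrder.lex.degree (b i * g i) = MonomialOrder.lex.degree p := by
      apply MonomialOrder.lex.toSyn.injective
      exact le_antisymm (hdeg i) (MonomialOrder.lex.le_degree (mem_support_iff.2 hi))
    have hbg0 : b i * g i ≠ 0 := by
      intro h0
      rw [h0, coeff_zero] at hi
      exact hi rfl
    have hlead : leadMon MonomialOrder.lex p =
        Finsupp.single (e (Sum.inl i)) 2 + MonomialOrder.lex.degree (g i) := by
      change MonomialOrder.lex.degree p = _
      rw [← hbg, MonomialOrder.lex.degree_mul (left_ne_zero_of_mul hbg0)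
        (right_ne_zero_of_mul hbg0), hbd]
    simp only [SetLike.mem_coe]
    rw [hlead, ← one_mul (1 : K), ← monomial_mul, ← X_pow_eq_monomial]
    exact Ideal.mul_mem_right _ _ (Ideal.subset_span ⟨i, rfl⟩)
  · rw [Ideal.span_le]
    rintro _ ⟨i, rfl⟩
    refine Ideal.subset_span ⟨_, ⟨Ideal.subset_span ⟨i, rfl⟩, ?_⟩, ?_⟩
    · rw [← MonomialOrder.lex.leadingCoeff_ne_zero_iff, (degree_gen e q he i).2]
      exact one_ne_zero
    · change monomial (MonomialOrder.lex.degree _) 1 = _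
      rw [(degree_gen e q he i).1]
      exact X_pow_eq_monomial.symm

end Lex

end Relations

/-- With the `m + n` variables indexed by `Fin (m + n)`, the `y_i` first, the algebra
`K[y, x]/(y_i² + q_i)` witnesses that `K[x]/(q_i)` is LG-quadratic. -/
lemma isLGQuadratic_of_isRegular {K : Type u} [Field K] {n m : ℕ}
    (q : Fin m → MvPolynomial (Fin n) K)
    (hreg : RingTheory.Sequence.IsRegular (MvPolynomial (Fin n) K) (List.ofFn q)) :
    IsLGQuadratic K (MvPolynomial (Fin n) K ⧸ Ideal.span (Set.range q)) := by
  let e : Fin m ⊕ Fin n ≃ Fin (m + n) := finSumFinEquiv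
  have he : ∀ i j, e (Sum.inl i) < e (Sum.inr j) := by
    intro i j
    simp only [e, finSumFinEquiv_apply_left, finSumFinEquiv_apply_right, Fin.lt_def,
      Fin.val_castAdd, Fin.val_natAdd]
    omega
  refine ⟨m + n, cavIdeal e q, ?_,
    List.ofFn fun i : Fin m => Ideal.Quotient.mk (cavIdeal e q) (X (e (Sum.inl i))), ?_,
    cavIdeal_isRegular e q hreg, ?_⟩
  · refine ⟨AlgEquiv.refl, ?_, MonomialOrder.lex,
      Set.range fun i => Finsupp.single (e (Sum.inl i)) 2, ?_, ?_⟩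
    · exact Submodule.map_id _
    · rintro _ ⟨i, rfl⟩
      simp
    · have hid : (cavIdeal e q).map ((AlgEquiv.refl : MvPolynomial (Fin (m + n)) K ≃ₐ[K] _) :
          MvPolynomial (Fin (m + n)) K →+* MvPolynomial (Fin (m + n)) K) = cavIdeal e q :=
        Ideal.map_id _
      rw [hid, initialIdeal_cavIdeal e q he, ← Set.range_comp]
      simp only [Function.comp_def, X_pow_eq_monomial]
  · intro y hy
    obtain ⟨i, rfl⟩ := (List.mem_ofFn' _ _).1 hy
    exact ⟨X (e (Sum.inl i)), isHomogeneous_X _ _, rfl⟩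
  · have hset : {y | y ∈ List.ofFn fun i : Fin m =>
        Ideal.Quotient.mk (cavIdeal e q) (X (e (Sum.inl i)))} =
        Set.range fun i : Fin m => Ideal.Quotient.mk (cavIdeal e q) (X (e (Sum.inl i))) := by
      ext y
      simp [List.mem_ofFn]
    rw [hset]
    exact cavIdeal_quotient_equiv e q

/-- Caviglia's trick: if `R = K[x_1,…,x_n]/(q_1,…,q_m)` is a complete intersection of
quadrics, then `A = R[y_1,…,y_m]/(y_1²+q_1,…,y_m²+q_m)` is G-quadratic (w.r.t. a lex
order with `y_i > x_j` the initial ideal of its defining ideal is `(y_1²,…,y_m²)`),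
the `y_i` form a regular sequence in `A`, and `A/(y_1,…,y_m) ≅ R`. Hence every
complete intersection of quadrics is LG-quadratic. -/
theorem stmt3 {K : Type u} [Field K] {n m : ℕ}
    (q : Fin m → MvPolynomial (Fin n) K)
    (hq : ∀ i, q i ∈ homogeneousSubmodule (Fin n) K 2)
    (hreg : RingTheory.Sequence.IsRegular (MvPolynomial (Fin n) K) (List.ofFn q))
    [WellFoundedGT (Fin m ⊕ₗ Fin n)]
    (J : Ideal (MvPolynomial (Fin m ⊕ₗ Fin n) K))
    (hJ : J = Ideal.span (Set.range fun i : Fin m =>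
      (X (toLex (Sum.inl i)) : MvPolynomial (Fin m ⊕ₗ Fin n) K) ^ 2 +
        rename (fun a => toLex (Sum.inr a)) (q i))) :
    initialIdeal MonomialOrder.lex J =
      Ideal.span (Set.range fun i : Fin m =>
        (X (toLex (Sum.inl i)) : MvPolynomial (Fin m ⊕ₗ Fin n) K) ^ 2) ∧
    RingTheory.Sequence.IsRegular (MvPolynomial (Fin m ⊕ₗ Fin n) K ⧸ J)
      (List.ofFn fun i : Fin m => Ideal.Quotient.mk J (X (toLex (Sum.inl i)))) ∧
    Nonempty (((MvPolynomial (Fin m ⊕ₗ Fin n) K ⧸ J) ⧸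
        Ideal.span (Set.range fun i : Fin m =>
          Ideal.Quotient.mk J (X (toLex (Sum.inl i))))) ≃ₐ[K]
      (MvPolynomial (Fin n) K ⧸ Ideal.span (Set.range q))) ∧
    IsLGQuadratic K (MvPolynomial (Fin n) K ⧸ Ideal.span (Set.range q)) := by
  let e : Fin m ⊕ Fin n ≃ Fin m ⊕ₗ Fin n := toLex
  have hJe : J = cavIdeal e q := hJ
  subst hJe
  exact ⟨initialIdeal_cavIdeal e q fun i j => Sum.Lex.inl_lt_inr i j,
    cavIdeal_isRegular e q hreg, cavIdeal_quotient_equiv e q, isLGQuadratic_of_isRegular q hreg⟩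
end
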